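/- arXiv:1912.09470 — 2 statements merged into one kernel-verified Lean document; each statement's English description precedes it below -/
import Mathlib

section
/- Let n ≥ 5, k ≥ 0 be integers and ε > 0. There exists a constant C = C(n, k, ε) such that for every integer m ≥ 1 there exist a probability space and jointly Gaussian centered Gaussian processes f, g on ℝⁿ with E[f(x)f(y)] = ∫_{S^{n−1}} e^{2πi (x−y)·t} dρ_m(t) and E[g(x)g(y)] = ∫_{S^{n−1}} e^{2πi (x−y)·t} dσ(t) (both real-valued), such that the covariance kernel C_F(x,y) = E[(f−g)(x)(f−g)(y)] of the difference satisfies, for every R > 1, sup_{|x| ≤ R+1} max_{|α| ≤ k+1} ∂^α_x ∂^α_y C_F(x,y)|_{y=x} ≤ C R² m^{−(n−3)/(2(3n−2)(n+1)) + ε}. -/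
/-!
Realise `f` and `g` on one Gaussian space by evaluating an isonormal process on `L²(θ; ℂ)` at the
characters `p ↦ e(x·p.1)` and `p ↦ e(x·p.2)`, where `e(s) = exp(2πis)` and `θ` is a coupling of `ρ_m`
and `σ`. The covariance of `f - g` is then an integral of exponentials against `θ`, and its mixed
derivative on the diagonal is `∫ |(2πit)^α e(x·t) - (2πis)^α e(x·s)|² dθ(t,s)` (`mdd_eq`), which is at
most `C R² ∫ |t - s|² dθ` because
`t ↦ (2πit)^α e(x·t)` is Lipschitz on the sphere (`mdd_bound`). It remains to find a coupling with `∫ |t - s|² dθ ≤ K m^{-δ}`, where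
`δ = (n-3)/(2(3n-2)(n+1))` (`coupling_final`).

Such a coupling comes from Fourier analysis (`coupling_fourier`): mollify both measures by a Gaussian of
width `η`, match the mollified densities where they overlap, and couple the small remaining mass
arbitrarily. If `|ρ̂_m(ξ) - σ̂(ξ)| ≤ A (1+|ξ|)^n`, the cost is `O(η² + A η^{-2n})`. Taking
`A ≍ m^{9/8-n/4}` and `η = m^{-δ/2}` suffices, since `(n+1)δ ≤ n/4 - 9/8` for `n ≥ 5`.

The Fourier bound `FT_diff` has two ingredients.

* Numerator (`MM_diff`). The sum of `e(ζ·k)` over integer points with `|k|² = m` is a Fourier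
  coefficient, on the line `Im τ = 1/m`, of the product of Jacobi theta functions `θ(ζ_i, τ)`. By
  Dirichlet approximation and Gauss sums each theta function near a rational point is either trivially
  small or close to a Gaussian `T exp(-πi ζ_i²/w)`, whose product over `i` depends only on `|ζ|`. Hence
  the sum changes by at most `O(m^{n/4} (1+√m|ζ|)^n)` when `ζ` moves on a sphere centred at the origin.
* Denominator (`SS_lower`). One has `r_n(m) ≫ m^{n/2-9/8}`. For odd `N` every solution of
  `a² + b² ≡ -1 (mod N)` gives, by Minkowski's theorem, its own representation of `N` as a sum of four
  squares, and there are `≫ N^{7/8}` solutions; the remaining coordinates are summed trivially.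

Thus `ρ̂_m` oscillates little on each sphere about the origin, and its average over the sphere of radius
`|ξ|` is exactly `σ̂(ξ)`, by Fubini and the rotation invariance of `σ`. The bound obtained is even
slightly stronger than required, as the factor `m^ε` is not used.
-/
open MeasureTheory ProbabilityTheory Real Filter

noncomputable section

abbrev En (n : ℕ) := EuclideanSpace ℝ (Fin n)

/-- Partial derivative in direction `i`. -/
def pd {n : ℕ} (i : Fin n) (f : En n → ℝ) (x : En n) : ℝ :=
  deriv (fun t : ℝ => f (x + t • EuclideanSpace.single i (1 : ℝ))) 0

/-- Iterated partial derivative with multi-index `α`. -/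
def pdm {n : ℕ} (α : Fin n → ℕ) (f : En n → ℝ) : En n → ℝ :=
  ((List.ofFn (fun i : Fin n => (pd i)^[α i])).foldr (· ∘ ·) id) f

/-- Mixed derivative `∂^α_x ∂^α_y K(x,y)|_{y=x}`. -/
def mdd {n : ℕ} (α : Fin n → ℕ) (K : En n → En n → ℝ) (x : En n) : ℝ :=
  pdm α (fun u => pdm α (K u) x) x

/-- Centered Gaussian process: every finite real linear combination of its
values is a centered Gaussian random variable. -/
def IsCenteredGaussianProcess {Ω : Type*} [MeasurableSpace Ω] (P : Measure Ω)
    {ι : Type*} (f : ι → Ω → ℝ) : Prop :=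
  ∀ (m : ℕ) (x : Fin m → ι) (a : Fin m → ℝ), ∃ v : NNReal,
    P.map (fun ω => ∑ i, a i * f (x i) ω) = gaussianReal 0 v

/-- Two processes are jointly Gaussian if every finite real linear combination of
values of both is a centered Gaussian random variable. -/
def JointlyGaussian {Ω : Type*} [MeasurableSpace Ω] (P : Measure Ω)
    {ι : Type*} (f₁ f₂ : ι → Ω → ℝ) : Prop :=
  IsCenteredGaussianProcess P (Sum.elim f₁ f₂)

/-- The rescaled lattice points `Λ_m = {λ ∈ (1/√m)ℤⁿ : |λ| = 1}` on the unit sphere. -/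
def Lam (n m : ℕ) : Set (En n) :=
  {x | ‖x‖ = 1 ∧ ∀ i, ∃ z : ℤ, x i = z / Real.sqrt m}

/-- `r_n(m)`, the number of points of `Λ_m`. -/
def rcnt (n m : ℕ) : ℕ := Nat.card (Lam n m)

/-- The normalized counting (probability) measure `ρ_m` on `Λ_m`. -/
def rhoM (n m : ℕ) : Measure (En n) :=
  ((rcnt n m : ENNReal))⁻¹ • Measure.count.restrict (Lam n m)

/-- The uniform probability measure on the unit sphere `S^{n-1}`,
defined via the `(n-1)`-dimensional Hausdorff measure. -/
def unifSphere (n : ℕ) : Measure (En n) :=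
  (μH[(n : ℝ) - 1] (Metric.sphere (0 : En n) 1))⁻¹ •
    (μH[(n : ℝ) - 1]).restrict (Metric.sphere (0 : En n) 1)

/-! ### Sums of four squares by Minkowski's theorem -/

/-- The Euclidean ball of squared radius `r` in `ℝ⁴`, as a subset of `Fin 4 → ℝ`, where the volume is the
product measure used by Minkowski's theorem. -/
def vball (r:ℝ) : Set (Fin 4 → ℝ) := {v | ∑ i, v i ^2 < r}

lemma vol_vball (r : ℝ) (hr : 0 < r) : volume (vball r) = ENNReal.ofReal (π^2/2*r^2) := by
  have h := (PiLp.volume_preserving_toLp (Fin 4)).measure_preimage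
    (s := Metric.ball (0 : EuclideanSpace ℝ (Fin 4)) (√r)) measurableSet_ball.nullMeasurableSet
  have h2 : (WithLp.toLp 2) ⁻¹' (Metric.ball (0 : EuclideanSpace ℝ (Fin 4)) (√r)) = vball r := by
    ext v
    simp [vball, EuclideanSpace.norm_eq, Real.sqrt_lt_sqrt_iff, Finset.sum_nonneg, sq_nonneg]
  rw [h2] at h
  rw [h, EuclideanSpace.volume_ball]
  have hG : Real.Gamma (((Fintype.card (Fin 4) : ℕ):ℝ)/2+1) = 2 := by
    have := Real.Gamma_nat_eq_factorial 2
    norm_num [Nat.factorial] at this ⊢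
  rw [hG, ← ENNReal.ofReal_pow (by positivity), ← ENNReal.ofReal_mul (by positivity)]
  congr 1
  have e1 : √r^4 = r^2 := by
    rw [show (4:ℕ)=2*2 by norm_num, pow_mul, Real.sq_sqrt hr.le]
  have e2 : √π^4 = π^2 := by
    rw [show (4:ℕ)=2*2 by norm_num, pow_mul, Real.sq_sqrt pi_pos.le]
  simp only [Fintype.card_fin, e1, e2]; ring

lemma convex_vball (r : ℝ) : Convex ℝ (vball r) := by
  have : vball r = {v : Fin 4 → ℝ | v ∈ Set.univ ∧ (∑ i, v i ^2) < r} := by simp [vball]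
  rw [this]
  refine ConvexOn.convex_lt (f := fun v : Fin 4 → ℝ => ∑ i, v i ^ 2) ⟨convex_univ, fun x _ y _ a b ha hb hab => ?_⟩ r
  simp only [Pi.add_apply, Pi.smul_apply, smul_eq_mul, Finset.mul_sum, ← Finset.sum_add_distrib]
  refine Finset.sum_le_sum fun i _ => ?_
  have : a = 1 - b := by linarith
  subst this
  nlinarith [mul_nonneg (mul_nonneg ha hb) (sq_nonneg (x i - y i))]

/-- Its columns generate the lattice of `(x, y, z, w)` with `z ≡ ax - by` and `w ≡ bx + ay` modulo `N`. -/
def latM (N a b : ℝ) : Matrix (Fin 4) (Fin 4) ℝ :=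
  !![1,0,0,0; 0,1,0,0; a,-b,N,0; b,a,0,N]

lemma det_latM (N a b : ℝ) : (latM N a b).det = N^2 := by
  simp [latM, Matrix.det_succ_row_zero, Fin.sum_univ_succ, Fin.succAbove]
  ring

/-- When `a² + b² ≡ -1 (mod N)`, the vectors of the lattice generated by `latM N a b` have squared length
divisible by `N`. Minkowski's theorem finds a nonzero one of squared length below `2N`, hence equal to `N`. -/
lemma minkowski_four (N : ℕ) (hN : 0 < N) (a b : ℤ) (hab : (N:ℤ) ∣ a^2+b^2+1) :
    ∃ x y z w : ℤ, x^2+y^2+z^2+w^2 = N ∧ (N:ℤ) ∣ z - (a*x-b*y) ∧ (N:ℤ) ∣ w - (b*x+a*y) := by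
  have hN' : (0:ℝ) < N := by exact_mod_cast hN
  let f := Matrix.toLin' (latM N a b)
  have hdet : LinearMap.det f = (N:ℝ)^2 := by rw [LinearMap.det_toLin', det_latM]
  let s : Set (Fin 4 → ℝ) := f ⁻¹' (vball (2*N))
  have hvol : volume s = ENNReal.ofReal (2*π^2) := by
    rw [Measure.addHaar_preimage_linearMap _ (by rw [hdet]; positivity), hdet, vol_vball _ (by positivity),
      ← ENNReal.ofReal_mul (by positivity)]
    congr 1
    rw [abs_of_pos (by positivity)]; field_simp
  have : Countable (Submodule.span ℤ (Set.range (Pi.basisFun ℝ (Fin 4)))).toAddSubgroup :=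
    inferInstanceAs (Countable (Submodule.span ℤ (Set.range (Pi.basisFun ℝ (Fin 4)))))
  have key := exists_ne_zero_mem_lattice_of_measure_mul_two_pow_lt_measure (μ := volume) (s := s)
    (L := (Submodule.span ℤ (Set.range (Pi.basisFun ℝ (Fin 4)))).toAddSubgroup)
    (ZSpan.isAddFundamentalDomain (Pi.basisFun ℝ (Fin 4)) volume) ?_ ?_ ?_
  · obtain ⟨⟨v, hv⟩, hv0, hvs⟩ := key
    have hv' : ∀ i, ∃ k : ℤ, (k:ℝ) = v i := by
      have := (Pi.basisFun ℝ (Fin 4)).mem_span_iff_repr_mem ℤ v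
      have h2 := this.1 hv
      intro i
      obtain ⟨k, hk⟩ := h2 i
      exact ⟨k, by simpa using hk⟩
    choose k hk using hv'
    have hs : ∑ i, (f v i)^2 < 2*(N:ℝ) := hvs
    obtain ⟨c, hc⟩ := hab
    set x := k 0; set y := k 1
    set z := a * x - b*y + N * k 2 with hz
    set w := b * x + a*y + N * k 3 with hw
    have hsum : (((x^2+y^2+z^2+w^2 : ℤ)):ℝ) < 2*N := by
      refine lt_of_eq_of_lt ?_ hs
      simp only [f, Matrix.toLin'_apply, latM, Matrix.mulVec, dotProduct, Fin.sum_univ_succ, ← hk, hz, hw]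
      simp
      simp only [x, y]
      ring_nf
    have hsum' : x^2+y^2+z^2+w^2 < 2*N := by exact_mod_cast hsum
    have hdvd : (N:ℤ) ∣ x^2+y^2+z^2+w^2 := by
      refine ⟨c*(x^2+y^2) + 2 * (a*x-b*y)*k 2 + N * k 2^2 + 2 * (b*x+a*y)*k 3 + N * k 3^2, ?_⟩
      rw [hz, hw]; linear_combination (x^2+y^2)*hc
    have hpos : 0 < x^2+y^2+z^2+w^2 := by
      by_contra hcon
      have hx : x = 0 := by nlinarith [sq_nonneg x, sq_nonneg y, sq_nonneg z, sq_nonneg w]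
      have hy : y = 0 := by nlinarith [sq_nonneg x, sq_nonneg y, sq_nonneg z, sq_nonneg w]
      have hz0 : z = 0 := by nlinarith [sq_nonneg x, sq_nonneg y, sq_nonneg z, sq_nonneg w]
      have hw0 : w = 0 := by nlinarith [sq_nonneg x, sq_nonneg y, sq_nonneg z, sq_nonneg w]
      have hNz : (N:ℤ) ≠ 0 := by positivity
      have h2 : k 2 = 0 := by
        rw [hz0, hx, hy] at hz; simp at hz; omega
      have h3 : k 3 = 0 := by
        rw [hw0, hx, hy] at hw; simp at hw; omega
      apply hv0
      ext i
      fin_cases i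
      · simpa [hx, x] using (hk 0).symm.trans (by simp [show k 0 = 0 from hx])
      · simpa [hx, x] using (hk 1).symm.trans (by simp [show k 1 = 0 from hy])
      · simpa [hx, x] using (hk 2).symm.trans (by simp [h2])
      · simpa [hx, x] using (hk 3).symm.trans (by simp [h3])
    refine ⟨x, y, z, w, ?_, ⟨k 2, by rw [hz]; ring⟩, ⟨k 3, by rw [hw]; ring⟩⟩
    obtain ⟨d, hd⟩ := hdvd
    have hN'' : (0:ℤ) < N := by exact_mod_cast hN
    have d1 : 0 < d := by by_contra h; nlinarith
    have d2 : d < 2 := by by_contra h; nlinarith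
    have : d = 1 := by omega
    rw [hd, this, mul_one]
  · intro v hv
    simpa [s, vball] using hv
  · exact (convex_vball _).linear_preimage f
  · rw [hvol, ZSpan.fundamentalDomain_pi_basisFun, Real.volume_pi_Ico]
    simp only [Finset.prod_const, sub_zero, ENNReal.ofReal_one, one_pow, one_mul,
      Module.finrank_fin_fun]
    -- the inequality needed is `16 < 2π²`
    rw [show (2:ENNReal)^4 = ENNReal.ofReal 16 by norm_num]
    refine (ENNReal.ofReal_lt_ofReal_iff (by positivity)).2 ?_
    nlinarith [pi_gt_three]

/-- A representation of `N` as a sum of four squares lies in the lattice attached to at most one pair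
`(a, b)` modulo `N`: quaternion multiplication writes `N(a' - a)` and `N(b' - b)` as combinations of
products of two multiples of `N`. -/
lemma lat_unique (N a b a' b' x y z w : ℤ) (hN : N ≠ 0)
    (hn : x^2+y^2+z^2+w^2 = N) (h1 : N ∣ z - (a*x-b*y)) (h2 : N ∣ w - (b*x+a*y))
    (h1' : N ∣ z - (a'*x-b'*y)) (h2' : N ∣ w - (b'*x+a'*y)) (hab : N ∣ a^2+b^2+1)
    (hab' : N ∣ a'^2+b'^2+1)  : N ∣ a' - a ∧ N ∣ b' - b := by
  obtain ⟨p, hp⟩ := h1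
  obtain ⟨q, hq⟩ := h2
  obtain ⟨p', hp'⟩ := h1'
  obtain ⟨q', hq'⟩ := h2'
  obtain ⟨c, hc⟩ := hab
  obtain ⟨c', hc'⟩ := hab'
  have U0 : x + a*z+b*w = N * (x*c + a*p+b*q) := by
    linear_combination x*hc + a*hp + b*hq
  have U1 : -y-a*w+b*z = N * (-y*c - a*q+b*p) := by
    linear_combination -y*hc + b*hp - a*hq
  have V0 : x + a'*z+b'*w = N * (x*c' + a'*p'+b'*q') := by
    linear_combination x*hc' + a'*hp' + b'*hq'
  have V1 : -y-a'*w+b'*z = N * (-y*c' - a'*q'+b'*p') := by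
    linear_combination -y*hc' + b'*hp' - a'*hq'
  set u0 := x*c + a*p+b*q
  set u1 := -y*c - a*q+b*p
  set v0 := x*c' + a'*p'+b'*q'
  set v1 := -y*c' - a'*q'+b'*p'
  constructor
  · refine ⟨v0*p - p'*u0 + q'*u1 - v1*q, mul_left_cancel₀ hN ?_⟩
    have : N*(a'-a) = -(x + a'*z+b'*w)*(-z+a*x-b*y) + (-z+a'*x-b'*y)*(x + a*z+b*w)
       - (-w+b'*x+a'*y)*(-y-a*w+b*z) + (-y-a'*w+b'*z)*(-w+b*x+a*y) := by
      rw [← hn]; ring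
    rw [this, U0, U1, V0, V1, show -z+a*x-b*y = -(N*p) by rw [← hp]; ring,
      show -z+a'*x-b'*y = -(N*p') by rw [← hp']; ring,
      show -w+b*x+a*y = -(N*q) by rw [← hq]; ring,
      show -w+b'*x+a'*y = -(N*q') by rw [← hq']; ring]
    ring
  · refine ⟨v0*q - q'*u0 + v1*p - p'*u1, mul_left_cancel₀ hN ?_⟩
    have : N*(b'-b) = -(x + a'*z+b'*w)*(-w+b*x+a*y) + (-w+b'*x+a'*y)*(x + a*z+b*w)
       - (-y-a'*w+b'*z)*(-z+a*x-b*y) + (-z+a'*x-b'*y)*(-y-a*w+b*z) := by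
      rw [← hn]; ring
    rw [this, U0, U1, V0, V1, show -z+a*x-b*y = -(N*p) by rw [← hp]; ring,
      show -z+a'*x-b'*y = -(N*p') by rw [← hp']; ring,
      show -w+b*x+a*y = -(N*q) by rw [← hq]; ring,
      show -w+b'*x+a'*y = -(N*q') by rw [← hq']; ring]
    ring

/-! ### Points on `a² + b² = -1` modulo `N` -/

/-- The number of `t` modulo `N` for which `1 + t²` is invertible. -/
def unitT (N : ℕ) : ℕ := Nat.card {t : ZMod N // IsUnit (1+t^2)}

lemma unitT_mul (a b : ℕ) (h : a.Coprime b) : unitT (a*b) = unitT a * unitT b := by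
  rw [unitT, unitT, unitT, ← Nat.card_prod]
  let e := ZMod.chineseRemainder h
  have hu : ∀ t, IsUnit (1+t^2) ↔ IsUnit (1+(e t).1^2) ∧ IsUnit (1+(e t).2^2) := by
    intro t
    rw [← MulEquiv.isUnit_map e, Prod.isUnit_iff]
    simp
  exact Nat.card_congr
    { toFun := fun t => (⟨(e t).1, ((hu t).1 t.2).1⟩, ⟨(e t).2, ((hu t).1 t.2).2⟩)
      invFun := fun p => ⟨e.symm (p.1, p.2), (hu _).2 (by simpa using ⟨p.1.2, p.2.2⟩)⟩
      left_inv := fun t => by simp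
      right_inv := fun p => by simp }

/-- At most two residues modulo `p` satisfy `t² = -1`. -/
lemma unitT_prime_pow (p k : ℕ) (hp : p.Prime) : p^k*(p-2) ≤ unitT (p^(k+1)) := by
  classical
  have := Fact.mk hp
  have : NeZero (p^(k+1)) := ⟨pow_ne_zero _ hp.ne_zero⟩
  let S : Finset ℕ := (Finset.range p).filter fun r => ¬ p ∣ 1 + r^2
  have hS : p - 2 ≤ S.card := by
    have h1 : S.card + ((Finset.range p).filter fun r => p ∣ 1 + r^2).card = p := by
      rw [add_comm, Finset.card_filter_add_card_filter_not, Finset.card_range]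
    have h2 : ((Finset.range p).filter fun r => p ∣ 1 + r^2).card ≤ 2 := by
      let P : Polynomial (ZMod p) := Polynomial.X^2 + Polynomial.C 1
      have hP : P.Monic := Polynomial.monic_X_pow_add_C _ (by norm_num)
      have hc : Multiset.card P.roots ≤ 2 := by
        refine (Polynomial.card_roots' P).trans ?_
        simp only [P]; rw [Polynomial.natDegree_X_pow_add_C]
      refine le_trans ?_ ((Multiset.toFinset_card_le _).trans hc)
      refine Finset.card_le_card_of_injOn (fun r => (r : ZMod p)) ?_ ?_
      · intro r hr
        simp only [Finset.coe_filter, Finset.mem_range, Set.mem_ofPred_eq] at hr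
        simp only [Finset.mem_coe, Multiset.mem_toFinset, Polynomial.mem_roots hP.ne_zero, Polynomial.IsRoot.def]
        have := (ZMod.natCast_eq_zero_iff _ _).2 hr.2
        push_cast at this
        simp [P]; rw [add_comm]; exact this
      · intro r hr s hs hrs
        simp only [Finset.coe_filter, Finset.mem_range, Set.mem_ofPred_eq] at hr hs
        have := (ZMod.natCast_eq_natCast_iff' _ _ _).1 hrs
        rwa [Nat.mod_eq_of_lt hr.1, Nat.mod_eq_of_lt hs.1] at this
    omega
  have hu : ∀ x : S × Fin (p^k), IsUnit (1 + (((x.1:ℕ) + p * (x.2:ℕ) : ℕ) : ZMod (p^(k+1)))^2) := by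
    intro x
    have : (1 + (((x.1:ℕ) + p * (x.2:ℕ) : ℕ) : ZMod (p^(k+1)))^2) = ((1 + ((x.1:ℕ) + p * (x.2:ℕ))^2 : ℕ) : ZMod (p^(k+1))) := by
      push_cast; ring
    rw [this, ZMod.isUnit_iff_coprime]
    apply Nat.Coprime.pow_right
    rw [Nat.coprime_comm, hp.coprime_iff_not_dvd]
    have hx := (Finset.mem_filter.1 x.1.2).2
    rw [show (1 + ((x.1:ℕ) + p * (x.2:ℕ))^2) = (1+(x.1:ℕ)^2) + p * (2*(x.1:ℕ)*(x.2:ℕ) + p*(x.2:ℕ)^2) by ring]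
    rwa [← Nat.dvd_add_iff_left (dvd_mul_right _ _)]
  have hinj := Nat.card_le_card_of_injective (β := {t : ZMod (p^(k+1)) // IsUnit (1+t^2)})
    (fun x : S × Fin (p^k) => ⟨(((x.1:ℕ) + p * (x.2:ℕ) : ℕ) : ZMod (p^(k+1))), hu x⟩) ?_
  · rw [unitT]
    refine le_trans ?_ hinj
    simp
    rw [mul_comm]
    gcongr
  · rintro ⟨⟨r, hr⟩, u⟩ ⟨⟨s, hs⟩, v⟩ h
    have hr' := Finset.mem_range.1 (Finset.mem_filter.1 hr).1
    have hs' := Finset.mem_range.1 (Finset.mem_filter.1 hs).1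
    have hu' := u.2
    have hv' := v.2
    have hlt : ∀ r u, r < p → u < p^k → r + p * u < p^(k+1) := by
      intro r u h1 h2
      calc r + p*u < p + p * u := by omega
        _ = p*(u+1) := by ring
        _ ≤ p * p^k := by gcongr; omega
        _ = _ := by ring
    simp only [Subtype.mk.injEq] at h
    have := (ZMod.natCast_eq_natCast_iff' _ _ _).1 h
    rw [Nat.mod_eq_of_lt (hlt _ _ hr' hu'), Nat.mod_eq_of_lt (hlt _ _ hs' hv')] at this
    have e1 : r = s := by
      have := congrArg (· % p) this
      simpa [Nat.add_mul_mod_self_left, Nat.mod_eq_of_lt hr', Nat.mod_eq_of_lt hs'] using this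
    subst e1
    have e2 : (u:ℕ) = v := by
      have := Nat.add_left_cancel this
      exact Nat.eq_of_mul_eq_mul_left hp.pos this
    simp [Fin.ext_iff, e2]

/-- A loss factor for the prime `p` dividing `N`: the inequality `p^7 ≤ (p-2)^8` fails for `p = 3, 5, 7`,
where `2187 = 3^7` compensates. -/
def wt (p N : ℕ) : ℕ := if p ∣ N then 2187 else 1

lemma wt_mul (p a b : ℕ) (hp : p.Prime) (h : a.Coprime b) : wt p (a*b) = wt p a * wt p b := by
  have : ¬ (p ∣ a ∧ p ∣ b) := fun ⟨h1, h2⟩ => hp.one_lt.ne' (Nat.dvd_one.1 (h ▸ Nat.dvd_gcd h1 h2))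
  unfold wt
  simp only [hp.dvd_mul]
  by_cases h1 : p ∣ a <;> by_cases h2 : p ∣ b <;> simp_all

lemma wt_pos (p N : ℕ) : 1 ≤ wt p N := by unfold wt; split_ifs <;> norm_num
lemma wt_le (p N : ℕ) : wt p N ≤ 2187 := by unfold wt; split_ifs <;> norm_num

/-- Multiplicative form of `unitT N ≫ N^{7/8}`. -/
lemma unitT_lower (N : ℕ) (hodd : Odd N) : N^7 ≤ wt 3 N * wt 5 N * wt 7 N * unitT N ^ 8 := by
  induction N using Nat.recOnPosPrimePosCoprime with
  | zero => simp at hodd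
  | one =>
    have : 1 ≤ unitT 1 := by
      unfold unitT
      have : Nonempty {t : ZMod 1 // IsUnit (1+t^2)} := ⟨0, by simp⟩
      exact Nat.card_pos
    simp [wt]
    exact Nat.one_le_pow _ _ this
  | prime_pow p n hp hn =>
    obtain ⟨k, rfl⟩ : ∃ k, n = k+1 := ⟨n-1, by omega⟩
    have h := unitT_prime_pow p k hp
    have hp2 : p ≠ 2 := by
      rintro rfl
      rw [Nat.odd_pow_iff (by omega)] at hodd
      exact absurd hodd (by decide)
    have key : p^7 ≤ wt 3 (p^(k+1)) * wt 5 (p^(k+1)) * wt 7 (p^(k+1)) * (p-2)^8 := by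
      by_cases h11 : 11 ≤ p
      · obtain ⟨q, rfl⟩ := Nat.exists_eq_add_of_le h11
        have : (11+q)^7 ≤ (11+q-2)^8 := by
          rw [show 11+q-2 = 9+q by omega]
          ring_nf
          have h1 := Nat.zero_le (q)
          have h2 := Nat.zero_le (q^2)
          have h3 := Nat.zero_le (q^3)
          have h4 := Nat.zero_le (q^4)
          have h5 := Nat.zero_le (q^5)
          have h6 := Nat.zero_le (q^6)
          have h7 := Nat.zero_le (q^7)
          have h8 := Nat.zero_le (q^8)
          linarith
        calc _ ≤ _ := this
          _ = 1 * 1 * 1 * (11+q-2)^8 := by ring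
          _ ≤ _ := by gcongr <;> apply wt_pos
      · have hd : ∀ r : ℕ, r ∣ r^(k+1) := fun r => dvd_pow_self r (by omega)
        have h10 : p < 11 := by omega
        interval_cases p <;> first | (exfalso; revert hp; norm_num; done) | skip
        · simp at hp2
        · have := wt_pos 5 (3^(k+1)); have := wt_pos 7 (3^(k+1))
          have e : wt 3 (3^(k+1)) = 2187 := if_pos (hd 3)
          rw [e]
          calc 3^7 = 2187*1*1*(3-2)^8 := by norm_num
            _ ≤ _ := by gcongr
        · have := wt_pos 3 (5^(k+1)); have := wt_pos 7 (5^(k+1))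
          have e : wt 5 (5^(k+1)) = 2187 := if_pos (hd 5)
          rw [e]
          calc 5^7 ≤ 1*2187*1*(5-2)^8 := by norm_num
            _ ≤ _ := by gcongr
        · have := wt_pos 3 (7^(k+1)); have := wt_pos 5 (7^(k+1))
          have e : wt 7 (7^(k+1)) = 2187 := if_pos (hd 7)
          rw [e]
          calc 7^7 ≤ 1*1*2187*(7-2)^8 := by norm_num
            _ ≤ _ := by gcongr
    calc (p^(k+1))^7 = p^(7*k) * p^7 := by ring
      _ ≤ p^(8*k) * (wt 3 (p^(k+1)) * wt 5 (p^(k+1)) * wt 7 (p^(k+1)) * (p-2)^8) := by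
        gcongr
        · exact hp.one_lt.le
        · norm_num
      _ = wt 3 (p^(k+1)) * wt 5 (p^(k+1)) * wt 7 (p^(k+1)) * (p^k*(p-2))^8 := by ring
      _ ≤ _ := by gcongr
  | coprime a b ha hb hab iha ihb =>
    have := iha (Nat.Odd.of_mul_left hodd)
    have := ihb (Nat.Odd.of_mul_right hodd)
    rw [wt_mul 3 a b (by norm_num) hab, wt_mul 5 a b (by norm_num) hab, wt_mul 7 a b (by norm_num) hab, unitT_mul a b hab]
    calc (a*b)^7 = a^7*b^7 := by ring
      _ ≤ (wt 3 a * wt 5 a * wt 7 a * unitT a ^ 8)*(wt 3 b * wt 5 b * wt 7 b * unitT b ^ 8) := by gcongr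
      _ = _ := by ring

lemma unitT_lower' (N : ℕ) (hodd : Odd N) : N^7 ≤ 2187^3 * unitT N ^ 8 := by
  refine (unitT_lower N hodd).trans ?_
  calc _ ≤ 2187*2187*2187 * unitT N ^ 8 := by gcongr <;> apply wt_le
    _ = _ := by ring

/-- By Dirichlet's theorem some prime `p ≡ 1 (mod 4)` satisfies `p ≡ -1 (mod N)`, and such a `p` is a sum of
two squares. -/
lemma exists_neg_one (N : ℕ) (hodd : Odd N) : ∃ a b : ZMod N, a^2+b^2+1 = 0 := by
  have hN : N ≠ 0 := by rintro rfl; simp at hodd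
  have hc : (4:ℕ).Coprime N := by
    rw [show 4 = 2^2 by norm_num]; exact Nat.Coprime.pow_left _ (Nat.coprime_two_left.2 hodd)
  have : NeZero (4*N) := ⟨by omega⟩
  let e := ZMod.chineseRemainder hc
  let u : ZMod (4*N) := e.symm (1, -1)
  have hu : IsUnit u := by
    rw [← MulEquiv.isUnit_map e]; simp [u, Prod.isUnit_iff]
  obtain ⟨p, _, hp, hpu⟩ := Nat.forall_exists_prime_gt_and_eq_mod hu 0
  have h1 : e p = (1,-1) := by rw [hpu]; simp [u]
  rw [map_natCast] at h1
  have h4 : (p : ZMod 4) = 1 := congrArg Prod.fst h1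
  have hNp : (p : ZMod N) = -1 := congrArg Prod.snd h1
  have := Fact.mk hp
  have hp4 : p % 4 ≠ 3 := by
    have : ((p:ℕ) : ZMod 4) = ((1:ℕ) : ZMod 4) := by simpa using h4
    have := (ZMod.natCast_eq_natCast_iff' _ _ _).1 this
    omega
  obtain ⟨a, b, hab⟩ := Nat.Prime.sq_add_sq hp4
  refine ⟨a, b, ?_⟩
  have : ((a^2+b^2 : ℕ) : ZMod N) = -1 := by rw [hab, hNp]
  push_cast at this
  rw [this]; ring

/-- Multiplying one solution, viewed as `a + bi`, by the points `((1 - t²) + 2ti)/(1 + t²)` of the unit circle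
gives distinct solutions. -/
lemma unitT_le (N : ℕ) (hodd : Odd N) :
    unitT N ≤ Nat.card {x : ZMod N × ZMod N // x.1^2+x.2^2+1 = 0} := by
  have hN : NeZero N := ⟨by rintro rfl; simp at hodd⟩
  obtain ⟨a, b, hab⟩ := exists_neg_one N hodd
  have h2 : IsUnit (2 : ZMod N) := by
    have := (ZMod.isUnit_iff_coprime 2 N).2 (Nat.coprime_two_left.2 hodd)
    simpa using this
  choose v hv using fun t : {t : ZMod N // IsUnit (1+t^2)} => t.2.exists_left_inv
  refine Nat.card_le_card_of_injective (fun t => ⟨((a*(1-t^2) - b*(2*t)) * v t, (a*(2*t)+b*(1-t^2)) * v t), ?_⟩) ?_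
  · have := hv t
    linear_combination (hab) * (v t * (1+(t:ZMod N)^2))^2 - (1 + v t * (1+(t:ZMod N)^2)) * this
  · intro s t hst
    simp only [Subtype.mk.injEq, Prod.mk.injEq] at hst
    obtain ⟨e1, e2⟩ := hst
    have hs := hv s
    have ht := hv t
    have c : (1-(s:ZMod N)^2)*v s = (1-(t:ZMod N)^2)*v t := by
      linear_combination (-a)*e1 - b*e2 + ((1-(s:ZMod N)^2)*v s - (1-(t:ZMod N)^2)*v t) * hab
    have d : (2*(s:ZMod N))*v s = (2*(t:ZMod N))*v t := by
      linear_combination (b)*e1 - a*e2 + ((2*(s:ZMod N))*v s - (2*(t:ZMod N))*v t) * hab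
    have hvv : v s = v t := by
      apply h2.mul_left_cancel
      linear_combination c - ht + hs
    rw [hvv] at d hs
    have hss : (1+(s:ZMod N)^2) = (1+(t:ZMod N)^2) := by
      calc (1+(s:ZMod N)^2) = (1+(s:ZMod N)^2) * (v t * (1+(t:ZMod N)^2)) := by rw [ht, mul_one]
        _ = (v t * (1+(s:ZMod N)^2)) * (1+(t:ZMod N)^2) := by ring
        _ = _ := by rw [hs, one_mul]
    apply Subtype.ext
    apply h2.mul_left_cancel
    calc 2 * (s:ZMod N) = (2 * (s:ZMod N)* v t) * (1+(t:ZMod N)^2) := by rw [mul_assoc, ht, mul_one]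
      _ = (2 * (t:ZMod N)* v t) * (1+(t:ZMod N)^2) := by rw [d]
      _ = _ := by rw [mul_assoc, ht, mul_one]

/-! ### Lower bound for the number of representations as a sum of squares -/

/-- The integer points of squared length `m` in `ℤⁿ`. -/
def SS (n m : ℕ) : Set (Fin n → ℤ) := {k | ∑ i, k i ^ 2 = (m : ℤ)}

lemma SS_finite (n m : ℕ) : (SS n m).Finite := by
  refine (Set.finite_Icc (fun _ : Fin n => -(m:ℤ)) (fun _ => (m:ℤ))).subset ?_
  intro k hk
  have h : ∀ i, k i ^ 2 ≤ m := fun i => by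
    rw [← (show ∑ i, k i ^ 2 = (m:ℤ) from hk)]
    exact Finset.single_le_sum (f := fun i => k i ^2) (fun j _ => sq_nonneg (k j)) (Finset.mem_univ i)
  exact ⟨fun i => by have := h i; simp only; nlinarith, fun i => by have := h i; simp only; nlinarith⟩

/-- Each solution of `a² + b² ≡ -1 (mod N)` yields a representation of `N` by four squares, and distinct
solutions yield distinct representations. -/
lemma SS_four (N : ℕ) (hodd : Odd N) : unitT N ≤ (SS 4 N).ncard := by
  have hN : NeZero N := ⟨by rintro rfl; simp at hodd⟩
  have hN0 : 0 < N := Nat.pos_of_ne_zero hN.1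
  refine (unitT_le N hodd).trans ?_
  have hd : ∀ x : {x : ZMod N × ZMod N // x.1^2+x.2^2+1 = 0},
      (N:ℤ) ∣ ((x.1.1.val : ℤ))^2 + ((x.1.2.val : ℤ))^2 + 1 := by
    intro x
    rw [← ZMod.intCast_zmod_eq_zero_iff_dvd]
    push_cast
    simp only [ZMod.natCast_val, ZMod.cast_id', id]
    exact x.2
  choose x y z w h1 h2 h3 using fun u => minkowski_four N hN0 _ _ (hd u)
  have : Finite (SS 4 N) := SS_finite 4 N
  rw [← Nat.card_coe_set_eq]
  refine Nat.card_le_card_of_injective (fun u => ⟨![x u, y u, z u, w u], ?_⟩) ?_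
  · simp [SS, Fin.sum_univ_four, h1 u]
  · intro u v huv
    have huv := congrArg Subtype.val huv
    have e0 := congrFun huv 0
    have e1 := congrFun huv 1
    have e2 := congrFun huv 2
    have e3 := congrFun huv 3
    simp at e0 e1 e2 e3
    have hv2 := h2 v
    have hv3 := h3 v
    rw [← e0, ← e1, ← e2] at hv2
    rw [← e0, ← e1, ← e3] at hv3
    obtain ⟨k1, k2⟩ := lat_unique N _ _ _ _ _ _ _ _ (by exact_mod_cast hN0.ne') (h1 u) (h2 u) (h3 u) hv2 hv3
      (hd u) (hd v)
    have f1 := (ZMod.intCast_eq_intCast_iff_dvd_sub _ _ _).2 k1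
    have f2 := (ZMod.intCast_eq_intCast_iff_dvd_sub _ _ _).2 k2
    rw [Int.cast_natCast, Int.cast_natCast, ZMod.natCast_zmod_val, ZMod.natCast_zmod_val] at f1 f2
    exact Subtype.ext (Prod.ext f1 f2)

lemma SS_four_lower : ∃ c : ℝ, 0 < c ∧ ∀ N : ℕ, Odd N → c * (N:ℝ)^((7:ℝ)/8) ≤ (SS 4 N).ncard := by
  refine ⟨((2187:ℝ)^3)^(-(1/8:ℝ)), by positivity, fun N hodd => ?_⟩
  have h1 := unitT_lower' N hodd
  have h2 : (N:ℝ)^7 ≤ 2187^3 * ((SS 4 N).ncard:ℝ)^8 := by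
    have h3 : N^7 ≤ 2187^3 * (SS 4 N).ncard^8 := h1.trans (by gcongr; exact SS_four N hodd)
    exact_mod_cast h3
  have h4 := Real.rpow_le_rpow (by positivity) h2 (show (0:ℝ) ≤ 1/8 by norm_num)
  rw [Real.mul_rpow (by positivity) (by positivity), ← Real.rpow_natCast _ 7, ← Real.rpow_natCast _ 8,
    ← Real.rpow_mul (by positivity), ← Real.rpow_mul (by positivity)] at h4
  norm_num only [Real.rpow_one, Nat.cast_ofNat] at h4
  rw [Real.rpow_neg (by positivity), inv_mul_le_iff₀ (by positivity)]
  norm_num only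
  simpa using h4

/-- Points with one coordinate prescribed to be `a`, for distinct `a ≥ 0`, are distinct. -/
lemma SS_sum_le (n m : ℕ) (A : Finset ℕ) (hA : ∀ a ∈ A, a^2 ≤ m) :
    ∑ a ∈ A, (SS n (m - a^2)).ncard ≤ (SS (n+1) m).ncard := by
  have := fun N => SS_finite n N
  have hf := SS_finite (n+1) m
  classical
  have hc : ∀ N, (SS n N).ncard = (SS_finite n N).toFinset.card := fun N => Set.ncard_eq_toFinset_card _ _
  simp only [hc]
  rw [Set.ncard_eq_toFinset_card _ hf, ← Finset.card_sigma]
  refine Finset.card_le_card_of_injOn (fun x => Fin.cons (x.1:ℤ) x.2) ?_ ?_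
  · rintro ⟨a, k⟩ hk
    simp only [Finset.coe_sigma, Set.mem_sigma_iff, Finset.mem_coe, Set.Finite.mem_toFinset] at hk
    obtain ⟨ha, hk⟩ := hk
    have hk : ∑ i, k i ^ 2 = ((m - a^2 : ℕ) : ℤ) := hk
    simp only [Set.Finite.coe_toFinset, SS, Set.mem_ofPred_eq, Fin.sum_univ_succ, Fin.cons_zero, Fin.cons_succ]
    rw [hk, Nat.cast_sub (hA a ha)]; push_cast; ring
  · rintro ⟨a, k⟩ _ ⟨b, l⟩ _ h
    obtain ⟨h1, h2⟩ := Fin.cons_inj.1 h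
    have h1 : a = b := by exact_mod_cast h1
    subst h1; simp at h2; subst h2; rfl

/-- Fixing one coordinate `a` with `a² ≤ m/2` keeps `m - a²` of order `m`. -/
lemma SS_step (n m : ℕ) (A : Finset ℕ) (c e : ℝ) (hc : 0 ≤ c) (he : 0 ≤ e) (hA : ∀ a ∈ A, a^2 ≤ m/2)
    (h : ∀ a ∈ A, c * ((m - a^2 : ℕ):ℝ)^e ≤ (SS n (m-a^2)).ncard) :
    A.card * (c * ((m:ℝ)/2)^e) ≤ (SS (n+1) m).ncard := by
  have h1 := SS_sum_le n m A (fun a ha => (hA a ha).trans (Nat.div_le_self _ _))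
  have h2 : ((∑ a ∈ A, (SS n (m - a^2)).ncard : ℕ):ℝ) ≤ (SS (n+1) m).ncard := by exact_mod_cast h1
  refine le_trans ?_ h2
  push_cast
  rw [← nsmul_eq_mul]
  refine Finset.card_nsmul_le_sum _ _ _ fun a ha => le_trans ?_ (h a ha)
  gcongr
  have := hA a ha
  rw [Nat.cast_sub (by omega)]
  have h5 : 2 * a^2 ≤ m := by omega
  have h6 : 2 * (a:ℝ)^2 ≤ m := by exact_mod_cast h5
  push_cast
  linarith

/-- The fifth coordinate `a` is restricted to the parity that makes `m - a²` odd. The exponent is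
`5/2 - 9/8 = 1/2 + 7/8`: the number of choices of `a` times the four-square count. -/
lemma SS_five_lower : ∃ c : ℝ, 0 < c ∧ ∀ m : ℕ, 1 ≤ m → c * (m:ℝ)^((5:ℝ)/2-9/8) ≤ (SS 5 m).ncard := by
  obtain ⟨c, hc, h⟩ := SS_four_lower
  refine ⟨c/4*(1/2)^((5:ℝ)/2-9/8), by positivity, fun m hm => ?_⟩
  set s := Nat.sqrt (m/2) with hs
  -- `a ≡ m + 1 (mod 2)` makes `m - a²` odd
  set par := (m+1) % 2 with hpar
  set K := (s-par)/2 with hK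
  have hsp : par ≤ s := by
    rcases Nat.mod_two_eq_zero_or_one (m+1) with h0 | h0
    · omega
    · have : 1 ≤ s := by rw [hs, Nat.le_sqrt]; omega
      omega
  have hcard : ((Finset.range (K+1)).image (fun j => 2*j+par)).card = K+1 := by
    rw [Finset.card_image_of_injective _ (fun a b hab => by simpa using hab), Finset.card_range]
  have hss : s*s ≤ m/2 := Nat.sqrt_le _
  have hle : ∀ j ∈ Finset.range (K+1), (2*j+par)^2 ≤ m/2 := by
    intro j hj
    have : 2*j+par ≤ s := by have := Finset.mem_range.1 hj; omega
    calc (2*j+par)^2 ≤ s^2 := by gcongr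
      _ = s*s := by ring
      _ ≤ _ := hss
  have key := SS_step 4 m ((Finset.range (K+1)).image (fun j => 2*j+par)) c (7/8) hc.le (by norm_num) (by simpa using hle)
    (by
      intro a ha
      obtain ⟨j, hj, rfl⟩ := Finset.mem_image.1 ha
      have := hle j hj
      apply h
      have e : (2*j+par)^2 % 2 = par := by
        rcases Nat.mod_two_eq_zero_or_one (m+1) with h0 | h0
        · rw [hpar, h0, Nat.pow_mod]; simp
        · rw [hpar, h0, Nat.pow_mod]; simp [Nat.add_mod]
      rw [Nat.odd_iff]; omega)
  refine le_trans ?_ key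
  rw [hcard]
  have h1 : √(m/2:ℝ) ≤ 4*(K+1 : ℕ) := by
    have a1 : s + 1 ≤ 4*(K+1) := by omega
    have a2 : m/2 < (s+1)*(s+1) := Nat.lt_succ_sqrt _
    have a3 : m ≤ 2*((s+1)*(s+1)) := by omega
    have a4 : (m:ℝ) ≤ 2*((s+1)*(s+1)) := by exact_mod_cast a3
    have a5 : (s:ℝ)+1 ≤ 4*(K+1 : ℕ) := by exact_mod_cast a1
    refine le_trans ?_ a5
    rw [Real.sqrt_le_left (by positivity)]
    nlinarith
  have hm0 : (0:ℝ) < m/2 := by positivity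
  calc c/4*(1/2)^((5:ℝ)/2-9/8) * (m:ℝ)^((5:ℝ)/2-9/8) = c/4 * ((m/2:ℝ)^((5:ℝ)/2-9/8)) := by
        rw [mul_assoc, ← Real.mul_rpow (by norm_num) (by positivity)]; ring_nf
    _ = √(m/2:ℝ)/4 * (c*(m/2:ℝ)^((7:ℝ)/8)) := by
        rw [show (5:ℝ)/2-9/8 = 1/2+7/8 by norm_num, Real.rpow_add hm0, Real.sqrt_eq_rpow]; ring
    _ ≤ _ := by
        gcongr
        linarith

/-- Lower bound `r_n(m) ≫ m^{n/2 - 9/8}`. -/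
theorem SS_lower (n : ℕ) (hn : 5 ≤ n) : ∃ c : ℝ, 0 < c ∧ ∀ m : ℕ, 1 ≤ m →
    c * (m:ℝ)^((n:ℝ)/2-9/8) ≤ (SS n m).ncard := by
  induction n, hn using Nat.le_induction with
  | base => exact_mod_cast SS_five_lower
  | succ n hn ih =>
    obtain ⟨c, hc, h⟩ := ih
    refine ⟨c*(1/2)^(((n+1:ℕ):ℝ)/2-9/8), by positivity, fun m hm => ?_⟩
    set s := Nat.sqrt (m/2) with hs
    have hn' : (5:ℝ) ≤ n := by exact_mod_cast hn
    have hss : s*s ≤ m/2 := Nat.sqrt_le _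
    have hle : ∀ a ∈ Finset.range (s+1), a^2 ≤ m/2 := by
      intro j hj
      have : j ≤ s := by have := Finset.mem_range.1 hj; omega
      calc j^2 ≤ s^2 := by gcongr
        _ = s*s := by ring
        _ ≤ _ := hss
    have key := SS_step n m (Finset.range (s+1)) c ((n:ℝ)/2-9/8) hc.le (by linarith) hle
      (fun a ha => h _ (by have := hle a ha; omega))
    refine le_trans ?_ key
    rw [Finset.card_range]
    have h1 : √(m/2:ℝ) ≤ (s+1 : ℕ) := by
      have a2 : m/2 < (s+1)*(s+1) := Nat.lt_succ_sqrt _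
      have a3 : m ≤ 2*((s+1)*(s+1)) := by omega
      have a4 : (m:ℝ) ≤ 2*((s+1)*(s+1)) := by exact_mod_cast a3
      push_cast
      rw [Real.sqrt_le_left (by positivity)]
      nlinarith
    have hm0 : (0:ℝ) < m/2 := by positivity
    calc c*(1/2)^(((n+1:ℕ):ℝ)/2-9/8) * (m:ℝ)^(((n+1:ℕ):ℝ)/2-9/8) = c * ((m/2:ℝ)^(((n+1:ℕ):ℝ)/2-9/8)) := by
          rw [mul_assoc, ← Real.mul_rpow (by norm_num) (by positivity)]; ring_nf
      _ = √(m/2:ℝ) * (c*(m/2:ℝ)^((n:ℝ)/2-9/8)) := by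
          rw [show ((n+1:ℕ):ℝ)/2-9/8 = 1/2+((n:ℝ)/2-9/8) by push_cast; ring, Real.rpow_add hm0, Real.sqrt_eq_rpow]; ring
      _ ≤ _ := by gcongr

/-! ### Gauss sums and the theta function near rational points -/

lemma hs_congr {ι : Type*} {f g : ι → ℂ} {a : ℂ} (h : ∀ i, f i = g i) : HasSum f a ↔ HasSum g a := by
  rw [funext h]

/-- The quadratic Gauss sum `∑_{r mod q} exp(2πi (a r² + h r)/q)`. -/
def gs (q : ℕ) (a h : ℤ) : ℂ := ∑ r : Fin q, Complex.exp (2 * π * Complex.I * ((a * (r:ℕ)^2 + h * (r:ℕ) : ℤ):ℂ) / q)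

lemma gs_eq (q : ℕ) [NeZero q] (a h : ℤ) : gs q a h = ∑ r : ZMod q, ZMod.stdAddChar ((a:ZMod q) * r^2 + (h:ZMod q) * r) := by
  obtain ⟨p, rfl⟩ : ∃ p, q = p+1 := ⟨q-1, by have := NeZero.pos q; omega⟩
  unfold gs
  change ∑ r : ZMod (p+1), _ = _
  refine Finset.sum_congr rfl fun r _ => ?_
  rw [← ZMod.stdAddChar_coe]
  congr 1
  push_cast
  have : (((show Fin (p+1) from r : Fin (p+1)) : ℕ) : ZMod (p+1)) = r := ZMod.natCast_zmod_val r
  erw [this]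

lemma card_two_torsion (q : ℕ) [NeZero q] : (Finset.univ.filter (fun d : ZMod q => 2 * d = 0)).card ≤ 2 := by
  have : (Finset.univ.filter (fun d : ZMod q => 2 * d = 0)) ⊆ {0, ((q/2 : ℕ) : ZMod q)} := by
    intro d hd
    rw [Finset.mem_filter] at hd
    have h1 : ((2 * d.val : ℕ) : ZMod q) = 0 := by push_cast; rw [ZMod.natCast_zmod_val]; exact hd.2
    rw [ZMod.natCast_eq_zero_iff] at h1
    have h2 := ZMod.val_lt d
    obtain ⟨k, hk⟩ := h1
    have hk2 : k < 2 := by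
      by_contra hc
      have : q * 2 ≤ q * k := Nat.mul_le_mul_left _ (by omega)
      omega
    simp only [Finset.mem_insert, Finset.mem_singleton]
    interval_cases k
    · left; exact (ZMod.val_eq_zero d).1 (by omega)
    · right; rw [← ZMod.natCast_zmod_val d]; congr 1; omega
  exact (Finset.card_le_card this).trans Finset.card_le_two

/-- In the squared modulus, summing over the sum variable leaves only differences `d` with `2d = 0`, of which
there are at most two. -/
lemma gs_norm (q : ℕ) [NeZero q] (a h : ℤ) (hc : IsCoprime a (q:ℤ)) : ‖gs q a h‖ ≤ √2 * √q := by
  have hu : IsUnit (a : ZMod q) := by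
    obtain ⟨u, v, huv⟩ := hc
    refine IsUnit.of_mul_eq_one (u : ZMod q) ?_
    have := congrArg (fun z : ℤ => (z : ZMod q)) huv
    simp at this
    rw [mul_comm]; exact this
  rw [← Real.sqrt_mul (by norm_num)]
  apply Real.le_sqrt_of_sq_le
  rw [← Complex.normSq_eq_norm_sq]
  have h1 : ((Complex.normSq (gs q a h) : ℝ) : ℂ) = ∑ d : ZMod q, ZMod.stdAddChar ((a:ZMod q) * d^2 + (h:ZMod q) * d) * (if 2 * d = 0 then (q:ℂ) else 0) := by
    rw [← Complex.mul_conj, gs_eq, map_sum, Finset.sum_mul_sum]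
    have h2 : ∀ r s : ZMod q, (ZMod.stdAddChar ((a:ZMod q) * r^2 + (h:ZMod q) * r) : ℂ) * (starRingEnd ℂ) (ZMod.stdAddChar ((a:ZMod q) * s^2 + (h:ZMod q) * s))
      = ZMod.stdAddChar ((a:ZMod q) * (r-s)^2 + (h:ZMod q) * (r-s)) * ZMod.stdAddChar (s * ((a:ZMod q) * (2*(r-s)))) := by
      intro r s
      rw [← AddChar.map_neg_eq_conj, ← AddChar.map_add_eq_mul, ← AddChar.map_add_eq_mul]
      congr 1; ring
    simp only [h2]
    rw [Finset.sum_comm]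
    have h3 : ∀ s : ZMod q, ∑ r : ZMod q, (ZMod.stdAddChar ((a:ZMod q) * (r-s)^2 + (h:ZMod q) * (r-s)) : ℂ) * ZMod.stdAddChar (s * ((a:ZMod q) * (2*(r-s))))
       = ∑ d : ZMod q, (ZMod.stdAddChar ((a:ZMod q) * d^2 + (h:ZMod q) * d) : ℂ) * ZMod.stdAddChar (s * ((a:ZMod q) * (2*d))) := by
      intro s
      exact Fintype.sum_equiv (Equiv.subRight s) _ _ (fun r => rfl)
    simp only [h3]
    rw [Finset.sum_comm]
    refine Finset.sum_congr rfl fun d _ => ?_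
    rw [← Finset.mul_sum, AddChar.sum_mulShift _ (ZMod.isPrimitive_stdAddChar q), ZMod.card]
    simp only [hu.mul_right_eq_zero]
    split_ifs <;> simp
  have h4 : Complex.normSq (gs q a h) = ‖((Complex.normSq (gs q a h) : ℝ) : ℂ)‖ := by
    rw [Complex.norm_real, Real.norm_of_nonneg (Complex.normSq_nonneg _)]
  rw [h4, h1]
  calc _ ≤ ∑ d : ZMod q, (if 2 * d = 0 then (q:ℝ) else 0) := by
        refine norm_sum_le_of_le _ fun d _ => ?_
        rw [norm_mul, ZMod.stdAddChar_apply, Circle.norm_coe, one_mul]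
        split_ifs <;> simp
    _ = ((Finset.univ.filter (fun d : ZMod q => 2 * d = 0)).card : ℝ) * q := by
        rw [← Finset.sum_filter, Finset.sum_const, nsmul_eq_mul]
    _ ≤ 2 * q := by
        gcongr
        exact_mod_cast card_two_torsion q

/-- Splitting the theta series into residue classes modulo `q` and applying the functional equation to each
class writes theta at `2a/q + w` as a sum of Gaussians centred at `h/q`, weighted by Gauss sums. -/
lemma theta_twist (q : ℕ) [NeZero q] (a : ℤ) (z w : ℂ) (hw : 0 < w.im) :
    HasSum (fun h : ℤ => 1 / (-Complex.I * (q^2*w))^(1/2:ℂ) * (gs q a h * Complex.exp (-π * Complex.I * (z - h/q)^2 / w)))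
      (jacobiTheta₂ z (2*a/q + w)) := by
  have hq : (q:ℂ) ≠ 0 := by exact_mod_cast NeZero.ne q
  have hw0 : w ≠ 0 := by rintro rfl; simp at hw
  have hqr : (0:ℝ) < q := by exact_mod_cast NeZero.pos q
  have him1 : 0 < (2*a/q + w : ℂ).im := by
    have : (2*a/q : ℂ) = ((2*a/q : ℝ) : ℂ) := by push_cast; rfl
    rw [Complex.add_im, this, Complex.ofReal_im, zero_add]; exact hw
  have him2 : 0 < (q^2*w : ℂ).im := by
    have : (q^2 : ℂ) = ((q^2 : ℝ) : ℂ) := by push_cast; rfl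
    rw [this, Complex.im_ofReal_mul]; positivity
  have him3 : 0 < (-1/(q^2*w) : ℂ).im := by
    rw [neg_div, one_div, Complex.neg_im, Complex.inv_im]
    have : 0 < Complex.normSq (q^2*w) := Complex.normSq_pos.2 (by positivity)
    rw [neg_div, neg_neg]; positivity
  -- value of each residue class
  let E : Fin q → ℂ := fun r => Complex.exp (2*π*Complex.I*(a*(r:ℕ)^2)/q) * (Complex.exp (2*π*Complex.I*(r:ℕ)*z + π*Complex.I*(r:ℕ)^2*w) *
    jacobiTheta₂ (q*z+(r:ℕ)*q*w) (q^2*w))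
  have hE : ∀ r : Fin q, HasSum (fun j : ℤ => jacobiTheta₂_term (j*q+(r:ℕ)) z (2*a/q+w)) (E r) := by
    intro r
    have h1 := ((hasSum_jacobiTheta₂_term (q*z+(r:ℕ)*q*w) him2).mul_left
      (Complex.exp (2*π*Complex.I*(r:ℕ)*z + π*Complex.I*(r:ℕ)^2*w))).mul_left (Complex.exp (2*π*Complex.I*(a*(r:ℕ)^2)/q))
    refine (hs_congr fun j => ?_).2 h1
    rw [jacobiTheta₂_term, jacobiTheta₂_term, ← Complex.exp_add, ← Complex.exp_add, Complex.exp_eq_exp_iff_exists_int]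
    refine ⟨a*(q*j^2+2*j*(r:ℕ)), ?_⟩
    push_cast
    field_simp
    ring
  have hsum : ∑ r, E r = jacobiTheta₂ z (2*a/q+w) := by
    have h1 := hasSum_jacobiTheta₂_term z him1
    have h2 := ((Int.divModEquiv q).symm.hasSum_iff (f := fun n => jacobiTheta₂_term n z (2*a/q+w))).2 h1
    have h3 := ((Equiv.prodComm (Fin q) ℤ).hasSum_iff).2 h2
    have h4 := h3.prod_fiberwise (g := E) (fun r => by
      refine (hs_congr fun j => ?_).2 (hE r)
      simp [Int.divModEquiv])
    exact (hasSum_fintype E).unique h4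
  rw [← hsum]
  have hE2 : ∀ r : Fin q, HasSum (fun h : ℤ => 1 / (-Complex.I * (q^2*w))^(1/2:ℂ) *
      (Complex.exp (2 * π * Complex.I * ((a * (r:ℕ)^2 + h * (r:ℕ) : ℤ):ℂ) / q) * Complex.exp (-π * Complex.I * (z - h/q)^2 / w))) (E r) := by
    intro r
    simp only [E]
    rw [jacobiTheta₂_functional_equation]
    have h1 := (hasSum_jacobiTheta₂_term ((q*z+(r:ℕ)*q*w)/(q^2*w)) him3).mul_left
      (Complex.exp (2*π*Complex.I*(a*(r:ℕ)^2)/q) * Complex.exp (2*π*Complex.I*(r:ℕ)*z + π*Complex.I*(r:ℕ)^2*w) *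
       (1 / (-Complex.I * (q^2*w))^(1/2:ℂ) * Complex.exp (-π*Complex.I*(q*z+(r:ℕ)*q*w)^2/(q^2*w))))
    rw [show ∀ A B C D F : ℂ, A * (B * (C * D * F)) = A * B * (C * D) * F by intros; ring]
    refine (hs_congr fun h => ?_).2 h1
    rw [jacobiTheta₂_term]
    rw [show ∀ A B C D F : ℂ, A * B * (D * C) * F = D * (A*B*C*F) by intros; ring, ← Complex.exp_add, ← Complex.exp_add, ← Complex.exp_add, ← Complex.exp_add]
    congr 2
    push_cast
    field_simp
    ring
  have h5 := hasSum_sum (s := Finset.univ) (fun r _ => hE2 r)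
  convert h5 using 2 with h
  rw [gs, Finset.sum_mul, Finset.mul_sum]

/-! ### Gaussian approximation of the theta function -/

/-- Gaussian sums over `ℤ` are bounded uniformly for `c ≥ 1/5`, and for `|s| ≤ 1/2` the terms with `h ≠ 0`
contribute only `O(exp(-πc/8))`. -/
lemma gsum_bound : ∃ K : ℝ, 1 ≤ K ∧ ∀ c : ℝ, 1/5 ≤ c → ∀ s : ℝ,
    Summable (fun h : ℤ => Real.exp (-π*c*((h:ℝ)-s)^2)) ∧ ∑' h : ℤ, Real.exp (-π*c*((h:ℝ)-s)^2) ≤ K ∧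
    (|s| ≤ 1/2 → ∑' h : ℤ, (if h = 0 then 0 else Real.exp (-π*c*((h:ℝ)-s)^2)) ≤ K * Real.exp (-π*c/8)) := by
  have hS : Summable (fun h : ℤ => Real.exp (-π*(1/40)*(h:ℝ)^2)) := by
    have h0 := (hasSum_jacobiTheta₂_term 0 (τ := ((1/40:ℝ):ℂ) * Complex.I) (by simp)).summable.norm
    refine h0.congr fun h => ?_
    rw [norm_jacobiTheta₂_term]
    congr 1
    simp
    ring
  have hpi := Real.pi_pos
  set K := ∑' h : ℤ, Real.exp (-π*(1/40)*(h:ℝ)^2) with hK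
  have hK1 : 1 ≤ K := by
    refine le_trans ?_ (hS.sum_le_tsum {0} (fun i _ => (Real.exp_pos _).le))
    simp
  have hh : ∀ (s:ℝ) (h:ℤ), |s| ≤ 1/2 → (h:ℝ)^2/4 ≤ ((h:ℝ)-s)^2 := by
    intro s h hs
    rcases eq_or_ne h 0 with rfl | h0
    · simp; positivity
    · have h1 : (1:ℝ) ≤ |(h:ℝ)| := by exact_mod_cast Int.one_le_abs h0
      have h2 : |(h:ℝ)|/2 ≤ |(h:ℝ) - s| := by
        have := abs_sub_abs_le_abs_sub (h:ℝ) s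
        linarith
      calc (h:ℝ)^2/4 = (|(h:ℝ)|/2)^2 := by rw [div_pow, sq_abs]; norm_num
        _ ≤ |(h:ℝ)-s|^2 := by gcongr
        _ = _ := sq_abs _
  have hb : ∀ (c s:ℝ) (h:ℤ), 1/5 ≤ c → |s| ≤ 1/2 → Real.exp (-π*c*((h:ℝ)-s)^2) ≤ Real.exp (-π*(1/40)*(h:ℝ)^2) := by
    intro c s h hc hs
    apply Real.exp_le_exp.2
    have e1 := hh s h hs
    have e2 : (1/40)*(h:ℝ)^2 ≤ c*((h:ℝ)-s)^2 := by
      calc (1/40)*(h:ℝ)^2 ≤ (1/5)*((h:ℝ)^2/4) := by nlinarith [sq_nonneg (h:ℝ)]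
        _ ≤ _ := by gcongr
    nlinarith
  refine ⟨K, hK1, fun c hc s => ?_⟩
  have hshift : ∀ h : ℤ, Real.exp (-π*c*((h:ℝ)-s)^2) = Real.exp (-π*c*(((h - round s : ℤ):ℝ)-(s-round s))^2) := by
    intro h; push_cast; ring_nf
  have hr : |s - round s| ≤ 1/2 := abs_sub_round s
  have hs1 : Summable (fun h : ℤ => Real.exp (-π*c*((h:ℝ)-(s-round s))^2)) :=
    Summable.of_nonneg_of_le (fun _ => (Real.exp_pos _).le) (fun h => hb c _ h hc hr) hS
  have hs2 : Summable (fun h : ℤ => Real.exp (-π*c*((h:ℝ)-s)^2)) := by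
    rw [funext hshift]
    exact ((Equiv.subRight (round s)).summable_iff (f := fun h : ℤ => Real.exp (-π*c*((h:ℝ)-(s-round s))^2))).2 hs1
  refine ⟨hs2, ?_, fun hs => ?_⟩
  · rw [funext hshift]
    refine ((Equiv.subRight (round s)).tsum_eq (f := fun h : ℤ => Real.exp (-π*c*((h:ℝ)-(s-round s))^2))).trans_le ?_
    exact hs1.tsum_le_tsum (fun h => hb c _ h hc hr) hS
  · rw [hK, ← tsum_mul_right]
    refine Summable.tsum_le_tsum (fun h => ?_) ?_ (hS.mul_right _)
    · split_ifs with h0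
      · positivity
      · rw [← Real.exp_add]
        apply Real.exp_le_exp.2
        have e1 := hh s h hs
        have h1 : (1:ℝ) ≤ (h:ℝ)^2 := by
          have : 1 ≤ h^2 := by have := sq_pos_of_ne_zero h0; omega
          exact_mod_cast this
        have e2 : c/8 + (1/40)*(h:ℝ)^2 ≤ c*((h:ℝ)-s)^2 := by
          calc c/8 + (1/40)*(h:ℝ)^2 ≤ c*((h:ℝ)^2/4) := by nlinarith
            _ ≤ _ := by gcongr
        nlinarith
    · refine Summable.of_nonneg_of_le (fun h => ?_) (fun h => ?_) hs2
      · split_ifs <;> positivity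
      · split_ifs
        · positivity
        · exact le_rfl

lemma norm_gexp (q : ℕ) [NeZero q] (ζ : ℝ) (h : ℤ) (w : ℂ) (hw : 0 < w.im) :
    ‖Complex.exp (-π * Complex.I * ((ζ:ℂ) - h/q)^2 / w)‖ = Real.exp (-π*(w.im/(q^2*‖w‖^2))*((h:ℝ)-q*ζ)^2) := by
  rw [Complex.norm_exp]
  congr 1
  have hq : (q:ℝ) ≠ 0 := by exact_mod_cast NeZero.ne q
  have hw0 : w ≠ 0 := by rintro rfl; simp at hw
  have hn : ‖w‖ ≠ 0 := by simpa using hw0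
  have e : (-π * Complex.I * ((ζ:ℂ) - h/q)^2 / w) = ((-π * (ζ-h/q)^2 : ℝ) : ℂ) * (Complex.I * w⁻¹) := by
    push_cast; field_simp
  rw [e, Complex.re_ofReal_mul, Complex.I_mul_re, Complex.inv_im, Complex.normSq_eq_norm_sq]
  field_simp
  ring

/-- Theta on the line `Im τ = 1/m`. Here `a/q` is a Dirichlet approximation of `x/2` with `q ≤ √m`, `w` is the
remainder `x + i/m - 2a/q`, `A = (q|w|)^{-1/2}` is the size of theta and `c = Im w/(q²|w|²)` measures the
width of the Gaussians. For `q|ζ| ≤ 1/2` the central Gaussian `T exp(-πiζ²/w)` dominates, with an error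
decaying in `c`. -/
lemma theta_1d : ∃ K : ℝ, 1 ≤ K ∧ ∀ m : ℕ, 1 ≤ m → ∀ x : ℝ, ∃ (A c : ℝ) (q : ℕ) (w T : ℂ), 1 ≤ q ∧ 0 < A ∧ 1/5 ≤ c ∧
    A^4 = m*c ∧ A^2 ≤ m/q ∧ ∀ ζ : ℝ, ‖jacobiTheta₂ ζ (x+Complex.I/m)‖ ≤ K*A ∧
      ‖T * Complex.exp (-π*Complex.I*ζ^2/w)‖ ≤ K*A ∧
      (q*|ζ| ≤ 1/2 → ‖jacobiTheta₂ ζ (x+Complex.I/m) - T * Complex.exp (-π*Complex.I*ζ^2/w)‖ ≤ K*A*Real.exp (-π*c/8)) := by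
  obtain ⟨K, hK1, hK⟩ := gsum_bound
  have h2 : 1 ≤ √2 := by rw [Real.one_le_sqrt]; norm_num
  refine ⟨√2*K, by nlinarith, fun m hm x => ?_⟩
  have hm' : (1:ℝ) ≤ m := by exact_mod_cast hm
  have hQ : 0 < Nat.sqrt m := Nat.sqrt_pos.2 hm
  obtain ⟨ρ, hρ, hden⟩ := Real.exists_rat_abs_sub_le_and_den_le (x/2) hQ
  set q := ρ.den with hq
  have hqpos : 0 < q := ρ.den_pos
  have : NeZero q := ⟨hqpos.ne'⟩
  have hqr : (0:ℝ) < q := by exact_mod_cast hqpos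
  set β : ℝ := x - 2*ρ.num/q with hβ
  set w : ℂ := β + Complex.I/m with hwdef
  have him : w.im = 1/m := by
    rw [hwdef, Complex.add_im, Complex.ofReal_im, zero_add, Complex.div_natCast_im, Complex.I_im]
  have hre : w.re = β := by
    rw [hwdef, Complex.add_re, Complex.ofReal_re, Complex.div_natCast_re, Complex.I_re]; simp
  have hwim : 0 < w.im := by rw [him]; positivity
  have hw0 : w ≠ 0 := by intro h; rw [h] at hwim; simp at hwim
  have hwn : 0 < ‖w‖ := norm_pos_iff.2 hw0
  have hwsq : ‖w‖^2 = β^2 + (1/m)^2 := by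
    rw [← Complex.normSq_eq_norm_sq, Complex.normSq_apply, hre, him]; ring
  have hτ : (x:ℂ) + Complex.I/m = 2*ρ.num/q + w := by
    rw [hwdef, hβ]; push_cast; ring
  have hcop : IsCoprime ρ.num (q:ℤ) := by
    rw [Int.isCoprime_iff_nat_coprime]; exact ρ.reduced
  -- size of `q‖w‖`
  have hsq1 : (m:ℝ) ≤ ((Nat.sqrt m : ℝ)+1)^2 := by
    have : m < (Nat.sqrt m + 1)*(Nat.sqrt m+1) := Nat.lt_succ_sqrt m
    have : (m:ℝ) ≤ ((Nat.sqrt m : ℝ)+1)*((Nat.sqrt m : ℝ)+1) := by exact_mod_cast this.le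
    nlinarith
  have hq2 : (q:ℝ)^2 ≤ m := by
    have h1 : q*q ≤ m := (Nat.mul_le_mul hden hden).trans (Nat.sqrt_le m)
    have : (q:ℝ)*q ≤ m := by exact_mod_cast h1
    nlinarith
  have hβq : |q*β| ≤ 2/((Nat.sqrt m : ℝ)+1) := by
    have e : q*β = 2*q*(x/2-(ρ:ℝ)) := by
      rw [hβ, Rat.cast_def, ← hq]; field_simp
    rw [e, abs_mul, abs_of_pos (by positivity : (0:ℝ) < 2*q)]
    calc 2*q*|x/2-(ρ:ℝ)| ≤ 2*q*(1/(((Nat.sqrt m : ℝ)+1)*q)) := by gcongr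
      _ = _ := by field_simp
  have hβ2 : (q*β)^2 ≤ 4/m := by
    rw [← sq_abs]
    calc |q*β|^2 ≤ (2/((Nat.sqrt m : ℝ)+1))^2 := by gcongr
      _ = 4/((Nat.sqrt m : ℝ)+1)^2 := by rw [div_pow]; norm_num
      _ ≤ 4/m := by gcongr
  have hqw : q^2*‖w‖^2 ≤ 5/m := by
    rw [hwsq]
    have : (q:ℝ)^2*(1/(m:ℝ))^2 ≤ 1/(m:ℝ) := by
      calc (q:ℝ)^2*(1/(m:ℝ))^2 ≤ (m:ℝ)*(1/(m:ℝ))^2 := by gcongr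
        _ = 1/(m:ℝ) := by field_simp
    calc _ = (q*β)^2 + (q:ℝ)^2*(1/(m:ℝ))^2 := by ring
      _ ≤ 4/(m:ℝ)+1/(m:ℝ) := by gcongr
      _ = 5/(m:ℝ) := by ring
  set c := w.im/(q^2*‖w‖^2) with hc
  have hc5 : 1/5 ≤ c := by
    rw [hc, him, le_div_iff₀ (by positivity)]
    calc _ ≤ 1/5*(5/(m:ℝ)) := by gcongr
      _ = 1/(m:ℝ) := by ring
  set A := (√(q*‖w‖))⁻¹ with hA
  have hApos : 0 < A := by positivity
  have hA2 : A^2 = (q*‖w‖)⁻¹ := by rw [hA, inv_pow, Real.sq_sqrt (by positivity)]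
  set T0 : ℂ := 1 / (-Complex.I * (q^2*w))^(1/2:ℂ) with hT0
  have hT0n : ‖T0‖ * √q = A := by
    have hne : -Complex.I * (q^2*w) ≠ 0 := by simp [hw0, hqpos.ne']
    rw [hT0, norm_div, norm_one, show (1/2:ℂ) = ((1/2:ℝ):ℂ) by push_cast; rfl,
      Complex.norm_cpow_of_ne_zero hne, Complex.ofReal_im, Complex.ofReal_re]
    simp only [mul_zero, Real.exp_zero, div_one]
    rw [← Real.sqrt_eq_rpow, norm_mul, norm_neg, Complex.norm_I, one_mul, norm_mul, norm_pow, Complex.norm_natCast, hA,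
      show (q:ℝ)^2*‖w‖ = q*(q*‖w‖) by ring, Real.sqrt_mul hqr.le]
    have : √(q:ℝ) ≠ 0 := by positivity
    field_simp
  have hterm : ∀ (ζ : ℝ) (h : ℤ), ‖T0 * (gs q ρ.num h * Complex.exp (-π * Complex.I * ((ζ:ℂ) - h/q)^2 / w))‖ ≤
      √2 * A * Real.exp (-π*c*((h:ℝ)-q*ζ)^2) := by
    intro ζ h
    rw [norm_mul, norm_mul, norm_gexp q ζ h w hwim, ← hT0n]
    calc _ ≤ ‖T0‖ * ((√2 * √q) * Real.exp (-π*c*((h:ℝ)-q*ζ)^2)) := by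
          gcongr
          exact gs_norm q _ _ hcop
      _ = _ := by ring
  refine ⟨A, c, q, w, T0 * gs q ρ.num 0, hqpos, hApos, hc5, ?_, ?_, fun ζ => ?_⟩
  · rw [show A^4 = (A^2)^2 by ring, hA2, hc, him]
    field_simp
  · rw [hA2]
    have : 1/(m:ℝ) ≤ ‖w‖ := by
      rw [← him]; exact (le_abs_self _).trans (Complex.abs_im_le_norm w)
    rw [show (m:ℝ)/q = ((q:ℝ)*(1/(m:ℝ)))⁻¹ by field_simp]
    gcongr
  · obtain ⟨hs1, hs2, hs3⟩ := hK c hc5 (q*ζ)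
    have hsum := theta_twist q ρ.num (ζ:ℂ) w hwim
    rw [← hτ] at hsum
    refine ⟨?_, ?_, fun hζ => ?_⟩
    · rw [← hsum.tsum_eq]
      calc _ ≤ ∑' h : ℤ, √2 * A * Real.exp (-π*c*((h:ℝ)-q*ζ)^2) :=
            tsum_of_norm_bounded (hs1.mul_left (√2*A)).hasSum (hterm ζ)
        _ = √2*A*∑' h : ℤ, Real.exp (-π*c*((h:ℝ)-q*ζ)^2) := tsum_mul_left
        _ ≤ √2*A*K := by gcongr
        _ = _ := by ring
    · have := hterm ζ 0
      simp only [Int.cast_zero, zero_div, sub_zero] at this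
      rw [mul_assoc]
      refine this.trans ?_
      have : Real.exp (-π*c*(0-q*ζ)^2) ≤ K := by
        refine le_trans ?_ hK1
        rw [Real.exp_le_one_iff]
        have : 0 ≤ π*c*(0-q*ζ)^2 := by have := Real.pi_pos; positivity
        linarith
      calc _ ≤ √2*A*K := by gcongr
        _ = _ := by ring
    · have hsum' := hsum.sub (hasSum_ite_eq (0:ℤ) (T0 * gs q ρ.num 0 * Complex.exp (-π*Complex.I*ζ^2/w)))
      rw [← hsum'.tsum_eq]
      have hz : |q*ζ| ≤ 1/2 := by rw [abs_mul, abs_of_pos hqr]; exact hζ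
      have hsI : Summable (fun h : ℤ => (if h = 0 then 0 else Real.exp (-π*c*((h:ℝ)-q*ζ)^2))) := by
        refine Summable.of_nonneg_of_le (fun h => ?_) (fun h => ?_) hs1
        · split_ifs <;> positivity
        · split_ifs
          · positivity
          · exact le_rfl
      calc _ ≤ ∑' h : ℤ, √2 * A * (if h = 0 then 0 else Real.exp (-π*c*((h:ℝ)-q*ζ)^2)) := by
            refine tsum_of_norm_bounded (hsI.mul_left (√2*A)).hasSum (fun h => ?_)
            split_ifs with h0
            · subst h0
              simp only [Int.cast_zero, zero_div, sub_zero, mul_zero]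
              rw [mul_assoc T0, sub_self, norm_zero]
            · rw [sub_zero]; exact hterm ζ h
        _ = √2*A*∑' h : ℤ, (if h = 0 then 0 else Real.exp (-π*c*((h:ℝ)-q*ζ)^2)) := tsum_mul_left
        _ ≤ √2*A*(K*Real.exp (-π*c/8)) := by gcongr; exact hs3 hz
        _ = _ := by ring

/-! ### Products of theta functions at frequencies of equal length -/

/-- Telescoping estimate for the difference of two products. -/
lemma prod_diff (n : ℕ) (B δ : ℝ) (hB : 0 ≤ B) (hδ : 0 ≤ δ) (x y : Fin n → ℂ) (hx : ∀ i, ‖x i‖ ≤ B) (hy : ∀ i, ‖y i‖ ≤ B)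
    (h : ∀ i, ‖x i - y i‖ ≤ B * δ) : ‖∏ i, x i - ∏ i, y i‖ ≤ n * B^n * δ := by
  induction n with
  | zero => simp
  | succ n ih =>
    rw [Fin.prod_univ_succ, Fin.prod_univ_succ]
    have e : x 0 * ∏ i : Fin n, x i.succ - y 0 * ∏ i : Fin n, y i.succ
      = (x 0 - y 0) * ∏ i : Fin n, x i.succ + y 0 * (∏ i : Fin n, x i.succ - ∏ i : Fin n, y i.succ) := by ring
    rw [e]
    have hp : ‖∏ i : Fin n, x i.succ‖ ≤ B^n := by
      rw [norm_prod]
      calc _ ≤ ∏ i : Fin n, B := Finset.prod_le_prod (fun _ _ => norm_nonneg _) (fun i _ => hx i.succ)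
        _ = B^n := by simp
    calc _ ≤ ‖x 0 - y 0‖ * ‖∏ i : Fin n, x i.succ‖ + ‖y 0‖ * ‖∏ i : Fin n, x i.succ - ∏ i : Fin n, y i.succ‖ := by
          refine (norm_add_le _ _).trans ?_
          rw [norm_mul, norm_mul]
      _ ≤ (B*δ) * B^n + B * (n * B^n * δ) := by
          gcongr
          · exact h 0
          · exact hy 0
          · exact ih _ _ (fun i => hx i.succ) (fun i => hy i.succ) (fun i => h i.succ)
      _ = _ := by push_cast; ring

/-- If `q r ≤ 1/2`, both products are close to the same `T^n exp(-πi r²/w)`. Otherwise the trivial bound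
`(KA)^n` suffices, because `A² ≤ m/q < 2mr`. -/
theorem theta_diff (n : ℕ) : ∃ C : ℝ, 0 < C ∧ ∀ m : ℕ, 1 ≤ m → ∀ (x r : ℝ), 0 ≤ r → ∀ ζ ζ' : Fin n → ℝ,
    ∑ i, ζ i ^ 2 = r^2 → ∑ i, ζ' i ^ 2 = r^2 →
    ‖∏ i, jacobiTheta₂ (ζ i) (x+Complex.I/m) - ∏ i, jacobiTheta₂ (ζ' i) (x+Complex.I/m)‖ ≤
      C * ((m:ℝ)^(1/4:ℝ))^n * (1+√m*r)^n := by
  obtain ⟨K, hK1, hK⟩ := theta_1d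
  set M : ℝ := (8/π)^n * n.factorial * Real.exp (π/8) with hM
  have hpi := Real.pi_pos
  have hMpos : 0 < M := by positivity
  refine ⟨2*(K*√2)^n + 2*(n*K^n*M), by positivity, fun m hm x r hr ζ ζ' hζ hζ' => ?_⟩
  obtain ⟨A, c, q, w, T, hq, hA, hc, hA4, hA2, hb⟩ := hK m hm x
  have hq' : (0:ℝ) < q := by exact_mod_cast hq
  have hm' : (1:ℝ) ≤ m := by exact_mod_cast hm
  have hm0 : (0:ℝ) ≤ m := by linarith
  set u : ℝ := (m:ℝ)^(1/4:ℝ) with hu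
  have hu0 : 0 < u := by positivity
  have hu4 : u^4 = m := by
    rw [hu, ← Real.rpow_natCast, ← Real.rpow_mul hm0]; norm_num
  have hu2 : u^2 = √m := by
    rw [eq_comm, Real.sqrt_eq_iff_mul_self_eq hm0 (by positivity)]; rw [← hu4]; ring
  set V := 1+√m*r with hV
  have hV1 : 1 ≤ V := by have : 0 ≤ √m*r := by positivity
                         linarith
  have hcoord : ∀ ζ : Fin n → ℝ, ∑ i, ζ i ^ 2 = r^2 → ∀ i, |ζ i| ≤ r := by
    intro ζ hζ i
    apply abs_le_of_sq_le_sq _ hr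
    rw [← hζ]
    exact Finset.single_le_sum (f := fun i => ζ i ^2) (fun j _ => sq_nonneg _) (Finset.mem_univ i)
  have hprod : ∀ ζ : Fin n → ℝ, ‖∏ i, jacobiTheta₂ (ζ i) (x+Complex.I/m)‖ ≤ (K*A)^n := by
    intro ζ
    rw [norm_prod]
    calc _ ≤ ∏ i : Fin n, (K*A) := Finset.prod_le_prod (fun _ _ => norm_nonneg _) (fun i _ => (hb _).1)
      _ = _ := by simp
  by_cases hcase : q*r ≤ 1/2
  · have key : ∀ ζ : Fin n → ℝ, ∑ i, ζ i ^ 2 = r^2 →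
      ‖∏ i, jacobiTheta₂ (ζ i) (x+Complex.I/m) - T^n * Complex.exp (-π*Complex.I*(r:ℂ)^2/w)‖ ≤ n*(K*A)^n*Real.exp (-π*c/8) := by
      intro ζ hζ
      have e : T^n * Complex.exp (-π*Complex.I*(r:ℂ)^2/w) = ∏ i, (T * Complex.exp (-π*Complex.I*(ζ i:ℂ)^2/w)) := by
        rw [Finset.prod_mul_distrib, Finset.prod_const, Finset.card_univ, Fintype.card_fin, ← Complex.exp_sum]
        congr 2
        have : (r:ℂ)^2 = ∑ i, (ζ i:ℂ)^2 := by exact_mod_cast hζ.symm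
        rw [this, Finset.mul_sum, Finset.sum_div]
      rw [e]
      refine prod_diff n (K*A) _ (by positivity) (by positivity) _ _ (fun i => (hb _).1) (fun i => (hb _).2.1) (fun i => (hb _).2.2 ?_)
      refine le_trans ?_ hcase
      gcongr
      exact hcoord ζ hζ i
    have hAle : A ≤ u*(1+c) := by
      refine le_of_pow_le_pow_left₀ (n := 4) (by norm_num) (by positivity) ?_
      rw [hA4, mul_pow, hu4]
      gcongr
      nlinarith [sq_nonneg c, sq_nonneg (c*c), mul_pos (show 0 < c by linarith) (show 0 < c by linarith), pow_pos (show 0 < c by linarith) 3]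
    have hexp : (1+c)^n * Real.exp (-π*c/8) ≤ M := by
      have h1 := Real.pow_div_factorial_le_exp (π/8*(1+c)) (by positivity) n
      rw [div_le_iff₀ (by positivity), mul_pow] at h1
      have h2 : Real.exp (π/8*(1+c)) * Real.exp (-π*c/8) = Real.exp (π/8) := by
        rw [← Real.exp_add]; congr 1; ring
      have h3 : (8/π)^n * (π/8)^n = 1 := by
        rw [← mul_pow, show 8/π*(π/8) = 1 by field_simp, one_pow]
      calc (1+c)^n * Real.exp (-π*c/8) = (8/π)^n * ((π/8)^n*(1+c)^n) * Real.exp (-π*c/8) := by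
            rw [← mul_assoc, h3, one_mul]
        _ ≤ (8/π)^n * (Real.exp (π/8*(1+c)) * n.factorial) * Real.exp (-π*c/8) := by gcongr
        _ = (8/π)^n * n.factorial * (Real.exp (π/8*(1+c)) * Real.exp (-π*c/8)) := by ring
        _ = M := by rw [h2]
    have hfin : n*(K*A)^n*Real.exp (-π*c/8) ≤ n*K^n*M*u^n := by
      calc n*(K*A)^n*Real.exp (-π*c/8) ≤ n*(K*(u*(1+c)))^n*Real.exp (-π*c/8) := by gcongr
        _ = n*K^n*u^n*((1+c)^n * Real.exp (-π*c/8)) := by rw [mul_pow, mul_pow]; ring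
        _ ≤ n*K^n*u^n*M := by gcongr
        _ = _ := by ring
    have hVn : 1 ≤ V^n := one_le_pow₀ hV1
    calc _ ≤ ‖∏ i, jacobiTheta₂ (ζ i) (x+Complex.I/m) - T^n * Complex.exp (-π*Complex.I*(r:ℂ)^2/w)‖ +
          ‖∏ i, jacobiTheta₂ (ζ' i) (x+Complex.I/m) - T^n * Complex.exp (-π*Complex.I*(r:ℂ)^2/w)‖ := by
          rw [norm_sub_rev (∏ i, jacobiTheta₂ (ζ' i) (x+Complex.I/m))]
          exact norm_sub_le_norm_sub_add_norm_sub _ _ _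
      _ ≤ n*K^n*M*u^n + n*K^n*M*u^n := add_le_add ((key ζ hζ).trans hfin) ((key ζ' hζ').trans hfin)
      _ = (0 + 2*(n*K^n*M))*u^n*1 := by ring
      _ ≤ _ := by gcongr; positivity
  · push Not at hcase
    have hr0 : 1/q < 2*r := by rw [div_lt_iff₀ hq']; linarith
    have hAle : A ≤ √2*(u*V) := by
      refine le_of_pow_le_pow_left₀ (n := 2) (by norm_num) (by positivity) ?_
      rw [mul_pow, mul_pow, hu2, Real.sq_sqrt (by norm_num)]
      calc A^2 ≤ m/q := hA2
        _ = m*(1/q) := by ring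
        _ ≤ m*(2*r) := by gcongr
        _ = 2*(√m*(√m*r)) := by rw [← mul_assoc √(m:ℝ), Real.mul_self_sqrt hm0]; ring
        _ ≤ 2*(√m*V^2) := by
          gcongr
          nlinarith
    have hfin : (K*A)^n ≤ (K*√2)^n*u^n*V^n := by
      calc (K*A)^n ≤ (K*(√2*(u*V)))^n := by gcongr
        _ = _ := by rw [← mul_pow, ← mul_pow]; ring
    calc _ ≤ (K*A)^n + (K*A)^n := (norm_sub_le _ _).trans (add_le_add (hprod ζ) (hprod ζ'))
      _ ≤ (K*√2)^n*u^n*V^n + (K*√2)^n*u^n*V^n := add_le_add hfin hfin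
      _ = (2*(K*√2)^n + 0)*u^n*V^n := by ring
      _ ≤ _ := by gcongr; positivity

/-! ### Exponential sums over integer points of given length -/

/-- Product of absolutely convergent series as a series over integer vectors. -/
lemma pi_hasSum (n : ℕ) (f : Fin n → ℤ → ℂ) (hf : ∀ i, Summable (fun k => ‖f i k‖)) :
    Summable (fun k : Fin n → ℤ => ‖∏ i, f i (k i)‖) ∧
    HasSum (fun k : Fin n → ℤ => ∏ i, f i (k i)) (∏ i, ∑' k, f i k) := by
  induction n with
  | zero =>
    refine ⟨Summable.of_finite, ?_⟩
    simpa using hasSum_unique (fun k : Fin 0 → ℤ => ∏ i, f i (k i))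
  | succ n ih =>
    obtain ⟨h1, h2⟩ := ih (fun i => f i.succ) (fun i => hf i.succ)
    let e : ℤ × (Fin n → ℤ) ≃ (Fin (n+1) → ℤ) := Fin.consEquiv (fun _ => ℤ)
    have hs := summable_mul_of_summable_norm (hf 0) h1
    have hsn := (hf 0).mul_norm h1
    have he : ∀ p : ℤ × (Fin n → ℤ), ∏ i, f i (e p i) = f 0 p.1 * ∏ i : Fin n, f i.succ (p.2 i) := by
      rintro ⟨a, k⟩
      rw [Fin.prod_univ_succ]
      simp [e, Fin.consEquiv]
    constructor
    · rw [← e.summable_iff]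
      refine hsn.congr fun p => ?_
      simp only [Function.comp]
      rw [he]
    · rw [← e.hasSum_iff, Fin.prod_univ_succ]
      have := HasSum.mul (hf 0).of_norm.hasSum h2 hs
      exact (hs_congr fun p => he p).2 this

/-- The exponential sum `∑ exp(2πi ζ·k)` over integer points `k` with `|k|² = m`. -/
def MM (n m : ℕ) (ζ : Fin n → ℝ) : ℂ :=
  ∑ k ∈ (SS_finite n m).toFinset, Complex.exp (2*π*Complex.I*((∑ i, ζ i * k i : ℝ):ℂ))

/-- The product of theta functions expanded as a series over `ℤⁿ`. -/
lemma theta_prod (n m : ℕ) (hm : 1 ≤ m) (ζ : Fin n → ℝ) (x : ℝ) :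
    Summable (fun k : Fin n → ℤ => Real.exp (-π*((∑ i, k i^2 : ℤ):ℝ)/m)) ∧
    HasSum (fun k : Fin n → ℤ => Complex.exp (2*π*Complex.I*((∑ i, ζ i * k i : ℝ):ℂ)) *
      Complex.exp (π*Complex.I*((∑ i, k i^2 : ℤ):ℂ)*(x+Complex.I/m))) (∏ i, jacobiTheta₂ (ζ i) (x+Complex.I/m)) := by
  have hm' : (0:ℝ) < m := by exact_mod_cast hm
  have him : ((x:ℂ)+Complex.I/m).im = 1/m := by
    rw [Complex.add_im, Complex.ofReal_im, zero_add, Complex.div_natCast_im, Complex.I_im]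
  have h := pi_hasSum n (fun i k => jacobiTheta₂_term k (ζ i) (x+Complex.I/m))
    (fun i => (hasSum_jacobiTheta₂_term (ζ i) (by rw [him]; positivity)).summable.norm)
  constructor
  · refine h.1.congr fun k => ?_
    rw [norm_prod]
    simp only [norm_jacobiTheta₂_term, Complex.ofReal_im, mul_zero, sub_zero, him]
    rw [← Real.exp_sum]
    congr 1
    push_cast
    rw [Finset.mul_sum, Finset.sum_div]
    exact Finset.sum_congr rfl fun i _ => by ring
  · refine (hs_congr fun k => ?_).2 h.2
    simp only [jacobiTheta₂_term]
    rw [← Complex.exp_sum, ← Complex.exp_add]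
    congr 1
    rw [Finset.sum_add_distrib]
    push_cast
    rw [Finset.mul_sum, Finset.mul_sum, Finset.sum_mul]
    congr 1
    exact Finset.sum_congr rfl fun i _ => by ring

lemma int_exp (N : ℤ) : ∫ x in (0:ℝ)..2, Complex.exp (π*Complex.I*N*x) = if N = 0 then 2 else 0 := by
  split_ifs with h
  · simp [h]
  · have hc : (π*Complex.I*N : ℂ) ≠ 0 := by
      simp [Real.pi_ne_zero, h]
    rw [integral_exp_mul_complex hc]
    have : Complex.exp (π*Complex.I*N*(2:ℝ)) = 1 := by
      rw [Complex.exp_eq_one_iff]; exact ⟨N, by push_cast; ring⟩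
    rw [this]; simp

/-- Integrating over a period of length `2` on the line `Im τ = 1/m` extracts the points with `|k|² = m`. -/
lemma MM_integral (n m : ℕ) (hm : 1 ≤ m) (ζ ζ' : Fin n → ℝ) :
    2 * (MM n m ζ - MM n m ζ') = ∫ x in (0:ℝ)..2,
      (∏ i, jacobiTheta₂ (ζ i) (x+Complex.I/m) - ∏ i, jacobiTheta₂ (ζ' i) (x+Complex.I/m)) *
        Complex.exp (-π*Complex.I*m*(x+Complex.I/m)) := by
  have hm' : (0:ℝ) < m := by exact_mod_cast hm
  have hmc : (m:ℂ) ≠ 0 := by exact_mod_cast hm'.ne'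
  set D : (Fin n → ℤ) → ℂ := fun k => Complex.exp (2*π*Complex.I*((∑ i, ζ i * k i : ℝ):ℂ)) - Complex.exp (2*π*Complex.I*((∑ i, ζ' i * k i : ℝ):ℂ)) with hD
  have hDn : ∀ k, ‖D k‖ ≤ 2 := by
    intro k
    refine (norm_sub_le _ _).trans ?_
    have : ∀ t : ℝ, ‖Complex.exp (2*π*Complex.I*(t:ℂ))‖ = 1 := by
      intro t
      rw [show (2*π*Complex.I*(t:ℂ)) = ((2*π*t:ℝ):ℂ)*Complex.I by push_cast; ring, Complex.norm_exp_ofReal_mul_I]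
    rw [this, this]; norm_num
  have hexpE : ∀ x : ℝ, Complex.exp (-π*Complex.I*m*(x+Complex.I/m)) = Real.exp π * Complex.exp (-π*Complex.I*m*x) := by
    intro x
    rw [Complex.ofReal_exp, ← Complex.exp_add]
    congr 1
    field_simp
    ring_nf
    simp [Complex.I_sq]
    ring
  have hterm : ∀ (k : Fin n → ℤ) (x : ℝ), D k * Complex.exp (π*Complex.I*((∑ i, k i^2 : ℤ):ℂ)*(x+Complex.I/m)) * Complex.exp (-π*Complex.I*m*(x+Complex.I/m))
     = (D k * Complex.exp (π - π*((∑ i, k i^2 : ℤ):ℂ)/m)) * Complex.exp (π*Complex.I*((∑ i, k i^2 - m : ℤ):ℂ)*x) := by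
    intro k x
    rw [mul_assoc (D k), ← Complex.exp_add, mul_assoc (D k), ← Complex.exp_add]
    congr 2
    push_cast
    field_simp
    ring_nf
    simp only [Complex.I_sq]
    ring
  have key := intervalIntegral.hasSum_integral_of_dominated_convergence (μ := volume) (a := (0:ℝ)) (b := 2)
    (F := fun k x => D k * Complex.exp (π*Complex.I*((∑ i, k i^2 : ℤ):ℂ)*(x+Complex.I/m)) * Complex.exp (-π*Complex.I*m*(x+Complex.I/m)))
    (f := fun x => (∏ i, jacobiTheta₂ (ζ i) (x+Complex.I/m) - ∏ i, jacobiTheta₂ (ζ' i) (x+Complex.I/m)) *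
        Complex.exp (-π*Complex.I*m*(x+Complex.I/m)))
    (fun k _ => 2 * Real.exp (-π*((∑ i, k i^2 : ℤ):ℝ)/m) * Real.exp π)
    (fun k => (Continuous.aestronglyMeasurable (by fun_prop)))
    (fun k => ae_of_all _ fun x _ => by
      rw [norm_mul, norm_mul, hexpE, norm_mul, Complex.norm_real, Real.norm_of_nonneg (Real.exp_pos _).le,
        show (-π*Complex.I*m*x : ℂ) = ((-π*m*x:ℝ):ℂ)*Complex.I by push_cast; ring, Complex.norm_exp_ofReal_mul_I, mul_one,
        Complex.norm_exp]
      gcongr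
      · exact hDn k
      · apply le_of_eq
        rw [show (π*Complex.I*((∑ i, k i^2 : ℤ):ℂ)*(x+Complex.I/m)) = ((π*((∑ i, k i^2 : ℤ):ℝ) : ℝ):ℂ)*(Complex.I*(x+Complex.I/m)) by push_cast; ring,
          Complex.re_ofReal_mul, Complex.I_mul_re, Complex.add_im, Complex.ofReal_im, zero_add, Complex.div_natCast_im, Complex.I_im]
        ring)
    (ae_of_all _ fun x _ => (((theta_prod n m hm ζ x).1.mul_left 2).mul_right _))
    (by simp)
    (ae_of_all _ fun x _ => by
      have := ((theta_prod n m hm ζ x).2.sub (theta_prod n m hm ζ' x).2).mul_right (Complex.exp (-π*Complex.I*m*(x+Complex.I/m)))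
      refine (hs_congr fun k => ?_).2 this
      simp only [hD]
      ring)
  rw [← key.tsum_eq]
  simp only [hterm, intervalIntegral.integral_const_mul, int_exp]
  rw [tsum_eq_sum (s := (SS_finite n m).toFinset)]
  · rw [MM, MM, ← Finset.sum_sub_distrib, Finset.mul_sum]
    refine Finset.sum_congr rfl fun k hk => ?_
    have hk : ∑ i, k i ^2 = (m:ℤ) := by simpa [SS] using hk
    rw [hk]
    simp only [sub_self, if_true, Int.cast_natCast]
    rw [mul_div_assoc, div_self hmc, mul_one, sub_self, Complex.exp_zero]
    simp only [hD]; ring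
  · intro k hk
    have hk : ¬ ∑ i, k i ^2 = (m:ℤ) := by simpa [SS] using hk
    rw [if_neg (by rwa [sub_eq_zero]), mul_zero]

/-- The exponential sum over points of squared length `m` is nearly constant on spheres of frequencies. -/
theorem MM_diff (n : ℕ) : ∃ C : ℝ, 0 < C ∧ ∀ m : ℕ, 1 ≤ m → ∀ r : ℝ, 0 ≤ r → ∀ ζ ζ' : Fin n → ℝ,
    ∑ i, ζ i ^ 2 = r^2 → ∑ i, ζ' i ^ 2 = r^2 →
    ‖MM n m ζ - MM n m ζ'‖ ≤ C * ((m:ℝ)^(1/4:ℝ))^n * (1+√m*r)^n := by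
  obtain ⟨C, hC, h⟩ := theta_diff n
  refine ⟨C*Real.exp π, by positivity, fun m hm r hr ζ ζ' hζ hζ' => ?_⟩
  have hm' : (0:ℝ) < m := by exact_mod_cast hm
  have hmc : (m:ℂ) ≠ 0 := by exact_mod_cast hm'.ne'
  have h1 := MM_integral n m hm ζ ζ'
  have h2 : ‖2 * (MM n m ζ - MM n m ζ')‖ ≤ (C * ((m:ℝ)^(1/4:ℝ))^n * (1+√m*r)^n * Real.exp π) * |2-0| := by
    rw [h1]
    apply intervalIntegral.norm_integral_le_of_norm_le_const
    intro x _
    rw [norm_mul]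
    have : ‖Complex.exp (-π*Complex.I*m*(x+Complex.I/m))‖ = Real.exp π := by
      rw [Complex.norm_exp]
      congr 1
      rw [show (-π*Complex.I*m*(x+Complex.I/m) : ℂ) = ((-π*m : ℝ):ℂ)*(Complex.I*(x+Complex.I/m)) by push_cast; ring,
          Complex.re_ofReal_mul, Complex.I_mul_re, Complex.add_im, Complex.ofReal_im, zero_add, Complex.div_natCast_im, Complex.I_im]
      field_simp
    rw [this]
    gcongr
    exact h m hm x r hr ζ ζ' hζ hζ'
  rw [norm_mul] at h2
  norm_num at h2
  linarith

/-! ### The measure `ρ_m` and its Fourier transform -/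

/-- The point `k/√m`. -/
def lamPt (n m : ℕ) (k : Fin n → ℤ) : En n := WithLp.toLp 2 (fun i => (k i : ℝ) / √m)

lemma lamPt_inj (n m : ℕ) (hm : 1 ≤ m) : Function.Injective (lamPt n m) := by
  intro k l h
  funext i
  have hm' : (0:ℝ) < √m := by
    have : (0:ℝ) < m := by exact_mod_cast hm
    positivity
  have := congrArg (fun v : En n => v i) h
  simp only [lamPt] at this
  rw [div_left_inj' hm'.ne'] at this
  exact_mod_cast this

lemma Lam_eq (n m : ℕ) (hm : 1 ≤ m) : Lam n m = lamPt n m '' SS n m := by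
  have h0 : (0:ℝ) < m := by exact_mod_cast hm
  have hm' : (0:ℝ) < √m := by positivity
  have key : ∀ k : Fin n → ℤ, ‖lamPt n m k‖ = 1 ↔ k ∈ SS n m := by
    intro k
    rw [← sq_eq_sq₀ (norm_nonneg _) zero_le_one, EuclideanSpace.real_norm_sq_eq]
    simp only [lamPt, div_pow, Real.sq_sqrt h0.le, ← Finset.sum_div, one_pow, div_eq_one_iff_eq h0.ne', SS, Set.mem_ofPred_eq]
    exact_mod_cast Iff.rfl
  ext x
  constructor
  · rintro ⟨h1, h2⟩
    choose z hz using h2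
    have : lamPt n m z = x := by
      ext i; simp [lamPt, hz]
    refine ⟨z, ?_, this⟩
    rw [← key, this, h1]
  · rintro ⟨k, hk, rfl⟩
    exact ⟨(key k).2 hk, fun i => ⟨k i, rfl⟩⟩

lemma Lam_finite (n m : ℕ) (hm : 1 ≤ m) : (Lam n m).Finite := by
  rw [Lam_eq n m hm]; exact (SS_finite n m).image _

lemma rcnt_eq (n m : ℕ) (hm : 1 ≤ m) : rcnt n m = (SS n m).ncard := by
  rw [rcnt, Lam_eq n m hm]
  exact Set.ncard_image_of_injective _ (lamPt_inj n m hm)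

lemma rcnt_pos (n m : ℕ) (hn : 5 ≤ n) (hm : 1 ≤ m) : 0 < rcnt n m := by
  obtain ⟨c, hc, h⟩ := SS_lower n hn
  rw [rcnt_eq n m hm]
  have h1 := h m hm
  have h0 : (0:ℝ) < m := by exact_mod_cast hm
  have : (0:ℝ) < ((SS n m).ncard : ℝ) := lt_of_lt_of_le (by positivity) h1
  exact_mod_cast this

lemma rhoM_prob (n m : ℕ) (hn : 5 ≤ n) (hm : 1 ≤ m) : IsProbabilityMeasure (rhoM n m) := by
  constructor
  have hp := rcnt_pos n m hn hm
  rw [rhoM, Measure.smul_apply, Measure.restrict_apply_univ, Measure.count_apply (Lam_finite n m hm).measurableSet,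
    (Lam_finite n m hm).encard_eq_coe_toFinset_card, ← Set.ncard_eq_toFinset_card _ (Lam_finite n m hm)]
  have : rcnt n m = (Lam n m).ncard := rfl
  rw [← this, smul_eq_mul]
  exact ENNReal.inv_mul_cancel (by exact_mod_cast hp.ne') (by simp)

lemma rhoM_integral (n m : ℕ) (hm : 1 ≤ m) (F : En n → ℂ) :
    ∫ t, F t ∂(rhoM n m) = (∑ k ∈ (SS_finite n m).toFinset, F (lamPt n m k)) / (rcnt n m) := by
  have hf := Lam_finite n m hm
  rw [rhoM, integral_smul_measure]
  have h1 : ∫ t in Lam n m, F t ∂Measure.count = ∑ t ∈ hf.toFinset, F t := by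
    have h2 := setIntegral_finset (μ := (Measure.count : Measure (En n))) (f := F) hf.toFinset
      (by
        rw [← Set.biUnion_of_singleton (hf.toFinset : Set (En n)), ]
        refine (integrableOn_finset_iUnion (s := hf.toFinset)).2 fun i _ => ?_
        exact integrableOn_singleton (by simp) (by rw [Measure.count_singleton]; exact ENNReal.one_lt_top))
    rw [hf.coe_toFinset] at h2
    rw [h2]
    refine Finset.sum_congr rfl fun x _ => ?_
    simp [Measure.real]
  rw [h1]
  have h3 : hf.toFinset = (SS_finite n m).toFinset.map ⟨lamPt n m, lamPt_inj n m hm⟩ := by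
    ext x
    simp [Lam_eq n m hm]
  rw [h3, Finset.sum_map]
  simp [div_eq_inv_mul]

/-- The character `exp(2πi x·t)`. -/
def ee {n : ℕ} (x t : En n) : ℂ := Complex.exp (2*(π:ℂ)*Complex.I*((∑ i, x i * t i : ℝ):ℂ))

lemma norm_ee {n : ℕ} (x t : En n) : ‖ee x t‖ = 1 := by
  rw [ee, show (2*(π:ℂ)*Complex.I*((∑ i, x i * t i : ℝ):ℂ)) = ((2*π*(∑ i, x i * t i):ℝ):ℂ)*Complex.I by push_cast; ring, Complex.norm_exp_ofReal_mul_I]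

lemma continuous_ee {n : ℕ} : Continuous (fun p : En n × En n => ee p.1 p.2) := by
  unfold ee; fun_prop

lemma ee_comm {n : ℕ} (x t : En n) : ee x t = ee t x := by
  simp only [ee, mul_comm (x _)]

lemma rho_ft (n m : ℕ) (hm : 1 ≤ m) (ξ : En n) :
    ∫ t, ee ξ t ∂(rhoM n m) = MM n m (fun i => ξ i / √m) / (rcnt n m) := by
  rw [rhoM_integral n m hm, MM]
  congr 1
  refine Finset.sum_congr rfl fun k _ => ?_
  simp only [ee, lamPt]
  congr 4
  funext i
  ring

lemma rhoM_ae (n m : ℕ) (hm : 1 ≤ m) : ∀ᵐ t ∂(rhoM n m), ‖t‖ = 1 := by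
  rw [rhoM]
  refine Measure.ae_smul_measure ?_ _
  rw [ae_restrict_iff' (Lam_finite n m hm).measurableSet]
  exact ae_of_all _ fun t ht => ht.1

/-! ### The uniform measure on the sphere -/

/-- The orthogonal projection of the sphere to a coordinate hyperplane contains a ball. -/
lemma sphere_pos (d : ℕ) : 0 < μH[(d:ℝ)] (Metric.sphere (0 : En (d+1)) 1) := by
  let p : En (d+1) → (Fin d → ℝ) := fun x i => x i.succ
  have hp : LipschitzWith 1 p := by
    refine LipschitzWith.of_dist_le_mul fun x y => ?_
    rw [NNReal.coe_one, one_mul, dist_pi_le_iff dist_nonneg]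
    intro i
    rw [dist_eq_norm, dist_eq_norm]
    exact PiLp.norm_apply_le (x - y) i.succ
  have h1 := hp.hausdorffMeasure_image_le (d := d) (by positivity) (Metric.sphere (0 : En (d+1)) 1)
  simp only [ENNReal.coe_one, ENNReal.one_rpow, one_mul] at h1
  refine lt_of_lt_of_le ?_ h1
  have hsub : Metric.ball (0 : Fin d → ℝ) (1/(d+1)) ⊆ p '' Metric.sphere (0 : En (d+1)) 1 := by
    intro y hy
    have hd : (0:ℝ) < d + 1 := by positivity
    rw [mem_ball_zero_iff, pi_norm_lt_iff (by positivity)] at hy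
    have hs : ∑ i, y i ^2 ≤ 1 := by
      calc ∑ i, y i ^2 ≤ ∑ i : Fin d, 1/((d:ℝ)+1) := by
            refine Finset.sum_le_sum fun i _ => ?_
            have h2 := hy i
            rw [Real.norm_eq_abs] at h2
            have h3 : 1/((d:ℝ)+1) ≤ 1 := by
              rw [div_le_one hd]; linarith [(Nat.cast_nonneg d : (0:ℝ) ≤ d)]
            rw [← sq_abs]
            nlinarith [abs_nonneg (y i)]
        _ = d/((d:ℝ)+1) := by simp [div_eq_mul_inv]
        _ ≤ 1 := by rw [div_le_one hd]; linarith
    refine ⟨WithLp.toLp 2 (Fin.cons (√(1-∑ i, y i ^2)) y), ?_, ?_⟩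
    · rw [mem_sphere_zero_iff_norm, ← sq_eq_sq₀ (norm_nonneg _) zero_le_one, EuclideanSpace.real_norm_sq_eq,
        Fin.sum_univ_succ]
      simp only [Fin.cons_zero, Fin.cons_succ]
      rw [Real.sq_sqrt (by linarith)]
      ring
    · funext i; simp [p]
  refine lt_of_lt_of_le ?_ (measure_mono hsub)
  have : (μH[(d:ℝ)] : Measure (Fin d → ℝ)) = volume := by
    have := hausdorffMeasure_pi_real (ι := Fin d)
    rwa [Fintype.card_fin] at this
  rw [this]
  exact Metric.measure_ball_pos _ _ (by positivity)

/-- Radial projection to the unit sphere is Lipschitz away from the unit ball. -/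
lemma normalize_lip (n : ℕ) : LipschitzOnWith 2 (fun x : En n => (‖x‖⁻¹ : ℝ) • x) {x | 1 ≤ ‖x‖} := by
  refine LipschitzOnWith.of_dist_le_mul fun x hx y hy => ?_
  have hx : 1 ≤ ‖x‖ := hx
  have hy : 1 ≤ ‖y‖ := hy
  have hx0 : 0 < ‖x‖ := by linarith
  have hy0 : 0 < ‖y‖ := by linarith
  rw [dist_eq_norm, dist_eq_norm]
  have e : (‖x‖⁻¹ : ℝ) • x - (‖y‖⁻¹ : ℝ) • y = (‖x‖⁻¹ : ℝ) • (x - y) + (‖x‖⁻¹ - ‖y‖⁻¹ : ℝ) • y := by module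
  rw [e]
  refine (norm_add_le _ _).trans ?_
  rw [norm_smul, norm_smul]
  have h1 : ‖(‖x‖⁻¹ : ℝ)‖ ≤ 1 := by
    rw [Real.norm_of_nonneg (by positivity)]; exact inv_le_one_of_one_le₀ hx
  have h2 : ‖(‖x‖⁻¹ - ‖y‖⁻¹ : ℝ)‖ * ‖y‖ = ‖x‖⁻¹ * |‖y‖ - ‖x‖| := by
    rw [inv_sub_inv hx0.ne' hy0.ne', norm_div, Real.norm_eq_abs, Real.norm_of_nonneg (by positivity : 0 ≤ ‖x‖*‖y‖)]
    field_simp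
  rw [h2]
  have h3 : |‖y‖ - ‖x‖| ≤ ‖x - y‖ := by rw [abs_sub_comm]; exact abs_norm_sub_norm_le x y
  have h4 : ‖x‖⁻¹ ≤ 1 := inv_le_one_of_one_le₀ hx
  have h5 : ‖(‖x‖⁻¹ : ℝ)‖ * ‖x-y‖ ≤ 1 * ‖x-y‖ := by gcongr
  have h6 : ‖x‖⁻¹ * |‖y‖ - ‖x‖| ≤ 1 * ‖x - y‖ := by gcongr
  push_cast
  linarith

/-- The sphere is covered by the radial projections of the finitely many faces of a cube, which are Lipschitz
images of sets of finite measure. -/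
lemma sphere_lt_top (d : ℕ) : μH[(d:ℝ)] (Metric.sphere (0 : En (d+1)) 1) < ⊤ := by
  let emb : Fin (d+1) × Bool → (Fin d → ℝ) → En (d+1) := fun is y =>
    WithLp.toLp 2 (is.1.insertNth (α := fun _ => ℝ) (if is.2 then 1 else -1) y)
  have hnorm : ∀ is y, 1 ≤ ‖emb is y‖ := by
    intro is y
    have := PiLp.norm_apply_le (emb is y) is.1
    refine le_trans ?_ this
    simp only [emb, Fin.insertNth_apply_same]
    split_ifs <;> simp
  have hemb : ∀ is, LipschitzWith ((Fintype.card (Fin (d+1)) : NNReal) ^ (1/(2:ENNReal)).toReal * 1) (emb is) := by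
    intro is
    refine (PiLp.lipschitzWith_toLp 2 (fun _ : Fin (d+1) => ℝ)).comp (g := fun y => is.1.insertNth (α := fun _ => ℝ) (if is.2 then 1 else -1) y) ?_
    refine LipschitzWith.of_dist_le_mul fun x y => ?_
    rw [NNReal.coe_one, one_mul, dist_pi_le_iff dist_nonneg]
    intro i
    rcases Fin.eq_self_or_eq_succAbove is.1 i with h | ⟨j, h⟩
    · rw [h]; simp
    · rw [h]; simp only [Fin.insertNth_apply_succAbove]; exact dist_le_pi_dist x y j
  let g : Fin (d+1) × Bool → (Fin d → ℝ) → En (d+1) := fun is y => (‖emb is y‖⁻¹ : ℝ) • emb is y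
  have hg : ∀ is, LipschitzWith (2*((Fintype.card (Fin (d+1)) : NNReal) ^ (1/(2:ENNReal)).toReal * 1)) (g is) := by
    intro is
    rw [← lipschitzOnWith_univ]
    exact (normalize_lip (d+1)).comp ((hemb is).lipschitzOnWith) (fun y _ => hnorm is y)
  have hcov : Metric.sphere (0 : En (d+1)) 1 ⊆ ⋃ is, g is '' Metric.closedBall 0 1 := by
    intro x hx
    rw [mem_sphere_zero_iff_norm] at hx
    obtain ⟨i, hi⟩ := Finite.exists_max (fun i => |x i|)
    have hi0 : 0 < |x i| := by
      rw [abs_pos]; intro h0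
      have : x = 0 := by
        ext j; have := hi j; rw [h0, abs_zero] at this; simpa using this
      rw [this, norm_zero] at hx; norm_num at hx
    have hb : emb (i, decide (0 < x i)) (fun j => x (i.succAbove j) / |x i|) = (|x i|⁻¹ : ℝ) • x := by
      ext j
      rcases Fin.eq_self_or_eq_succAbove i j with h | ⟨l, h⟩
      · rw [h]
        simp only [emb, Fin.insertNth_apply_same, decide_eq_true_eq, PiLp.smul_apply, smul_eq_mul]
        split_ifs with hpos
        · rw [abs_of_pos hpos, inv_mul_cancel₀ hpos.ne']
        · have : x i < 0 := lt_of_le_of_ne (not_lt.1 hpos) (abs_pos.1 hi0)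
          rw [abs_of_neg this, inv_neg, neg_mul, inv_mul_cancel₀ this.ne]
      · rw [h]
        simp only [emb, Fin.insertNth_apply_succAbove, PiLp.smul_apply, smul_eq_mul]
        ring
    refine Set.mem_iUnion.2 ⟨(i, decide (0 < x i)), (fun j => x (i.succAbove j) / |x i|), ?_, ?_⟩
    · rw [mem_closedBall_zero_iff, pi_norm_le_iff_of_nonneg zero_le_one]
      intro j
      rw [norm_div, Real.norm_eq_abs, Real.norm_eq_abs, abs_abs, div_le_one hi0]
      exact hi _
    · simp only [g]
      rw [hb, norm_smul, hx, smul_smul, norm_inv, Real.norm_eq_abs, abs_abs]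
      rw [mul_one, inv_inv, mul_inv_cancel₀ hi0.ne', one_smul]
  refine lt_of_le_of_lt (measure_mono hcov) ?_
  refine lt_of_le_of_lt (measure_iUnion_le _) ?_
  rw [tsum_fintype]
  refine ENNReal.sum_lt_top.2 fun is _ => ?_
  refine lt_of_le_of_lt ((hg is).hausdorffMeasure_image_le (d := d) (by positivity) _) ?_
  have : (μH[(d:ℝ)] : Measure (Fin d → ℝ)) = volume := by
    have := hausdorffMeasure_pi_real (ι := Fin d)
    rwa [Fintype.card_fin] at this
  rw [this]
  exact ENNReal.mul_lt_top (ENNReal.rpow_lt_top_of_nonneg (by positivity) ENNReal.coe_ne_top) Metric.isBounded_closedBall.measure_lt_top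

lemma unif_facts (n : ℕ) (hn : 1 ≤ n) : μH[(n:ℝ)-1] (Metric.sphere (0 : En n) 1) ≠ 0 ∧ μH[(n:ℝ)-1] (Metric.sphere (0 : En n) 1) ≠ ⊤ := by
  obtain ⟨d, rfl⟩ : ∃ d, n = d+1 := ⟨n-1, by omega⟩
  have : ((d+1:ℕ):ℝ) - 1 = d := by push_cast; ring
  rw [this]
  exact ⟨(sphere_pos d).ne', (sphere_lt_top d).ne⟩

lemma unif_prob (n : ℕ) (hn : 1 ≤ n) : IsProbabilityMeasure (unifSphere n) := by
  constructor
  rw [unifSphere, Measure.smul_apply, Measure.restrict_apply_univ, smul_eq_mul]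
  exact ENNReal.inv_mul_cancel (unif_facts n hn).1 (unif_facts n hn).2

lemma unif_ae (n : ℕ) : ∀ᵐ t ∂(unifSphere n), ‖t‖ = 1 := by
  rw [unifSphere]
  refine Measure.ae_smul_measure ?_ _
  rw [ae_restrict_iff' Metric.isClosed_sphere.measurableSet]
  exact ae_of_all _ fun t ht => mem_sphere_zero_iff_norm.1 ht

/-- Rotation invariance of the uniform measure. -/
lemma unif_map (n : ℕ) (e : En n ≃ₗᵢ[ℝ] En n) : (unifSphere n).map e = unifSphere n := by
  rw [unifSphere, Measure.map_smul]
  congr 1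
  have h := e.toIsometryEquiv.map_hausdorffMeasure ((n:ℝ)-1)
  have h2 : Metric.sphere (0 : En n) 1 = e ⁻¹' Metric.sphere (0 : En n) 1 := by
    ext x; simp
  conv_lhs => rw [h2]
  rw [← Measure.restrict_map e.continuous.measurable Metric.isClosed_sphere.measurableSet]
  congr 1

/-! ### Comparison of the Fourier transforms -/

lemma ee_inner {n : ℕ} (x t : En n) : ee x t = Complex.exp (2*(π:ℂ)*Complex.I*((inner ℝ x t : ℝ):ℂ)) := by
  rw [ee]; congr 3
  simp [PiLp.inner_apply, mul_comm]

lemma ee_isom {n : ℕ} (e : En n ≃ₗᵢ[ℝ] En n) (x t : En n) : ee (e x) (e t) = ee x t := by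
  rw [ee_inner, ee_inner, e.inner_map_map]

lemma integrable_ee {n : ℕ} (μ : Measure (En n)) [IsFiniteMeasure μ] (x : En n) : Integrable (fun t => ee x t) μ := by
  refine Integrable.of_bound (C := 1) ?_ ?_
  · exact (continuous_ee.comp (by fun_prop : Continuous fun t : En n => (x, t))).aestronglyMeasurable
  · exact ae_of_all _ fun t => (norm_ee x t).le

/-- The Fourier transform of the uniform measure is radial: the reflection exchanging `x` and `y` preserves it. -/
lemma unif_radial (n : ℕ) (x y : En n) (h : ‖x‖ = ‖y‖) :
    ∫ t, ee x t ∂(unifSphere n) = ∫ t, ee y t ∂(unifSphere n) := by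
  let e : En n ≃ₗᵢ[ℝ] En n := (ℝ ∙ (x - y))ᗮ.reflection
  have he : e x = y := Submodule.reflection_sub h
  conv_rhs => rw [← he, ← unif_map n e]
  have hm : AEStronglyMeasurable (fun t => ee (e x) t) ((unifSphere n).map e) :=
    (continuous_ee.comp (by fun_prop : Continuous fun t : En n => (e x, t))).aestronglyMeasurable
  rw [integral_map e.continuous.aemeasurable hm]
  simp only [ee_isom]

/-- Averaging the Fourier transform of `ρ_m` over the sphere of radius `|ξ|` gives the Fourier transform of `σ`
at `ξ`, so it suffices to bound the oscillation on that sphere: `MM_diff` divided by `r_n(m)`. -/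
theorem FT_diff (n : ℕ) (hn : 5 ≤ n) : ∃ C : ℝ, 0 < C ∧ ∀ m : ℕ, 1 ≤ m → ∀ ξ : En n,
    ‖∫ t, ee ξ t ∂(rhoM n m) - ∫ t, ee ξ t ∂(unifSphere n)‖ ≤ C * (m:ℝ)^(9/8 - (n:ℝ)/4) * (1+‖ξ‖)^n := by
  obtain ⟨C, hC, hM⟩ := MM_diff n
  obtain ⟨c, hc, hr⟩ := SS_lower n hn
  refine ⟨C/c, by positivity, fun m hm ξ => ?_⟩
  have h0 : (0:ℝ) < m := by exact_mod_cast hm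
  have hs : (0:ℝ) < √m := by positivity
  have := rhoM_prob n m hn hm
  have := unif_prob n (by omega)
  set σ := unifSphere n
  set ρ := rhoM n m
  have hrp : (0:ℝ) < rcnt n m := by exact_mod_cast rcnt_pos n m hn hm
  have hrl : c*(m:ℝ)^((n:ℝ)/2-9/8) ≤ rcnt n m := by rw [rcnt_eq n m hm]; exact hr m hm
  have hsq : ∀ ζ : En n, ‖ζ‖ = ‖ξ‖ → ∑ i, (ζ i / √m)^2 = (‖ξ‖/√m)^2 := by
    intro ζ h
    simp only [div_pow, ← Finset.sum_div]
    rw [← h, EuclideanSpace.real_norm_sq_eq]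
  have hpt : ∀ ω : En n, ‖ω‖ = 1 → ‖∫ t, ee ξ t ∂ρ - ∫ t, ee (‖ξ‖ • ω) t ∂ρ‖ ≤ C/c * (m:ℝ)^(9/8 - (n:ℝ)/4) * (1+‖ξ‖)^n := by
    intro ω hω
    rw [rho_ft n m hm, rho_ft n m hm, ← sub_div, norm_div, Complex.norm_natCast, div_le_iff₀ hrp]
    have h1 := hM m hm (‖ξ‖/√m) (by positivity) (fun i => ξ i / √m) (fun i => (‖ξ‖ • ω) i / √m) (hsq ξ rfl)
      (hsq _ (by rw [norm_smul, hω, mul_one, norm_norm]))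
    rw [mul_div_cancel₀ _ hs.ne'] at h1
    refine h1.trans ?_
    have e1 : ((m:ℝ)^(1/4:ℝ))^n = (m:ℝ)^(9/8 - (n:ℝ)/4) * (m:ℝ)^((n:ℝ)/2-9/8) := by
      rw [← Real.rpow_natCast, ← Real.rpow_mul h0.le, ← Real.rpow_add h0]; congr 1; ring
    calc C * ((m:ℝ)^(1/4:ℝ))^n * (1+‖ξ‖)^n = C/c * (m:ℝ)^(9/8 - (n:ℝ)/4) * (1+‖ξ‖)^n * (c*(m:ℝ)^((n:ℝ)/2-9/8)) := by
          rw [e1]; field_simp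
      _ ≤ _ := by gcongr
  -- the average of the Fourier transform of `ρ_m` over the sphere of radius `‖ξ‖`
  have hswap : ∫ ω, (∫ t, ee (‖ξ‖ • ω) t ∂ρ) ∂σ = ∫ t, ee ξ t ∂σ := by
    have hint : Integrable (Function.uncurry fun (ω t : En n) => ee (‖ξ‖ • ω) t) (σ.prod ρ) := by
      refine Integrable.of_bound (C := 1) ?_ (ae_of_all _ fun p => (norm_ee _ _).le)
      exact (continuous_ee.comp (by fun_prop : Continuous fun p : En n × En n => (‖ξ‖ • p.1, p.2))).aestronglyMeasurable
    rw [integral_integral_swap hint]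
    have : ∀ᵐ t ∂ρ, ∫ ω, ee (‖ξ‖ • ω) t ∂σ = ∫ t, ee ξ t ∂σ := by
      filter_upwards [rhoM_ae n m hm] with t ht
      rw [unif_radial n ξ (‖ξ‖ • t) (by rw [norm_smul, ht, mul_one, norm_norm])]
      refine integral_congr_ae (ae_of_all _ fun ω => ?_)
      simp only [ee_inner, inner_smul_left, real_inner_comm]
    rw [integral_congr_ae this]
    simp
  have hint2 : Integrable (fun ω => ∫ t, ee (‖ξ‖ • ω) t ∂ρ) σ := by
    refine Integrable.of_bound (C := 1) ?_ (ae_of_all _ fun ω => ?_)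
    · refine (StronglyMeasurable.integral_prod_right (f := fun (ω t : En n) => ee (‖ξ‖ • ω) t) ?_).aestronglyMeasurable
      exact (continuous_ee.comp (by fun_prop : Continuous fun p : En n × En n => (‖ξ‖ • p.1, p.2))).stronglyMeasurable
    · refine (norm_integral_le_of_norm_le_const (C := 1) (ae_of_all _ fun t => (norm_ee _ _).le)).trans ?_
      simp
  have : ∫ t, ee ξ t ∂ρ - ∫ t, ee ξ t ∂σ = ∫ ω, (∫ t, ee ξ t ∂ρ - ∫ t, ee (‖ξ‖ • ω) t ∂ρ) ∂σ := by
    rw [integral_sub (integrable_const _) hint2, hswap]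
    simp
  rw [this]
  refine (norm_integral_le_of_norm_le_const (C := C/c * (m:ℝ)^(9/8 - (n:ℝ)/4) * (1+‖ξ‖)^n) ?_).trans (by simp)
  filter_upwards [unif_ae n] with ω hω
  exact hpt ω hω

/-! ### Couplings from mollified densities -/

/-- A sub-coupling is completed by the normalized product of the deficits of its marginals. -/
lemma complete_coupling {E : Type*} [MeasurableSpace E] (ρ σ : Measure E) [IsProbabilityMeasure ρ] [IsProbabilityMeasure σ]
    (γ : Measure (E × E)) (h1 : γ.fst ≤ ρ) (h2 : γ.snd ≤ σ) :
    ∃ τ : Measure (E × E), (γ + τ).fst = ρ ∧ (γ + τ).snd = σ ∧ τ Set.univ = 1 - γ Set.univ := by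
  have hγ : γ Set.univ ≤ 1 := by
    have := h1 Set.univ
    rwa [Measure.fst_univ, measure_univ (μ := ρ)] at this
  have hfin : IsFiniteMeasure γ := ⟨lt_of_le_of_lt hγ ENNReal.one_lt_top⟩
  set M := 1 - γ Set.univ with hM
  have hMtop : M ≠ ⊤ := ne_top_of_le_ne_top ENNReal.one_ne_top tsub_le_self
  have e1 : (ρ - γ.fst) Set.univ = M := by
    rw [Measure.sub_apply MeasurableSet.univ h1, Measure.fst_univ, measure_univ]
  have e2 : (σ - γ.snd) Set.univ = M := by
    rw [Measure.sub_apply MeasurableSet.univ h2, Measure.snd_univ, measure_univ]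
  have hf1 : IsFiniteMeasure (ρ - γ.fst) := ⟨by rw [e1]; exact hMtop.lt_top⟩
  have hf2 : IsFiniteMeasure (σ - γ.snd) := ⟨by rw [e2]; exact hMtop.lt_top⟩
  refine ⟨M⁻¹ • (ρ - γ.fst).prod (σ - γ.snd), ?_, ?_, ?_⟩
  · rw [Measure.fst_add, Measure.fst, Measure.fst, Measure.map_smul, ← Measure.fst, Measure.map_fst_prod, e2, smul_smul]
    by_cases h0 : M = 0
    · rw [h0] at e1
      rw [Measure.measure_univ_eq_zero.1 e1, smul_zero, add_zero]
      have := Measure.sub_add_cancel_of_le h1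
      rwa [Measure.measure_univ_eq_zero.1 e1, zero_add] at this
    · rw [ENNReal.inv_mul_cancel h0 hMtop, one_smul, add_comm]
      exact Measure.sub_add_cancel_of_le h1
  · rw [Measure.snd_add, Measure.snd, Measure.snd, Measure.map_smul, ← Measure.snd, Measure.map_snd_prod, e1, smul_smul]
    by_cases h0 : M = 0
    · rw [h0] at e2
      rw [Measure.measure_univ_eq_zero.1 e2, smul_zero, add_zero]
      have := Measure.sub_add_cancel_of_le h2
      rwa [Measure.measure_univ_eq_zero.1 e2, zero_add] at this
    · rw [ENNReal.inv_mul_cancel h0 hMtop, one_smul, add_comm]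
      exact Measure.sub_add_cancel_of_le h2
  · rw [Measure.smul_apply, ← Set.univ_prod_univ, Measure.prod_prod, e1, e2, smul_eq_mul]
    by_cases h0 : M = 0
    · rw [h0]; simp
    · rw [← mul_assoc, ENNReal.inv_mul_cancel h0 hMtop, one_mul]

lemma meas_sub {n : ℕ} {φ : En n → ENNReal} (hφ : Measurable φ) (u : En n) : Measurable fun s => φ (u - s) :=
  hφ.comp (by fun_prop)

lemma meas_sub' {n : ℕ} {φ : En n → ENNReal} (hφ : Measurable φ) (t : En n) : Measurable fun u => φ (u - t) :=
  hφ.comp (by fun_prop)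

/-- If `w` is at most the reciprocal of the mollified density of `σ`, integrating out `s` costs nothing. -/
lemma inner_bound {n : ℕ} (ρ σ : Measure (En n)) [IsProbabilityMeasure ρ] [IsProbabilityMeasure σ]
    (φ w : En n → ENNReal) (hφ : Measurable φ)
    (hw1 : ∀ u, w u * ∫⁻ s, φ (u - s) ∂σ ≤ 1) (H : En n → En n → ENNReal) (hH : Measurable (Function.uncurry H)) :
    ∫⁻ u, (∫⁻ t, (∫⁻ s, w u * φ (u - t) * φ (u - s) * H u t ∂σ) ∂ρ) ≤ ∫⁻ t, (∫⁻ u, φ (u - t) * H u t) ∂ρ := by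
  rw [← lintegral_lintegral_swap (μ := volume) (ν := ρ) (f := fun u t => φ (u - t) * H u t) (by
    apply Measurable.aemeasurable
    exact (hφ.comp (by fun_prop : Measurable fun p : En n × En n => p.1 - p.2)).mul hH)]
  refine lintegral_mono fun u => lintegral_mono fun t => ?_
  calc ∫⁻ s, w u * φ (u - t) * φ (u - s) * H u t ∂σ = ∫⁻ s, (φ (u - t) * H u t * w u) * φ (u - s) ∂σ := by
        refine lintegral_congr fun s => by ring
    _ = φ (u - t) * H u t * (w u * ∫⁻ s, φ (u - s) ∂σ) := by
        rw [lintegral_const_mul _ (meas_sub hφ u), mul_assoc]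
    _ ≤ φ (u - t) * H u t := mul_le_of_le_one_right' (hw1 u)

/-- The density with respect to `ρ ⊗ σ` of the sub-coupling obtained by choosing a common mollified point `u`
with weight `w u`. -/
def glueDens {n : ℕ} (φ w : En n → ENNReal) (p : En n × En n) : ENNReal :=
  ∫⁻ u, w u * φ (u - p.1) * φ (u - p.2)

lemma glue_meas_aux {n : ℕ} (φ w : En n → ENNReal) (hφ : Measurable φ) (hw : Measurable w) :
    Measurable (fun q : (En n × En n) × En n => w q.2 * φ (q.2 - q.1.1) * φ (q.2 - q.1.2)) :=
  ((hw.comp measurable_snd).mul (hφ.comp (by fun_prop))).mul (hφ.comp (by fun_prop))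

lemma glue_meas {n : ℕ} (φ w : En n → ENNReal) (hφ : Measurable φ) (hw : Measurable w) :
    Measurable (glueDens φ w) := (glue_meas_aux φ w hφ hw).lintegral_prod_right'

/-- Integrals against the sub-coupling as iterated integrals over `u`, `t` and `s`. -/
lemma glue_lint {n : ℕ} (ρ σ : Measure (En n)) [IsProbabilityMeasure ρ] [IsProbabilityMeasure σ]
    (φ w : En n → ENNReal) (hφ : Measurable φ) (hw : Measurable w) (F : En n × En n → ENNReal) (hF : Measurable F) :
    ∫⁻ p, F p ∂((ρ.prod σ).withDensity (glueDens φ w)) =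
      ∫⁻ u, (∫⁻ t, (∫⁻ s, w u * φ (u - t) * φ (u - s) * F (t, s) ∂σ) ∂ρ) := by
  have haux := glue_meas_aux φ w hφ hw
  rw [lintegral_withDensity_eq_lintegral_mul _ (glue_meas φ w hφ hw) hF]
  have : ∀ p : En n × En n, (glueDens φ w * F) p = ∫⁻ u, w u * φ (u - p.1) * φ (u - p.2) * F p := by
    intro p
    rw [Pi.mul_apply, glueDens, lintegral_mul_const]
    exact haux.comp (by fun_prop : Measurable fun u : En n => (p, u))
  simp only [this]
  rw [lintegral_lintegral_swap (f := fun p u => w u * φ (u - p.1) * φ (u - p.2) * F p)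
    (haux.mul (hF.comp measurable_fst)).aemeasurable]
  refine lintegral_congr fun u => ?_
  rw [lintegral_prod]
  exact ((haux.comp (by fun_prop : Measurable fun p : En n × En n => (p, u))).mul hF).aemeasurable

lemma glue_swap {n : ℕ} (ρ σ : Measure (En n)) [IsProbabilityMeasure ρ] [IsProbabilityMeasure σ]
    (φ w : En n → ENNReal) (hφ : Measurable φ) (F : En n → En n × En n → ENNReal) (hF : ∀ u, Measurable (F u)) :
    ∫⁻ u, (∫⁻ t, (∫⁻ s, w u * φ (u - t) * φ (u - s) * F u (t, s) ∂σ) ∂ρ) =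
      ∫⁻ u, (∫⁻ s, (∫⁻ t, w u * φ (u - s) * φ (u - t) * F u (t, s) ∂ρ) ∂σ) := by
  refine lintegral_congr fun u => ?_
  rw [lintegral_lintegral_swap]
  · refine lintegral_congr fun t => lintegral_congr fun s => by ring
  · refine Measurable.aemeasurable ?_
    refine Measurable.mul ((Measurable.mul measurable_const (hφ.comp (by fun_prop))).mul (hφ.comp (by fun_prop))) (hF u)

lemma glue_split {n : ℕ} (ρ σ : Measure (En n)) [IsProbabilityMeasure ρ] [IsProbabilityMeasure σ]
    (φ w : En n → ENNReal) (hφ : Measurable φ) (hwm : Measurable w) :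
    ∫⁻ u, (∫⁻ t, (∫⁻ s, w u * φ (u - t) * φ (u - s) * (2 * ENNReal.ofReal (‖u - t‖^2))
            + w u * φ (u - t) * φ (u - s) * (2 * ENNReal.ofReal (‖u - s‖^2)) ∂σ) ∂ρ)
     = (∫⁻ u, (∫⁻ t, (∫⁻ s, w u * φ (u - t) * φ (u - s) * (2 * ENNReal.ofReal (‖u - t‖^2)) ∂σ) ∂ρ))
           + (∫⁻ u, (∫⁻ t, (∫⁻ s, w u * φ (u - t) * φ (u - s) * (2 * ENNReal.ofReal (‖u - s‖^2)) ∂σ) ∂ρ)) := by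
  have hA : ∀ u t, Measurable fun s => w u * φ (u - t) * φ (u - s) * (2 * ENNReal.ofReal (‖u - t‖^2)) := by
    intro u t
    have := hφ.comp (by fun_prop : Measurable fun s : En n => u - s)
    fun_prop
  have hB : Measurable fun q : (En n × En n) × En n => w q.1.1 * φ (q.1.1 - q.1.2) * φ (q.1.1 - q.2) * (2 * ENNReal.ofReal (‖q.1.1 - q.1.2‖^2)) := by
    refine Measurable.mul (((hwm.comp (by fun_prop)).mul (hφ.comp (by fun_prop))).mul (hφ.comp (by fun_prop))) (by fun_prop)
  have hB2 := hB.lintegral_prod_right' (ν := σ)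
  have hB3 := hB2.lintegral_prod_right' (ν := ρ)
  rw [← lintegral_add_left hB3]
  refine lintegral_congr fun u => ?_
  have hC : Measurable fun t => ∫⁻ s, w u * φ (u - t) * φ (u - s) * (2 * ENNReal.ofReal (‖u - t‖^2)) ∂σ :=
    hB2.comp (by fun_prop : Measurable fun t : En n => (u, t))
  rw [← lintegral_add_left hC]
  refine lintegral_congr fun t => ?_
  rw [← lintegral_add_left (hA u t)]

/-- Uses `|t - s|² ≤ 2|u - t|² + 2|u - s|²`. -/
lemma glue_moment {n : ℕ} (ρ σ : Measure (En n)) [IsProbabilityMeasure ρ] [IsProbabilityMeasure σ]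
    (φ w : En n → ENNReal) (hφ : Measurable φ) (hwm : Measurable w)
    (hwQ : ∀ u, w u * ∫⁻ s, φ (u - s) ∂σ ≤ 1) (hwP : ∀ u, w u * ∫⁻ s, φ (u - s) ∂ρ ≤ 1) :
    ∫⁻ p, ENNReal.ofReal (‖p.1 - p.2‖^2) ∂((ρ.prod σ).withDensity (glueDens φ w)) ≤
      4 * (∫⁻ v, φ v * ENNReal.ofReal (‖v‖^2)) := by
  have hdm : Measurable fun p : En n × En n => ENNReal.ofReal (‖p.1 - p.2‖^2) := by fun_prop
  have htr : ∀ (t : En n) (f : En n → ENNReal), ∫⁻ u, φ (u - t) * f (u - t) = ∫⁻ u, φ u * f u := fun t f =>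
    lintegral_sub_right_eq_self (fun u => φ u * f u) t
  rw [glue_lint ρ σ φ w hφ hwm _ hdm]
  have hm1 : Measurable (Function.uncurry fun u t : En n => 2 * ENNReal.ofReal (‖u - t‖^2)) := by
    simp only [Function.uncurry_def]; fun_prop
  calc _ ≤ ∫⁻ u, (∫⁻ t, (∫⁻ s, w u * φ (u - t) * φ (u - s) * (2 * ENNReal.ofReal (‖u - t‖^2))
          + w u * φ (u - t) * φ (u - s) * (2 * ENNReal.ofReal (‖u - s‖^2)) ∂σ) ∂ρ) := by
        refine lintegral_mono fun u => lintegral_mono fun t => lintegral_mono fun s => ?_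
        simp only
        rw [← mul_add]
        gcongr
        have h2e : ∀ x : ℝ, 2 * ENNReal.ofReal x = ENNReal.ofReal (2 * x) := fun x => by
          rw [ENNReal.ofReal_mul (by norm_num)]; simp
        rw [← mul_add, ← ENNReal.ofReal_add (by positivity) (by positivity), h2e]
        apply ENNReal.ofReal_le_ofReal
        have : ‖t - s‖ ≤ ‖u - t‖ + ‖u - s‖ := by
          rw [show t - s = (u - s) - (u - t) by abel]
          linarith [norm_sub_le (u - s) (u - t)]
        nlinarith [norm_nonneg (t - s), sq_nonneg (‖u-t‖ - ‖u-s‖)]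
    _ = (∫⁻ u, (∫⁻ t, (∫⁻ s, w u * φ (u - t) * φ (u - s) * (2 * ENNReal.ofReal (‖u - t‖^2)) ∂σ) ∂ρ))
         + (∫⁻ u, (∫⁻ t, (∫⁻ s, w u * φ (u - t) * φ (u - s) * (2 * ENNReal.ofReal (‖u - s‖^2)) ∂σ) ∂ρ)) := by
        exact glue_split ρ σ φ w hφ hwm
    _ ≤ (∫⁻ t, (∫⁻ u, φ (u - t) * (2 * ENNReal.ofReal (‖u - t‖^2))) ∂ρ) + (∫⁻ t, (∫⁻ u, φ (u - t) * (2 * ENNReal.ofReal (‖u - t‖^2))) ∂σ) := by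
        refine add_le_add ?_ ?_
        · exact inner_bound ρ σ φ w hφ hwQ _ hm1
        · rw [glue_swap ρ σ φ w hφ (fun u p => 2 * ENNReal.ofReal (‖u - p.2‖^2)) (fun u => by fun_prop)]
          exact inner_bound σ ρ φ w hφ hwP _ hm1
    _ = 2 * (∫⁻ v, φ v * ENNReal.ofReal (‖v‖^2)) + 2 * (∫⁻ v, φ v * ENNReal.ofReal (‖v‖^2)) := by
        have : ∀ t : En n, ∫⁻ u, φ (u - t) * (2 * ENNReal.ofReal (‖u - t‖^2)) = 2 * (∫⁻ v, φ v * ENNReal.ofReal (‖v‖^2)) := by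
          intro t
          have hmm : Measurable fun v : En n => φ v * ENNReal.ofReal (‖v‖^2) := hφ.mul (by fun_prop)
          rw [htr t (fun v => 2 * ENNReal.ofReal (‖v‖^2)), ← lintegral_const_mul _ hmm]
          exact lintegral_congr fun u => by ring
        simp only [this, lintegral_const, measure_univ, mul_one]
    _ = 4 * (∫⁻ v, φ v * ENNReal.ofReal (‖v‖^2)) := by ring

/-- Coupling of two measures on the unit sphere whose mollifications by `φ` are close. With `P`, `Q` the mollified
densities, the weight `min(P, Q)/(PQ)` gives a sub-coupling of mass `∫ min(P, Q)`. The remaining mass is at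
most the second moment of `φ` plus `vol(B(0,2)) S`, and each unit of it costs at most `4`. -/
theorem coupling {n : ℕ} (ρ σ : Measure (En n)) [IsProbabilityMeasure ρ] [IsProbabilityMeasure σ]
    (hρ : ∀ᵐ t ∂ρ, ‖t‖ = 1) (hσ : ∀ᵐ t ∂σ, ‖t‖ = 1)
    (φ : En n → ENNReal) (hφ : Measurable φ) (hφ1 : ∫⁻ v, φ v = 1) (B : NNReal) (hφb : ∀ v, φ v ≤ B) (hφ0 : ∀ v, φ v ≠ 0)
    (S : ENNReal) (hS : ∀ u, ∫⁻ t, φ (u - t) ∂ρ ≤ ∫⁻ t, φ (u - t) ∂σ + S) :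
    ∃ θ : Measure (En n × En n), θ.fst = ρ ∧ θ.snd = σ ∧
      ∫⁻ p, ENNReal.ofReal (‖p.1 - p.2‖^2) ∂θ ≤
        8 * (∫⁻ v, φ v * ENNReal.ofReal (‖v‖^2)) + 4 * (volume (Metric.ball (0 : En n) 2) * S) := by
  set P : En n → ENNReal := fun u => ∫⁻ t, φ (u - t) ∂ρ with hP
  set Q : En n → ENNReal := fun u => ∫⁻ t, φ (u - t) ∂σ with hQ
  set W : ENNReal := ∫⁻ v, φ v * ENNReal.ofReal (‖v‖^2) with hW
  have hPm : Measurable P := (hφ.comp (by fun_prop : Measurable fun p : En n × En n => p.1 - p.2)).lintegral_prod_right'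
  have hQm : Measurable Q := (hφ.comp (by fun_prop : Measurable fun p : En n × En n => p.1 - p.2)).lintegral_prod_right'
  have hP0 : ∀ u, P u ≠ 0 := by
    intro u h
    rw [hP] at h
    simp only at h
    rw [lintegral_eq_zero_iff (meas_sub hφ u)] at h
    obtain ⟨t, ht⟩ := h.exists
    exact hφ0 _ ht
  have hQ0 : ∀ u, Q u ≠ 0 := by
    intro u h
    rw [hQ] at h
    simp only at h
    rw [lintegral_eq_zero_iff (meas_sub hφ u)] at h
    obtain ⟨t, ht⟩ := h.exists
    exact hφ0 _ ht
  have hPt : ∀ u, P u ≠ ⊤ := by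
    intro u
    have : P u ≤ ∫⁻ t, (B:ENNReal) ∂ρ := lintegral_mono fun t => hφb _
    rw [lintegral_const, measure_univ, mul_one] at this
    exact ne_top_of_le_ne_top ENNReal.coe_ne_top this
  have hQt : ∀ u, Q u ≠ ⊤ := by
    intro u
    have : Q u ≤ ∫⁻ t, (B:ENNReal) ∂σ := lintegral_mono fun t => hφb _
    rw [lintegral_const, measure_univ, mul_one] at this
    exact ne_top_of_le_ne_top ENNReal.coe_ne_top this
  set w : En n → ENNReal := fun u => min (P u) (Q u) * (P u)⁻¹ * (Q u)⁻¹ with hw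
  have hwm : Measurable w := ((hPm.min hQm).mul hPm.inv).mul hQm.inv
  have hwQ : ∀ u, w u * Q u ≤ 1 := by
    intro u
    simp only [hw]
    rw [mul_assoc _ _ (Q u), ENNReal.inv_mul_cancel (hQ0 u) (hQt u), mul_one]
    calc min (P u) (Q u) * (P u)⁻¹ ≤ P u * (P u)⁻¹ := by gcongr; exact min_le_left _ _
      _ = 1 := ENNReal.mul_inv_cancel (hP0 u) (hPt u)
  have hwP : ∀ u, w u * P u ≤ 1 := by
    intro u
    simp only [hw]
    rw [mul_right_comm, mul_assoc _ _ (P u), ENNReal.inv_mul_cancel (hP0 u) (hPt u), mul_one]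
    calc min (P u) (Q u) * (Q u)⁻¹ ≤ Q u * (Q u)⁻¹ := by gcongr; exact min_le_right _ _
      _ = 1 := ENNReal.mul_inv_cancel (hQ0 u) (hQt u)
  have hwPQ : ∀ u, w u * P u * Q u = min (P u) (Q u) := by
    intro u
    simp only [hw]
    rw [mul_right_comm _ _ (P u), mul_assoc _ _ (P u), ENNReal.inv_mul_cancel (hP0 u) (hPt u), mul_one,
      mul_assoc, ENNReal.inv_mul_cancel (hQ0 u) (hQt u), mul_one]
  set γ := (ρ.prod σ).withDensity (glueDens φ w) with hγ
  have htr : ∀ (t : En n) (f : En n → ENNReal), ∫⁻ u, φ (u - t) * f (u - t) = ∫⁻ u, φ u * f u := fun t f =>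
    lintegral_sub_right_eq_self (fun u => φ u * f u) t
  have htr1 : ∀ (t : En n), ∫⁻ u, φ (u - t) = 1 := fun t => by
    rw [lintegral_sub_right_eq_self (fun u => φ u) t, hφ1]
  have hg1 : γ.fst ≤ ρ := by
    refine Measure.le_iff.2 fun A hA => ?_
    rw [Measure.fst_apply hA, ← lintegral_indicator_one (measurable_fst hA),
      glue_lint ρ σ φ w hφ hwm _ (measurable_one.indicator (measurable_fst hA))]
    refine (inner_bound ρ σ φ w hφ hwQ (fun _ t => A.indicator 1 t) ((measurable_one.indicator hA).comp measurable_snd)).trans ?_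
    rw [← lintegral_indicator_one hA]
    refine lintegral_mono fun t => ?_
    rw [lintegral_mul_const _ (meas_sub' hφ t), htr1, one_mul]
  have hg2 : γ.snd ≤ σ := by
    refine Measure.le_iff.2 fun A hA => ?_
    rw [Measure.snd_apply hA, ← lintegral_indicator_one (measurable_snd hA),
      glue_lint ρ σ φ w hφ hwm _ (measurable_one.indicator (measurable_snd hA)),
      glue_swap ρ σ φ w hφ (fun _ => (Prod.snd ⁻¹' A).indicator 1) (fun _ => (measurable_one.indicator (measurable_snd hA)))]
    refine (inner_bound σ ρ φ w hφ hwP (fun _ t => A.indicator 1 t) ((measurable_one.indicator hA).comp measurable_snd)).trans ?_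
    rw [← lintegral_indicator_one hA]
    refine lintegral_mono fun t => ?_
    rw [lintegral_mul_const _ (meas_sub' hφ t), htr1, one_mul]
  obtain ⟨τ, ht1, ht2, ht3⟩ := complete_coupling ρ σ γ hg1 hg2
  refine ⟨γ + τ, ht1, ht2, ?_⟩
  have hγb := glue_moment ρ σ φ w hφ hwm hwQ hwP
  have hγu : γ Set.univ = ∫⁻ u, min (P u) (Q u) := by
    rw [← lintegral_one, glue_lint ρ σ φ w hφ hwm _ measurable_const]
    refine lintegral_congr fun u => ?_
    rw [← hwPQ]
    simp only [mul_one]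
    have : ∀ t, ∫⁻ s, w u * φ (u - t) * φ (u - s) ∂σ = w u * Q u * φ (u - t) := by
      intro t
      rw [lintegral_const_mul _ (meas_sub hφ u), mul_right_comm]
    simp only [this]
    rw [lintegral_const_mul _ (meas_sub hφ u), mul_right_comm]
  have hPint : ∫⁻ u, P u = 1 := by
    rw [hP, lintegral_lintegral_swap (f := fun u t => φ (u - t))
      (hφ.comp (by fun_prop : Measurable fun p : En n × En n => p.1 - p.2)).aemeasurable]
    simp [htr1]
  have hτ : τ Set.univ ≤ W + volume (Metric.ball (0 : En n) 2) * S := by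
    rw [ht3, hγu, tsub_le_iff_left, ← hPint]
    calc ∫⁻ u, P u ≤ ∫⁻ u, (min (P u) (Q u) + ((∫⁻ t, φ (u - t) * ENNReal.ofReal (‖u - t‖^2) ∂ρ) + (Metric.ball (0 : En n) 2).indicator (fun _ => S) u)) := by
          refine lintegral_mono fun u => ?_
          simp only
          by_cases hu : u ∈ Metric.ball (0 : En n) 2
          · rw [Set.indicator_of_mem hu]
            have h3 : P u ≤ min (P u) (Q u) + S := by
              rcases min_choice (P u) (Q u) with h | h
              · rw [h]; exact le_self_add
              · rw [h]; exact hS u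
            refine h3.trans ?_
            gcongr
            exact le_add_self
          · have h3 : P u ≤ ∫⁻ t, φ (u - t) * ENNReal.ofReal (‖u - t‖^2) ∂ρ := by
              refine lintegral_mono_ae ?_
              filter_upwards [hρ] with t ht
              refine le_mul_of_one_le_right' ?_
              rw [← ENNReal.ofReal_one]
              apply ENNReal.ofReal_le_ofReal
              rw [mem_ball_zero_iff, not_lt] at hu
              have := norm_sub_norm_le u t
              nlinarith
            refine h3.trans ?_
            rw [← add_assoc]
            exact le_add_right le_add_self
      _ = (∫⁻ u, min (P u) (Q u)) + (W + volume (Metric.ball (0 : En n) 2) * S) := by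
          have hm2 : Measurable fun p : En n × En n => φ (p.1 - p.2) * ENNReal.ofReal (‖p.1 - p.2‖^2) :=
            Measurable.mul (hφ.comp (by fun_prop)) (by fun_prop)
          rw [lintegral_add_left (hPm.min hQm), lintegral_add_left hm2.lintegral_prod_right',
            lintegral_lintegral_swap hm2.aemeasurable, lintegral_indicator_const Metric.isOpen_ball.measurableSet, mul_comm S]
          simp only [htr _ (fun v => ENNReal.ofReal (‖v‖^2)), lintegral_const, measure_univ, mul_one]
          rfl
  have hτb : ∫⁻ p, ENNReal.ofReal (‖p.1 - p.2‖^2) ∂τ ≤ 4 * τ Set.univ := by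
    rw [← lintegral_const]
    refine lintegral_mono_ae ?_
    have ha1 : ∀ᵐ p ∂(γ+τ), ‖p.1‖ = 1 := by
      rw [← ht1] at hρ; exact ae_of_ae_map measurable_fst.aemeasurable hρ
    have ha2 : ∀ᵐ p ∂(γ+τ), ‖p.2‖ = 1 := by
      rw [← ht2] at hσ; exact ae_of_ae_map measurable_snd.aemeasurable hσ
    rw [ae_add_measure_iff] at ha1 ha2
    filter_upwards [ha1.2, ha2.2] with p h1 h2
    rw [show (4:ENNReal) = ENNReal.ofReal 4 by simp]
    apply ENNReal.ofReal_le_ofReal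
    have := norm_sub_le p.1 p.2
    nlinarith [norm_nonneg (p.1 - p.2)]
  rw [lintegral_add_measure]
  calc _ ≤ 4 * W + 4 * (W + volume (Metric.ball (0 : En n) 2) * S) := by
        refine add_le_add hγb (hτb.trans ?_)
        gcongr
    _ = _ := by ring

/-! ### Gaussian mollification -/

lemma gauss_int {n : ℕ} (b : ℝ) (hb : 0 < b) : Integrable (fun v : En n => Real.exp (-b * ‖v‖^2)) ∧
    ∫ v : En n, Real.exp (-b * ‖v‖^2) = (√(π/b))^n := by
  have h := GaussianFourier.integral_rexp_neg_mul_sq_norm (V := En n) hb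
  have h2 : (π / b) ^ ((n:ℝ) / 2 : ℝ) = (√(π/b))^n := by
    rw [Real.sqrt_eq_rpow, ← Real.rpow_natCast, ← Real.rpow_mul (by positivity)]; congr 1; ring
  rw [finrank_euclideanSpace, Fintype.card_fin, h2] at h
  refine ⟨?_, h⟩
  by_contra hc
  rw [integral_undef hc] at h
  have : 0 < (√(π/b))^n := by positivity
  linarith

/-- The Gaussian probability density at scale `η`. -/
def gker (n : ℕ) (η : ℝ) (v : En n) : ℝ := (η⁻¹)^n * Real.exp (-(π/η^2) * ‖v‖^2)

lemma gker_pos {n : ℕ} {η : ℝ} (hη : 0 < η) (v : En n) : 0 < gker n η v := by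
  unfold gker; positivity

lemma gker_cont {n : ℕ} {η : ℝ} : Continuous (gker n η) := by
  unfold gker; fun_prop

lemma gker_le {n : ℕ} {η : ℝ} (hη : 0 < η) (v : En n) : gker n η v ≤ (η⁻¹)^n := by
  unfold gker
  refine mul_le_of_le_one_right (by positivity) (Real.exp_le_one_iff.2 ?_)
  have : 0 ≤ π/η^2 * ‖v‖^2 := by positivity
  linarith

lemma gker_one {n : ℕ} {η : ℝ} (hη : 0 < η) : ∫⁻ v : En n, ENNReal.ofReal (gker n η v) = 1 := by
  obtain ⟨h1, h2⟩ := gauss_int (n := n) (π/η^2) (by positivity)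
  rw [← ofReal_integral_eq_lintegral_ofReal]
  · unfold gker
    rw [integral_const_mul, h2, div_div_cancel₀ Real.pi_ne_zero, Real.sqrt_sq hη.le, ← mul_pow, inv_mul_cancel₀ hη.ne']
    simp
  · exact h1.const_mul _
  · exact ae_of_all _ fun v => (gker_pos hη v).le

lemma gker_moment {n : ℕ} {η : ℝ} (hη : 0 < η) :
    ∫⁻ v : En n, ENNReal.ofReal (gker n η v) * ENNReal.ofReal (‖v‖^2) ≤ ENNReal.ofReal ((2/π) * √2^n * η^2) := by
  obtain ⟨h1, h2⟩ := gauss_int (n := n) (π/(2*η^2)) (by positivity)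
  have h3 : (2/π) * √2^n * η^2 = ∫ v : En n, ((2*η^2/π) * (η⁻¹)^n) * Real.exp (-(π/(2*η^2)) * ‖v‖^2) := by
    rw [integral_const_mul, h2, div_div_cancel₀ Real.pi_ne_zero, Real.sqrt_mul (by norm_num), Real.sqrt_sq hη.le, mul_pow]
    have : (η⁻¹)^n * η^n = 1 := by rw [← mul_pow, inv_mul_cancel₀ hη.ne', one_pow]
    linear_combination (-(2/π) * √2^n * η^2) * this
  rw [h3, ofReal_integral_eq_lintegral_ofReal (h1.const_mul _) (ae_of_all _ fun v => by positivity)]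
  refine lintegral_mono fun v => ?_
  rw [← ENNReal.ofReal_mul (gker_pos hη v).le]
  apply ENNReal.ofReal_le_ofReal
  unfold gker
  set x := π/(2*η^2) * ‖v‖^2 with hx
  have e1 : -(π/η^2) * ‖v‖^2 = -x + -x := by rw [hx]; field_simp; ring
  have e2 : ‖v‖^2 = (2*η^2/π) * x := by rw [hx]; field_simp
  have e3 : -(π/(2*η^2)) * ‖v‖^2 = -x := by rw [hx]; ring
  rw [e1, e3, e2, Real.exp_add]
  have hx0 : 0 ≤ x := by positivity
  have h4 : Real.exp (-x) * x ≤ 1 := by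
    have := Real.add_one_le_exp x
    rw [Real.exp_neg, inv_mul_le_iff₀ (Real.exp_pos _)]; linarith
  calc (η⁻¹)^n * (Real.exp (-x) * Real.exp (-x)) * ((2*η^2/π) * x) = ((2*η^2/π) * (η⁻¹)^n) * Real.exp (-x) * (Real.exp (-x) * x) := by ring
    _ ≤ ((2*η^2/π) * (η⁻¹)^n) * Real.exp (-x) * 1 := by gcongr
    _ = _ := by ring

/-- Fourier inversion for the Gaussian. -/
lemma gker_fourier {n : ℕ} {η : ℝ} (hη : 0 < η) (v : En n) :
    (gker n η v : ℂ) = ∫ ξ : En n, (Real.exp (-(π*η^2) * ‖ξ‖^2) : ℂ) * ee ξ v := by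
  have hb : 0 < ((π*η^2 : ℝ) : ℂ).re := by rw [Complex.ofReal_re]; positivity
  have h := GaussianFourier.integral_cexp_neg_mul_sq_norm_add hb (2*π*Complex.I) v
  have h2 : ∀ ξ : En n, (Real.exp (-(π*η^2) * ‖ξ‖^2) : ℂ) * ee ξ v = Complex.exp (-((π*η^2:ℝ):ℂ) * ‖ξ‖^2 + 2*π*Complex.I * (inner ℝ v ξ : ℝ)) := by
    intro ξ
    rw [ee_inner, Complex.ofReal_exp, ← Complex.exp_add, real_inner_comm]
    congr 1; push_cast; ring
  simp only [h2]
  rw [h, gker, finrank_euclideanSpace, Fintype.card_fin]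
  push_cast
  congr 1
  · have h3 : (π:ℂ) / (π * η^2) = (((η⁻¹)^2 : ℝ) : ℂ) := by
      push_cast
      have : (π:ℂ) ≠ 0 := by exact_mod_cast Real.pi_ne_zero
      have : (η:ℂ) ≠ 0 := by exact_mod_cast hη.ne'
      field_simp
    have h4 : ((n:ℂ)/2) = (((n:ℝ)/2 : ℝ):ℂ) := by push_cast; rfl
    rw [h3, h4, ← Complex.ofReal_cpow (by positivity)]
    norm_cast
    rw [← Real.rpow_natCast (η⁻¹) 2, ← Real.rpow_mul (by positivity), ← Real.rpow_natCast]
    congr 1; push_cast; ring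
  · congr 1
    have : (π:ℂ) ≠ 0 := by exact_mod_cast Real.pi_ne_zero
    have : (η:ℂ) ≠ 0 := by exact_mod_cast hη.ne'
    field_simp
    rw [Complex.I_sq]; ring

/-- Polynomial growth is absorbed by half of the Gaussian decay. -/
lemma gauss_poly {n : ℕ} {η : ℝ} (hη : 0 < η) (hη1 : η ≤ 1) (ξ : En n) :
    Real.exp (-(π*η^2) * ‖ξ‖^2) * (1+‖ξ‖)^n ≤ ((η⁻¹)^n * n.factorial * Real.exp 2) * Real.exp (-(π*η^2/2) * ‖ξ‖^2) := by
  set x := η * ‖ξ‖ with hx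
  have hx0 : 0 ≤ x := by positivity
  have h1 : (1+‖ξ‖)^n ≤ (η⁻¹)^n * (1+x)^n := by
    rw [← mul_pow]
    gcongr
    rw [hx, mul_add, inv_mul_cancel_left₀ hη.ne', mul_one]
    gcongr
    exact (one_le_inv₀ hη).2 hη1
  have h2 : (1+x)^n ≤ n.factorial * (Real.exp 2 * Real.exp (π*η^2/2 * ‖ξ‖^2)) := by
    have := Real.pow_div_factorial_le_exp (1+x) (by positivity) n
    rw [div_le_iff₀ (by positivity)] at this
    refine this.trans ?_
    rw [mul_comm, ← Real.exp_add]
    refine mul_le_mul_of_nonneg_left (Real.exp_le_exp.2 ?_) (by positivity)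
    have e : π*η^2/2 * ‖ξ‖^2 = π/2*x^2 := by rw [hx]; ring
    rw [e]
    nlinarith [Real.pi_gt_three, sq_nonneg (x-1), sq_nonneg x]
  have e : Real.exp (-(π*η^2) * ‖ξ‖^2) * Real.exp (π*η^2/2 * ‖ξ‖^2) = Real.exp (-(π*η^2/2) * ‖ξ‖^2) := by
    rw [← Real.exp_add]; congr 1; ring
  calc Real.exp (-(π*η^2) * ‖ξ‖^2) * (1+‖ξ‖)^n
      ≤ Real.exp (-(π*η^2) * ‖ξ‖^2) * ((η⁻¹)^n * (n.factorial * (Real.exp 2 * Real.exp (π*η^2/2 * ‖ξ‖^2)))) := by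
        gcongr; exact h1.trans (by gcongr)
    _ = ((η⁻¹)^n * n.factorial * Real.exp 2) * (Real.exp (-(π*η^2) * ‖ξ‖^2) * Real.exp (π*η^2/2 * ‖ξ‖^2)) := by ring
    _ = _ := by rw [e]

lemma ee_sub {n : ℕ} (ξ u t : En n) : ee ξ (u - t) = ee ξ u * ee (-ξ) t := by
  rw [ee_inner, ee_inner, ee_inner, ← Complex.exp_add]
  congr 1
  rw [inner_sub_right, inner_neg_left]; push_cast; ring

/-- The mollified density of `ρ` as an integral over frequencies. -/
lemma gker_conv {n : ℕ} {η : ℝ} (hη : 0 < η) (ρ : Measure (En n)) [IsProbabilityMeasure ρ] (u : En n) :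
    Integrable (fun ξ : En n => (Real.exp (-(π*η^2) * ‖ξ‖^2) : ℂ) * ee ξ u * ∫ t, ee (-ξ) t ∂ρ) ∧
    ((∫ t, gker n η (u - t) ∂ρ : ℝ) : ℂ) = ∫ ξ : En n, (Real.exp (-(π*η^2) * ‖ξ‖^2) : ℂ) * ee ξ u * ∫ t, ee (-ξ) t ∂ρ := by
  have hg := (gauss_int (n := n) (π*η^2) (by positivity)).1
  have hint : Integrable (Function.uncurry fun (t ξ : En n) => (Real.exp (-(π*η^2) * ‖ξ‖^2) : ℂ) * ee ξ (u - t)) (ρ.prod volume) := by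
    refine Integrable.mono' (hg.comp_snd ρ) ?_ (ae_of_all _ fun p => ?_)
    · apply Continuous.aestronglyMeasurable
      have h1 := continuous_ee.comp (by fun_prop : Continuous fun p : En n × En n => (p.2, u - p.1))
      exact (by fun_prop : Continuous fun p : En n × En n => (Real.exp (-(π*η^2) * ‖p.2‖^2) : ℂ)).mul h1
    · simp only [Function.uncurry]
      rw [norm_mul, norm_ee, mul_one, Complex.norm_real, Real.norm_of_nonneg (Real.exp_pos _).le]
  have hpt : ∀ ξ : En n, ∫ t, (Real.exp (-(π*η^2) * ‖ξ‖^2) : ℂ) * ee ξ (u - t) ∂ρ = (Real.exp (-(π*η^2) * ‖ξ‖^2) : ℂ) * ee ξ u * ∫ t, ee (-ξ) t ∂ρ := by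
    intro ξ
    rw [← integral_const_mul]
    refine integral_congr_ae (ae_of_all _ fun t => ?_)
    simp only [ee_sub]; ring
  constructor
  · have := hint.integral_prod_right
    refine this.congr (ae_of_all _ fun ξ => ?_)
    simp only [Function.uncurry]
    exact hpt ξ
  · rw [← integral_complex_ofReal]
    simp only [gker_fourier hη]
    rw [integral_integral_swap hint]
    simp only [hpt]

/-- A bound on the difference of Fourier transforms controls the difference of mollified densities pointwise. -/
lemma gker_diff {n : ℕ} {η : ℝ} (hη : 0 < η) (hη1 : η ≤ 1) (ρ σ : Measure (En n)) [IsProbabilityMeasure ρ] [IsProbabilityMeasure σ]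
    (A : ℝ) (hA : 0 ≤ A) (h : ∀ ξ, ‖∫ t, ee ξ t ∂ρ - ∫ t, ee ξ t ∂σ‖ ≤ A * (1+‖ξ‖)^n) (u : En n) :
    ∫ t, gker n η (u - t) ∂ρ ≤ ∫ t, gker n η (u - t) ∂σ + A * ((n.factorial * Real.exp 2 * √2^n) * (η⁻¹)^(2*n)) := by
  obtain ⟨i1, e1⟩ := gker_conv hη ρ u
  obtain ⟨i2, e2⟩ := gker_conv hη σ u
  obtain ⟨g1, g2⟩ := gauss_int (n := n) (π*η^2/2) (by positivity)
  have hb : ‖((∫ t, gker n η (u - t) ∂ρ : ℝ) : ℂ) - ((∫ t, gker n η (u - t) ∂σ : ℝ) : ℂ)‖ ≤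
      ∫ ξ : En n, A * (((η⁻¹)^n * n.factorial * Real.exp 2) * Real.exp (-(π*η^2/2) * ‖ξ‖^2)) := by
    rw [e1, e2, ← integral_sub i1 i2]
    refine norm_integral_le_of_norm_le ((g1.const_mul _).const_mul _) (ae_of_all _ fun ξ => ?_)
    rw [← mul_sub, norm_mul, norm_mul, norm_ee, mul_one, Complex.norm_real, Real.norm_of_nonneg (Real.exp_pos _).le]
    have := h (-ξ)
    rw [norm_neg] at this
    calc _ ≤ Real.exp (-(π*η^2) * ‖ξ‖^2) * (A * (1+‖ξ‖)^n) := by gcongr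
      _ = A * (Real.exp (-(π*η^2) * ‖ξ‖^2) * (1+‖ξ‖)^n) := by ring
      _ ≤ _ := mul_le_mul_of_nonneg_left (gauss_poly hη hη1 ξ) hA
  rw [integral_const_mul, integral_const_mul, g2] at hb
  have e3 : √(π/(π*η^2/2)) = √2 * η⁻¹ := by
    rw [show π/(π*η^2/2) = 2 * (η⁻¹)^2 by field_simp, Real.sqrt_mul (by norm_num), Real.sqrt_sq (by positivity)]
  rw [e3, ← Complex.ofReal_sub, Complex.norm_real, Real.norm_eq_abs] at hb
  have h5 := (le_abs_self _).trans hb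
  have e4 : A * (((η⁻¹)^n * n.factorial * Real.exp 2) * (√2 * η⁻¹)^n) = A * ((n.factorial * Real.exp 2 * √2^n) * (η⁻¹)^(2*n)) := by
    rw [mul_pow, two_mul, pow_add]; ring
  rw [e4] at h5
  linarith

/-- Closeness of Fourier transforms gives a coupling with small transport cost. -/
theorem coupling_fourier (n : ℕ) : ∃ K : ℝ, 0 < K ∧ ∀ (ρ σ : Measure (En n)) [IsProbabilityMeasure ρ] [IsProbabilityMeasure σ],
    (∀ᵐ t ∂ρ, ‖t‖ = 1) → (∀ᵐ t ∂σ, ‖t‖ = 1) → ∀ A : ℝ, 0 ≤ A →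
    (∀ ξ, ‖∫ t, ee ξ t ∂ρ - ∫ t, ee ξ t ∂σ‖ ≤ A * (1+‖ξ‖)^n) → ∀ η : ℝ, 0 < η → η ≤ 1 →
    ∃ θ : Measure (En n × En n), θ.fst = ρ ∧ θ.snd = σ ∧
      ∫⁻ p, ENNReal.ofReal (‖p.1 - p.2‖^2) ∂θ ≤ ENNReal.ofReal (K * (η^2 + A * (η⁻¹)^(2*n))) := by
  set V := (volume (Metric.ball (0 : En n) 2)).toReal with hV
  refine ⟨8 * ((2/π) * √2^n) + 4 * V * (n.factorial * Real.exp 2 * √2^n), by positivity, ?_⟩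
  intro ρ σ _ _ hρ hσ A hA h η hη hη1
  have hint : ∀ (μ : Measure (En n)) [IsProbabilityMeasure μ] (u : En n), Integrable (fun t => gker n η (u - t)) μ := by
    intro μ _ u
    refine Integrable.of_bound (C := (η⁻¹)^n) (gker_cont.comp (by fun_prop : Continuous fun t : En n => u - t)).aestronglyMeasurable (ae_of_all _ fun t => ?_)
    rw [Real.norm_of_nonneg (gker_pos hη _).le]; exact gker_le hη _
  obtain ⟨θ, h1, h2, h3⟩ := coupling ρ σ hρ hσ (fun v => ENNReal.ofReal (gker n η v)) gker_cont.measurable.ennreal_ofReal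
    (gker_one hη) (Real.toNNReal ((η⁻¹)^n)) (fun v => ENNReal.ofReal_le_ofReal (gker_le hη v))
    (fun v => (ENNReal.ofReal_pos.2 (gker_pos hη v)).ne')
    (ENNReal.ofReal (A * ((n.factorial * Real.exp 2 * √2^n) * (η⁻¹)^(2*n)))) (fun u => by
      rw [← ofReal_integral_eq_lintegral_ofReal (hint ρ u) (ae_of_all _ fun v => (gker_pos hη _).le),
        ← ofReal_integral_eq_lintegral_ofReal (hint σ u) (ae_of_all _ fun v => (gker_pos hη _).le),
        ← ENNReal.ofReal_add (integral_nonneg fun v => (gker_pos hη _).le) (by positivity)]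
      exact ENNReal.ofReal_le_ofReal (gker_diff hη hη1 ρ σ A hA h u))
  refine ⟨θ, h1, h2, h3.trans ?_⟩
  have hVe : volume (Metric.ball (0 : En n) 2) = ENNReal.ofReal V := (ENNReal.ofReal_toReal measure_ball_lt_top.ne).symm
  have h8 : (8:ENNReal) = ENNReal.ofReal 8 := by simp
  have h4 : (4:ENNReal) = ENNReal.ofReal 4 := by simp
  calc _ ≤ ENNReal.ofReal 8 * ENNReal.ofReal ((2/π) * √2^n * η^2) + ENNReal.ofReal 4 * (ENNReal.ofReal V * ENNReal.ofReal (A * ((n.factorial * Real.exp 2 * √2^n) * (η⁻¹)^(2*n)))) := by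
        rw [hVe, h8, h4]
        gcongr
        exact gker_moment hη
    _ = ENNReal.ofReal (8 * ((2/π) * √2^n * η^2) + 4 * (V * (A * ((n.factorial * Real.exp 2 * √2^n) * (η⁻¹)^(2*n))))) := by
        rw [← ENNReal.ofReal_mul (by positivity), ← ENNReal.ofReal_mul (by positivity), ← ENNReal.ofReal_mul (by positivity), ← ENNReal.ofReal_add (by positivity) (by positivity)]
    _ ≤ _ := by
        apply ENNReal.ofReal_le_ofReal
        have p1 : 0 ≤ 4 * V * (n.factorial * Real.exp 2 * √2^n) * η^2 := by positivity
        have p2 : 0 ≤ 8 * ((2/π) * √2^n) * (A * (η⁻¹)^(2*n)) := by positivity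
        nlinarith

/-! ### The coupling of `ρ_m` and `σ` -/

/-- The choice of scale is `η = m^{-δ/2}`, where `m^{-δ}` is the asserted rate. It is admissible because
`(n+1)δ ≤ n/4 - 9/8`. -/
theorem coupling_final (n : ℕ) (hn : 5 ≤ n) : ∃ K : ℝ, 0 < K ∧ ∀ m : ℕ, 1 ≤ m →
    ∃ θ : Measure (En n × En n), θ.fst = rhoM n m ∧ θ.snd = unifSphere n ∧
      ∫⁻ p, ENNReal.ofReal (‖p.1 - p.2‖^2) ∂θ ≤
        ENNReal.ofReal (K * (m:ℝ) ^ (-((n : ℝ) - 3) / (2 * (3 * (n : ℝ) - 2) * ((n : ℝ) + 1)))) := by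
  obtain ⟨K, hK, hc⟩ := coupling_fourier n
  obtain ⟨C, hC, hF⟩ := FT_diff n hn
  refine ⟨K * (1 + C), by positivity, fun m hm => ?_⟩
  have := rhoM_prob n m hn hm
  have := unif_prob n (by omega)
  have hm1 : (1:ℝ) ≤ m := by exact_mod_cast hm
  have h0 : (0:ℝ) < m := by linarith
  have hn' : (5:ℝ) ≤ n := by exact_mod_cast hn
  set δ := ((n : ℝ) - 3) / (2 * (3 * (n : ℝ) - 2) * ((n : ℝ) + 1)) with hδ
  have hneg : -((n : ℝ) - 3) / (2 * (3 * (n : ℝ) - 2) * ((n : ℝ) + 1)) = -δ := by rw [hδ, neg_div]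
  rw [hneg]
  have hd1 : 0 < 3 * (n:ℝ) - 2 := by linarith
  have hδ0 : 0 ≤ δ := by
    apply div_nonneg
    · linarith
    · positivity
  have hδ1 : (n+1) * δ ≤ (n:ℝ)/4 - 9/8 := by
    have : (n+1) * δ = ((n : ℝ) - 3) / (2 * (3 * (n : ℝ) - 2)) := by rw [hδ]; field_simp
    rw [this, div_le_iff₀ (by positivity)]
    nlinarith
  obtain ⟨θ, h1, h2, h3⟩ := hc (rhoM n m) (unifSphere n) (rhoM_ae n m hm) (unif_ae n) (C * (m:ℝ)^(9/8 - (n:ℝ)/4)) (by positivity)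
    (hF m hm) ((m:ℝ)^(-δ/2)) (by positivity) (Real.rpow_le_one_of_one_le_of_nonpos hm1 (by linarith))
  refine ⟨θ, h1, h2, h3.trans (ENNReal.ofReal_le_ofReal ?_)⟩
  have e1 : ((m:ℝ)^(-δ/2))^2 = (m:ℝ)^(-δ) := by
    rw [← Real.rpow_natCast, ← Real.rpow_mul h0.le]; congr 1; push_cast; ring
  have e2 : (((m:ℝ)^(-δ/2))⁻¹)^(2*n) = (m:ℝ)^(n*δ) := by
    rw [← Real.rpow_neg h0.le, ← Real.rpow_natCast, ← Real.rpow_mul h0.le]; congr 1; push_cast; ring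
  have e3 : (m:ℝ)^(9/8 - (n:ℝ)/4) * (m:ℝ)^(n*δ) ≤ (m:ℝ)^(-δ) := by
    rw [← Real.rpow_add h0]
    apply Real.rpow_le_rpow_of_exponent_le hm1
    linarith
  rw [e1, e2, mul_assoc K]
  gcongr
  rw [add_mul, one_mul, mul_assoc]
  gcongr

/-! ### Isonormal Gaussian processes -/

lemma norm_exp_sub_le (a b : ℝ) : ‖Complex.exp (Complex.I * a) - Complex.exp (Complex.I * b)‖ ≤ |a - b| := by
  have h : Complex.exp (Complex.I * a) - Complex.exp (Complex.I * b)
      = Complex.exp (b * Complex.I) * (Complex.exp (Complex.I * ((a-b : ℝ):ℂ)) - 1) := by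
    rw [mul_sub, ← Complex.exp_add, mul_one]; congr 2
    · push_cast; ring
    · ring
  rw [h, norm_mul, Complex.norm_exp_ofReal_mul_I, one_mul]
  exact Real.norm_exp_I_mul_ofReal_sub_one_le

/-- Characteristic functions depend continuously on the random variable in `L²`. -/
lemma charFun_Lp_lipschitz {Ω : Type} [MeasurableSpace Ω] (P : Measure Ω) [IsProbabilityMeasure P]
    (t : ℝ) (X Y : Lp ℝ 2 P) :
    ‖(∫ ω, Complex.exp (Complex.I * ((t * X ω : ℝ):ℂ)) ∂P) - ∫ ω, Complex.exp (Complex.I * ((t * Y ω : ℝ):ℂ)) ∂P‖ ≤ |t| * ‖X - Y‖ := by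
  have hint : ∀ Z : Lp ℝ 2 P, Integrable (fun ω => Complex.exp (Complex.I * ((t * Z ω : ℝ):ℂ))) P := by
    intro Z
    refine Integrable.of_bound (C := 1) ?_ (ae_of_all _ fun ω => ?_)
    · have := (Lp.aestronglyMeasurable Z).aemeasurable
      exact (by fun_prop : AEMeasurable (fun ω => Complex.exp (Complex.I * ((t * Z ω : ℝ):ℂ))) P).aestronglyMeasurable
    · rw [mul_comm, Complex.norm_exp_ofReal_mul_I]
  rw [← integral_sub (hint X) (hint Y)]
  have hm := (Lp.memLp (X - Y)).mono_exponent (p := 1) (by norm_num)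
  calc _ ≤ ∫ ω, |t| * ‖(X - Y) ω‖ ∂P := by
        refine norm_integral_le_of_norm_le ((memLp_one_iff_integrable.1 hm).norm.const_mul _) ?_
        filter_upwards [Lp.coeFn_sub X Y] with ω h
        rw [h]
        refine (norm_exp_sub_le _ _).trans (le_of_eq ?_)
        rw [← mul_sub, abs_mul]; rfl
    _ = |t| * (eLpNorm (X - Y : Lp ℝ 2 P) 1 P).toReal := by
        rw [integral_const_mul, eLpNorm_one_eq_lintegral_enorm, integral_norm_eq_lintegral_enorm (Lp.aestronglyMeasurable _)]
    _ ≤ _ := by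
        rw [Lp.norm_def]
        gcongr
        · exact (Lp.memLp (X-Y)).eLpNorm_ne_top
        · exact eLpNorm_le_eLpNorm_of_exponent_le (by norm_num) (Lp.aestronglyMeasurable _)

lemma gauss_combo {ι Ω : Type} [MeasurableSpace Ω] (P : Measure Ω) [IsProbabilityMeasure P] (X : ι → Ω → ℝ)
    (hX : ∀ i, HasLaw (X i) (gaussianReal 0 1) P) (hI : iIndepFun X P) (s : Finset ι) (a : ι → ℝ) :
    HasGaussianLaw (fun ω => ∑ i ∈ s, a i * X i ω) P := by
  have h1 : ∀ i : s, HasGaussianLaw (fun ω => a i * X i ω) P := fun i => by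
    have := (hX i).hasGaussianLaw.fun_smul (a i)
    simpa using this
  have h2 : iIndepFun (fun (i : s) ω => a i * X i ω) P :=
    (hI.precomp Subtype.val_injective).comp (fun (i : s) x => a i * x) (fun i => by fun_prop)
  have := iIndepFun.hasGaussianLaw_fun_sum h1 h2
  have e : (fun ω => ∑ i ∈ s, a i * X i ω) = fun ω => ∑ i : s, a i * X i ω := by
    funext ω; rw [← Finset.sum_coe_sort]
  rw [e]; exact this

/-- An orthonormal family of `L²` random variables, all of whose finite combinations are Gaussian. -/
lemma gauss_basis (ι : Type) : ∃ (Ω : Type) (_ : MeasurableSpace Ω) (P : Measure Ω) (_ : IsProbabilityMeasure P)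
    (e : ι → Lp ℝ 2 P), Orthonormal ℝ e ∧ ∀ (s : Finset ι) (a : ι → ℝ),
      P.map (∑ i ∈ s, a i • e i : Lp ℝ 2 P) = gaussianReal 0 (‖∑ i ∈ s, a i • e i‖₊^2) := by
  classical
  obtain ⟨Ω, mΩ, P, X, hXm, hX, hI, hP⟩ := exists_hasLaw_indepFun (fun _ : ι => ℝ) (fun _ => gaussianReal 0 1)
  have hL : ∀ i, MemLp (X i) 2 P := fun i => (hX i).hasGaussianLaw.memLp_two
  have h0 : ∀ i, ∫ ω, X i ω ∂P = 0 := fun i => by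
    rw [(hX i).integral_eq, integral_id_gaussianReal]
  have h2 : ∀ i, ∫ ω, X i ω * X i ω ∂P = 1 := fun i => by
    have := (hX i).variance_eq
    rw [variance_id_gaussianReal, variance_eq_sub (hL i), h0] at this
    simpa [pow_two] using this
  let e : ι → Lp ℝ 2 P := fun i => (hL i).toLp
  have he : ∀ i, e i =ᵐ[P] X i := fun i => (hL i).coeFn_toLp
  have hin : ∀ i j, inner ℝ (e i) (e j) = ∫ ω, X i ω * X j ω ∂P := by
    intro i j
    rw [L2.inner_def]
    refine integral_congr_ae ?_
    filter_upwards [he i, he j] with ω h h'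
    rw [h, h']; simp [mul_comm]
  have ho : Orthonormal ℝ e := by
    rw [orthonormal_iff_ite]
    intro i j
    rw [hin]
    split_ifs with h
    · rw [← h]; exact h2 i
    · rw [(hI.indepFun h).integral_fun_mul_eq_mul_integral (hXm i).aestronglyMeasurable (hXm j).aestronglyMeasurable, h0, zero_mul]
  refine ⟨Ω, mΩ, P, hP, e, ho, fun s a => ?_⟩
  have hs : (∑ i ∈ s, a i • e i : Lp ℝ 2 P) =ᵐ[P] fun ω => ∑ i ∈ s, a i * X i ω := by
    have h1 : ∀ᵐ ω ∂P, ∀ i ∈ s, (a i • e i : Lp ℝ 2 P) ω = a i * X i ω := by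
      refine (ae_ball_iff s.countable_toSet).2 ?_
      intro i hi
      filter_upwards [Lp.coeFn_smul (a i) (e i), he i] with ω h h'
      rw [h, Pi.smul_apply, h', smul_eq_mul]
    filter_upwards [h1, Lp.coeFn_finsetSum s (fun i => a i • e i)] with ω h1 h2
    rw [h2, Finset.sum_apply]
    exact Finset.sum_congr rfl fun i hi => h1 i hi
  have hg := (gauss_combo P X hX hI s a).congr hs.symm
  have hm : ∫ ω, (∑ i ∈ s, a i • e i : Lp ℝ 2 P) ω ∂P = 0 := by
    rw [integral_congr_ae hs, integral_finsetSum _ fun i _ => ((hX i).hasGaussianLaw.integrable.const_mul _)]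
    simp [integral_const_mul, h0]
  rw [hg.map_eq_gaussianReal, hm]
  congr 1
  rw [variance_eq_sub hg.memLp_two, hm]
  have : ‖∑ i ∈ s, a i • e i‖^2 = ∫ ω, ((∑ i ∈ s, a i • e i : Lp ℝ 2 P) ω)^2 ∂P := by
    rw [← real_inner_self_eq_norm_sq, L2.inner_def]
    simp [pow_two]
  apply NNReal.eq
  rw [Real.coe_toNNReal', max_eq_left]
  · simp [this]
  · simpa [← this] using (by positivity)

/-- Every real Hilbert space embeds isometrically in an `L²` space with Gaussian image: finite combinations of
a Hilbert basis are sent to Gaussians, and the law passes to limits through characteristic functions. -/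
theorem isonormal (H : Type) [NormedAddCommGroup H] [InnerProductSpace ℝ H] [CompleteSpace H] :
    ∃ (Ω : Type) (_ : MeasurableSpace Ω) (P : Measure Ω) (_ : IsProbabilityMeasure P)
    (W : H →ₗᵢ[ℝ] Lp ℝ 2 P), ∀ h, P.map (W h) = gaussianReal 0 (‖h‖₊^2) := by
  classical
  obtain ⟨ι, b, -⟩ := exists_hilbertBasis ℝ H
  obtain ⟨Ω, mΩ, P, hP, e, he, hg⟩ := gauss_basis ι
  let W : H →ₗᵢ[ℝ] Lp ℝ 2 P := he.orthogonalFamily.linearIsometry.comp b.repr.toLinearIsometry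
  have hWb : ∀ i, W (b i) = e i := by
    intro i
    change he.orthogonalFamily.linearIsometry (b.repr (b i)) = e i
    rw [b.repr_self, OrthogonalFamily.linearIsometry_apply_single]
    simp
  refine ⟨Ω, mΩ, P, hP, W, ?_⟩
  have key : ∀ t : ℝ, ∀ h : H, ∫ ω, Complex.exp (Complex.I * ((t * W h ω : ℝ):ℂ)) ∂P = Complex.exp (-((‖h‖:ℂ)^2 * t^2/2)) := by
    intro t
    have hd : Dense (Submodule.span ℝ (Set.range b) : Set H) := by
      rw [Submodule.dense_iff_topologicalClosure_eq_top]; exact b.dense_span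
    have hc : Continuous fun h : H => ∫ ω, Complex.exp (Complex.I * ((t * W h ω : ℝ):ℂ)) ∂P := by
      refine (LipschitzWith.of_dist_le_mul (K := ‖t‖₊) fun h k => ?_).continuous
      rw [dist_eq_norm, dist_eq_norm]
      refine (charFun_Lp_lipschitz P t (W h) (W k)).trans (le_of_eq ?_)
      rw [← map_sub, W.norm_map]; rfl
    refine fun h => hd.induction (P := fun h => ∫ ω, Complex.exp (Complex.I * ((t * W h ω : ℝ):ℂ)) ∂P = Complex.exp (-((‖h‖:ℂ)^2 * t^2/2))) ?_ ?_ h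
    · intro x hx
      obtain ⟨c, rfl⟩ := (Finsupp.mem_span_range_iff_exists_finsupp).1 hx
      have h1 : W (c.sum fun i a => a • b i) = ∑ i ∈ c.support, c i • e i := by
        rw [Finsupp.sum, map_sum]
        simp [hWb]
      have h3 := congrArg (fun μ => charFun μ t) (hg c.support c)
      simp only [charFun_gaussianReal] at h3
      rw [← h1, charFun_apply_real, integral_map (Lp.aestronglyMeasurable _).aemeasurable (by fun_prop), W.nnnorm_map] at h3
      convert h3 using 1
      · refine integral_congr_ae (ae_of_all _ fun ω => ?_)
        simp only []
        congr 1; push_cast; ring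
      · congr 1; push_cast; simp;
    · exact isClosed_eq hc (by fun_prop)
  intro h
  have : IsProbabilityMeasure (P.map (W h)) := Measure.isProbabilityMeasure_map (Lp.aestronglyMeasurable _).aemeasurable
  apply Measure.ext_of_charFun
  funext t
  rw [charFun_apply_real, integral_map (Lp.aestronglyMeasurable _).aemeasurable (by fun_prop), charFun_gaussianReal]
  have := key t h
  convert this using 1
  · refine integral_congr_ae (ae_of_all _ fun ω => ?_)
    simp only []
    congr 1; push_cast; ring
  · congr 1; push_cast; simp

/-! ### Gaussian waves from a coupling -/

lemma isonormal_process {H J : Type} [NormedAddCommGroup H] [InnerProductSpace ℝ H] [CompleteSpace H]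
    {Ω : Type} [MeasurableSpace Ω] {P : Measure Ω} [IsProbabilityMeasure P] (W : H →ₗᵢ[ℝ] Lp ℝ 2 P)
    (hW : ∀ h, P.map (W h) = gaussianReal 0 (‖h‖₊^2)) (Φ : J → H) :
    IsCenteredGaussianProcess P (fun j ω => W (Φ j) ω) := by
  intro m x a
  refine ⟨‖∑ i, a i • Φ (x i)‖₊^2, ?_⟩
  rw [← hW]
  refine Measure.map_congr ?_
  rw [map_sum]
  have h1 : ∀ᵐ ω ∂P, ∀ i, (W (a i • Φ (x i))) ω = a i * W (Φ (x i)) ω := by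
    rw [ae_all_iff]
    intro i
    rw [map_smul]
    filter_upwards [Lp.coeFn_smul (a i) (W (Φ (x i)))] with ω h
    rw [h]; rfl
  filter_upwards [h1, Lp.coeFn_finsetSum Finset.univ (fun i => W (a i • Φ (x i)))] with ω h1 h2
  rw [h2, Finset.sum_apply]
  exact Finset.sum_congr rfl fun i hi => (h1 i).symm

lemma isonormal_cov {H : Type} [NormedAddCommGroup H] [InnerProductSpace ℝ H]
    {Ω : Type} [MeasurableSpace Ω] {P : Measure Ω} (W : H →ₗᵢ[ℝ] Lp ℝ 2 P) (h k : H) :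
    ∫ ω, W h ω * W k ω ∂P = inner ℝ h k := by
  rw [← W.inner_map_map, L2.inner_def]
  simp [mul_comm]

lemma ee_conj {n : ℕ} (u v t : En n) : ee u t * (starRingEnd ℂ) (ee v t) = ee (u - v) t := by
  rw [ee, ee, ee, ← Complex.exp_conj, ← Complex.exp_add]
  congr 1
  simp only [map_mul, Complex.conj_I, Complex.conj_ofReal, map_ofNat, PiLp.sub_apply, sub_mul, Finset.sum_sub_distrib]
  push_cast
  ring

/-- The process `f` is the isonormal process of `L²(θ; ℂ)`, regarded as a real Hilbert space, evaluated at the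
characters of the first coordinate, and `g` uses those of the second coordinate. -/
theorem gauss_pair {n : ℕ} (θ : Measure (En n × En n)) [IsProbabilityMeasure θ] :
    ∃ (Ω : Type) (_ : MeasurableSpace Ω) (P : Measure Ω), IsProbabilityMeasure P ∧
      ∃ f g : En n → Ω → ℝ, JointlyGaussian P f g ∧
        (∀ x y, ∫ ω, f x ω * f y ω ∂P = ∫ p, (ee (x - y) p.1).re ∂θ) ∧
        (∀ x y, ∫ ω, g x ω * g y ω ∂P = ∫ p, (ee (x - y) p.2).re ∂θ) ∧
        (∀ u v, ∫ ω, (f u ω - g u ω) * (f v ω - g v ω) ∂P =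
          ∫ p, ((ee u p.1 - ee u p.2) * (starRingEnd ℂ) (ee v p.1 - ee v p.2)).re ∂θ) := by
  obtain ⟨Ω, mΩ, P, hP, W, hW⟩ := isonormal (Lp ℂ 2 θ)
  have hF : ∀ x : En n, MemLp (fun p : En n × En n => ee x p.1) 2 θ := fun x =>
    MemLp.of_bound ((continuous_ee.comp (by fun_prop : Continuous fun p : En n × En n => (x, p.1))).aestronglyMeasurable) 1
      (ae_of_all _ fun p => (norm_ee _ _).le)
  have hG : ∀ x : En n, MemLp (fun p : En n × En n => ee x p.2) 2 θ := fun x =>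
    MemLp.of_bound ((continuous_ee.comp (by fun_prop : Continuous fun p : En n × En n => (x, p.2))).aestronglyMeasurable) 1
      (ae_of_all _ fun p => (norm_ee _ _).le)
  have hin : ∀ (a b : En n × En n → ℂ) (ha : MemLp a 2 θ) (hb : MemLp b 2 θ),
      inner ℝ (ha.toLp) (hb.toLp) = ∫ p, (a p * (starRingEnd ℂ) (b p)).re ∂θ := by
    intro a b ha hb
    rw [L2.inner_def]
    refine integral_congr_ae ?_
    filter_upwards [ha.coeFn_toLp, hb.coeFn_toLp] with p h h'
    rw [h, h', Complex.inner, ← Complex.conj_re]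
    simp [mul_comm]
  refine ⟨Ω, mΩ, P, hP, fun x ω => W (hF x).toLp ω, fun x ω => W (hG x).toLp ω, ?_, ?_, ?_, ?_⟩
  · have := isonormal_process W hW (Sum.elim (fun x => (hF x).toLp) (fun x => (hG x).toLp))
    rw [JointlyGaussian]
    convert this using 1
    funext j
    rcases j with j | j <;> rfl
  · intro x y
    rw [isonormal_cov, hin]
    simp only [ee_conj]
  · intro x y
    rw [isonormal_cov, hin]
    simp only [ee_conj]
  · intro u v
    have hs : ∀ u, W ((hF u).sub (hG u)).toLp =ᵐ[P] fun ω => W (hF u).toLp ω - W (hG u).toLp ω := by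
      intro u
      rw [MemLp.toLp_sub, map_sub]
      exact Lp.coeFn_sub _ _
    refine Eq.trans ?_ (hin _ _ ((hF u).sub (hG u)) ((hF v).sub (hG v)))
    rw [← isonormal_cov W]
    refine integral_congr_ae ?_
    filter_upwards [hs u, hs v] with ω hu hv
    rw [hu, hv]

/-! ### Symmetric spectral measures -/

lemma ee_star {n : ℕ} (x t : En n) : (starRingEnd ℂ) (ee x t) = ee x (-t) := by
  rw [ee, ee, ← Complex.exp_conj]
  congr 1
  simp only [map_mul, Complex.conj_I, Complex.conj_ofReal, map_ofNat, PiLp.neg_apply, mul_neg, Finset.sum_neg_distrib]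
  push_cast
  ring

/-- A symmetric measure has a real Fourier transform. -/
lemma re_ee_integral {n : ℕ} (μ : Measure (En n)) [IsFiniteMeasure μ]
    (hμ : μ.map (fun t => -t) = μ) (x : En n) : ((∫ t, (ee x t).re ∂μ : ℝ) : ℂ) = ∫ t, ee x t ∂μ := by
  have h1 : (starRingEnd ℂ) (∫ t, ee x t ∂μ) = ∫ t, ee x t ∂μ := by
    rw [← integral_conj]
    simp only [ee_star]
    have hm : AEStronglyMeasurable (fun t => ee x t) (μ.map (fun t => -t)) :=
      (continuous_ee.comp (by fun_prop : Continuous fun t : En n => (x, t))).aestronglyMeasurable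
    conv_rhs => rw [← hμ, integral_map (by fun_prop) hm]
  have h2 := integral_re (integrable_ee μ x)
  simp only [RCLike.re_eq_complex_re] at h2
  rw [h2]
  exact Complex.conj_eq_iff_re.1 h1

lemma unif_neg (n : ℕ) : (unifSphere n).map (fun t => -t) = unifSphere n :=
  unif_map n (LinearIsometryEquiv.neg ℝ)

lemma rhoM_neg (n m : ℕ) : (rhoM n m).map (fun t => -t) = rhoM n m := by
  have hL : (MeasurableEquiv.neg (En n)) ⁻¹' (Lam n m) = Lam n m := by
    ext x
    change (‖-x‖ = 1 ∧ ∀ i, ∃ z : ℤ, (-x) i = z / √m) ↔ (‖x‖ = 1 ∧ ∀ i, ∃ z : ℤ, x i = z / √m)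
    simp only [norm_neg, PiLp.neg_apply]
    refine and_congr_right fun _ => forall_congr' fun i => ⟨?_, ?_⟩
    · rintro ⟨z, hz⟩; exact ⟨-z, by push_cast; rw [neg_div, ← hz, neg_neg]⟩
    · rintro ⟨z, hz⟩; exact ⟨-z, by push_cast; rw [neg_div, ← hz]⟩
  change (rhoM n m).map (MeasurableEquiv.neg (En n)) = _
  rw [rhoM, Measure.map_smul]
  congr 1
  conv_lhs => rw [← hL]
  rw [← MeasurableEquiv.restrict_map]
  congr 1
  ext s hs
  rw [MeasurableEquiv.map_apply, ← MeasurableEquiv.image_symm]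
  exact Measure.count_injective_image (MeasurableEquiv.injective _) _

/-! ### Derivatives of the covariance kernel -/

/-- `c` is almost everywhere strongly measurable and essentially bounded with respect to `θ`. -/
def EssBdd {n : ℕ} (θ : Measure (En n × En n)) (c : En n × En n → ℂ) : Prop :=
  AEStronglyMeasurable c θ ∧ ∃ B : ℝ, ∀ᵐ p ∂θ, ‖c p‖ ≤ B

/-- The real part of `∫ (c e(x·t) + d e(x·s)) dθ(t, s)`. This class of functions of `x` is stable under partial
derivatives. -/
def waveInt {n : ℕ} (θ : Measure (En n × En n)) (c d : En n × En n → ℂ) (x : En n) : ℝ :=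
  (∫ p, (c p * ee x p.1 + d p * ee x p.2) ∂θ).re

lemma EssBdd.mul {n : ℕ} {θ : Measure (En n × En n)} {c d : En n × En n → ℂ} (hc : EssBdd θ c) (hd : EssBdd θ d) :
    EssBdd θ (fun p => c p * d p) := by
  obtain ⟨h1, B, hB⟩ := hc
  obtain ⟨h2, D, hD⟩ := hd
  refine ⟨h1.mul h2, B * D, ?_⟩
  filter_upwards [hB, hD] with p h h'
  rw [norm_mul]
  exact mul_le_mul h h' (norm_nonneg _) ((norm_nonneg _).trans h)

lemma EssBdd.neg {n : ℕ} {θ : Measure (En n × En n)} {c : En n × En n → ℂ} (hc : EssBdd θ c) :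
    EssBdd θ (fun p => - c p) := by
  obtain ⟨h1, B, hB⟩ := hc
  exact ⟨h1.neg, B, by simpa using hB⟩

lemma EssBdd.sub {n : ℕ} {θ : Measure (En n × En n)} {c d : En n × En n → ℂ} (hc : EssBdd θ c) (hd : EssBdd θ d) :
    EssBdd θ (fun p => c p - d p) := by
  obtain ⟨h1, B, hB⟩ := hc
  obtain ⟨h2, D, hD⟩ := hd
  refine ⟨h1.sub h2, B + D, ?_⟩
  filter_upwards [hB, hD] with p h h'
  exact (norm_sub_le _ _).trans (add_le_add h h')

lemma EssBdd.star {n : ℕ} {θ : Measure (En n × En n)} {c : En n × En n → ℂ} (hc : EssBdd θ c) :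
    EssBdd θ (fun p => (starRingEnd ℂ) (c p)) := by
  obtain ⟨h1, B, hB⟩ := hc
  exact ⟨Complex.continuous_conj.comp_aestronglyMeasurable h1, B, by simpa using hB⟩

lemma EssBdd.integrable {n : ℕ} {θ : Measure (En n × En n)} [IsFiniteMeasure θ] {c : En n × En n → ℂ} (hc : EssBdd θ c) :
    Integrable c θ := by
  obtain ⟨h1, B, hB⟩ := hc
  exact Integrable.of_bound h1 B hB

lemma essBdd_ee_fst {n : ℕ} (θ : Measure (En n × En n)) (x : En n) : EssBdd θ (fun p => ee x p.1) :=
  ⟨(continuous_ee.comp (by fun_prop : Continuous fun p : En n × En n => (x, p.1))).aestronglyMeasurable, 1,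
    ae_of_all _ fun p => (norm_ee _ _).le⟩

lemma essBdd_ee_snd {n : ℕ} (θ : Measure (En n × En n)) (x : En n) : EssBdd θ (fun p => ee x p.2) :=
  ⟨(continuous_ee.comp (by fun_prop : Continuous fun p : En n × En n => (x, p.2))).aestronglyMeasurable, 1,
    ae_of_all _ fun p => (norm_ee _ _).le⟩

lemma ee_line {n : ℕ} (i : Fin n) (x t : En n) (τ : ℝ) :
    ee (x + τ • EuclideanSpace.single i (1:ℝ)) t = ee x t * Complex.exp (2*(π:ℂ)*Complex.I*t i * τ) := by
  rw [ee_inner, ee_inner, ← Complex.exp_add, inner_add_left, inner_smul_left]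
  have : inner ℝ (EuclideanSpace.single i (1:ℝ)) t = t i := by simp [EuclideanSpace.inner_single_left]
  congr 1
  rw [this]
  simp
  ring

lemma hasDerivAt_ee_line {n : ℕ} (i : Fin n) (x t : En n) (τ : ℝ) :
    HasDerivAt (fun τ : ℝ => ee (x + τ • EuclideanSpace.single i (1:ℝ)) t)
      ((2*(π:ℂ)*Complex.I*t i) * ee (x + τ • EuclideanSpace.single i (1:ℝ)) t) τ := by
  simp only [ee_line]
  have h1 : HasDerivAt (fun τ : ℝ => (2*(π:ℂ)*Complex.I*t i) * (τ:ℂ)) (2*(π:ℂ)*Complex.I*t i) τ := by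
    simpa using (Complex.ofRealCLM.hasDerivAt (x := τ)).const_mul (2*(π:ℂ)*Complex.I*t i)
  exact ((h1.cexp).const_mul (ee x t)).congr_deriv (by ring)

/-- The symbol `2πi t_i` by which `∂_i` multiplies the character of frequency `t`. -/
def sym {n : ℕ} (i : Fin n) (t : En n) : ℂ := 2*(π:ℂ)*Complex.I*t i

lemma norm_sym_le {n : ℕ} (i : Fin n) (t : En n) : ‖sym i t‖ ≤ 2*π*‖t‖ := by
  rw [sym]
  simp only [norm_mul, Complex.norm_ofNat, Complex.norm_real, Complex.norm_I, mul_one, Real.norm_eq_abs, abs_of_pos pi_pos]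
  gcongr
  exact PiLp.norm_apply_le t i

lemma continuous_sym {n : ℕ} (i : Fin n) : Continuous (sym i : En n → ℂ) := by
  unfold sym; fun_prop

lemma essBdd_sym_fst {n : ℕ} {θ : Measure (En n × En n)} (h : ∀ᵐ p ∂θ, ‖p.1‖ = 1) (i : Fin n) : EssBdd θ (fun p => sym i p.1) := by
  refine ⟨((continuous_sym i).comp continuous_fst).aestronglyMeasurable, 2*π, ?_⟩
  filter_upwards [h] with p hp
  simpa [hp] using norm_sym_le i p.1

lemma essBdd_sym_snd {n : ℕ} {θ : Measure (En n × En n)} (h : ∀ᵐ p ∂θ, ‖p.2‖ = 1) (i : Fin n) : EssBdd θ (fun p => sym i p.2) := by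
  refine ⟨((continuous_sym i).comp continuous_snd).aestronglyMeasurable, 2*π, ?_⟩
  filter_upwards [h] with p hp
  simpa [hp] using norm_sym_le i p.2

/-- Differentiation under the integral sign. -/
theorem pd_waveInt {n : ℕ} {θ : Measure (En n × En n)} [IsFiniteMeasure θ] (hθ1 : ∀ᵐ p ∂θ, ‖p.1‖ = 1)
    (hθ2 : ∀ᵐ p ∂θ, ‖p.2‖ = 1) {c d : En n × En n → ℂ} (hc : EssBdd θ c) (hd : EssBdd θ d) (i : Fin n) :
    pd i (waveInt θ c d) = waveInt θ (fun p => c p * sym i p.1) (fun p => d p * sym i p.2) := by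
  funext x
  have hc' := hc.mul (essBdd_sym_fst hθ1 i)
  have hd' := hd.mul (essBdd_sym_snd hθ2 i)
  let e : En n := EuclideanSpace.single i (1:ℝ)
  have hF : ∀ {a b : En n × En n → ℂ}, EssBdd θ a → EssBdd θ b → ∀ y, Integrable (fun p => a p * ee y p.1 + b p * ee y p.2) θ :=
    fun ha hb y => (ha.mul (essBdd_ee_fst θ y)).integrable.add (hb.mul (essBdd_ee_snd θ y)).integrable
  obtain ⟨-, B, hB⟩ := hc'
  obtain ⟨-, D, hD⟩ := hd'
  have hc' := hc.mul (essBdd_sym_fst hθ1 i)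
  have hd' := hd.mul (essBdd_sym_snd hθ2 i)
  have key := (hasDerivAt_integral_of_dominated_loc_of_deriv_le (μ := θ) (𝕜 := ℝ) (E := ℂ) (x₀ := (0:ℝ)) (s := Set.univ)
    (bound := fun _ => B + D)
    (F := fun τ p => c p * ee (x + τ • e) p.1 + d p * ee (x + τ • e) p.2)
    (F' := fun τ p => (c p * sym i p.1) * ee (x + τ • e) p.1 + (d p * sym i p.2) * ee (x + τ • e) p.2)
    univ_mem (Eventually.of_forall fun τ => (hF hc hd _).aestronglyMeasurable) (hF hc hd _)
    (hF hc' hd' _).aestronglyMeasurable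
    (by
      filter_upwards [hB, hD] with p h h' τ _
      refine (norm_add_le _ _).trans ?_
      rw [norm_mul _ (ee _ _), norm_mul _ (ee _ _), norm_ee, norm_ee, mul_one, mul_one]
      exact add_le_add h h') (integrable_const _)
    (by
      refine ae_of_all _ fun p τ _ => ?_
      have h1 := (hasDerivAt_ee_line i x p.1 τ).const_mul (c p)
      have h2 := (hasDerivAt_ee_line i x p.2 τ).const_mul (d p)
      exact (h1.fun_add h2).congr_deriv (by simp only [sym, e]; ring))).2
  have := (Complex.reCLM.hasFDerivAt.comp_hasDerivAt (0:ℝ) key).deriv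
  rw [zero_smul, add_zero] at this
  exact this

/-- The symbol of the iterated derivative `∂^α`. -/
def symPow {n : ℕ} (α : Fin n → ℕ) (t : En n) : ℂ := ∏ i, sym i t ^ α i

lemma EssBdd.mul_pow {n : ℕ} {θ : Measure (En n × En n)} {c d : En n × En n → ℂ} (hc : EssBdd θ c) (hd : EssBdd θ d) (a : ℕ) :
    EssBdd θ (fun p => c p * d p ^ a) := by
  induction a with
  | zero => simpa using hc
  | succ a ih => simpa only [pow_succ, mul_assoc] using ih.mul hd

lemma pd_iter_waveInt {n : ℕ} {θ : Measure (En n × En n)} [IsFiniteMeasure θ] (hθ1 : ∀ᵐ p ∂θ, ‖p.1‖ = 1)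
    (hθ2 : ∀ᵐ p ∂θ, ‖p.2‖ = 1) {c d : En n × En n → ℂ} (hc : EssBdd θ c) (hd : EssBdd θ d) (i : Fin n) (a : ℕ) :
    (pd i)^[a] (waveInt θ c d) = waveInt θ (fun p => c p * sym i p.1 ^ a) (fun p => d p * sym i p.2 ^ a) := by
  induction a with
  | zero => simp
  | succ a ih =>
    rw [Function.iterate_succ_apply', ih, pd_waveInt hθ1 hθ2 (hc.mul_pow (essBdd_sym_fst hθ1 i) a) (hd.mul_pow (essBdd_sym_snd hθ2 i) a)]
    simp only [pow_succ, mul_assoc]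

lemma foldr_waveInt {n : ℕ} {θ : Measure (En n × En n)} [IsFiniteMeasure θ] (hθ1 : ∀ᵐ p ∂θ, ‖p.1‖ = 1)
    (hθ2 : ∀ᵐ p ∂θ, ‖p.2‖ = 1) (α : Fin n → ℕ) (l : List (Fin n)) {c d : En n × En n → ℂ} (hc : EssBdd θ c) (hd : EssBdd θ d) :
    EssBdd θ (fun p => c p * (l.map fun i => sym i p.1 ^ α i).prod) ∧ EssBdd θ (fun p => d p * (l.map fun i => sym i p.2 ^ α i).prod) ∧
    ((l.map (fun i => (pd i)^[α i])).foldr (· ∘ ·) id) (waveInt θ c d) =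
      waveInt θ (fun p => c p * (l.map fun i => sym i p.1 ^ α i).prod) (fun p => d p * (l.map fun i => sym i p.2 ^ α i).prod) := by
  induction l with
  | nil => simpa using ⟨hc, hd⟩
  | cons i l ih =>
    obtain ⟨h1, h2, h3⟩ := ih
    have e1 : (fun p : En n × En n => c p * ((i :: l).map fun i => sym i p.1 ^ α i).prod) = fun p => (c p * (l.map fun i => sym i p.1 ^ α i).prod) * sym i p.1 ^ α i := by
      funext p; simp only [List.map_cons, List.prod_cons]; ring
    have e2 : (fun p : En n × En n => d p * ((i :: l).map fun i => sym i p.2 ^ α i).prod) = fun p => (d p * (l.map fun i => sym i p.2 ^ α i).prod) * sym i p.2 ^ α i := by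
      funext p; simp only [List.map_cons, List.prod_cons]; ring
    rw [e1, e2]
    refine ⟨h1.mul_pow (essBdd_sym_fst hθ1 i) _, h2.mul_pow (essBdd_sym_snd hθ2 i) _, ?_⟩
    rw [List.map_cons, List.foldr_cons, Function.comp_apply, h3, pd_iter_waveInt hθ1 hθ2 h1 h2]

lemma pdm_waveInt {n : ℕ} {θ : Measure (En n × En n)} [IsFiniteMeasure θ] (hθ1 : ∀ᵐ p ∂θ, ‖p.1‖ = 1)
    (hθ2 : ∀ᵐ p ∂θ, ‖p.2‖ = 1) (α : Fin n → ℕ) {c d : En n × En n → ℂ} (hc : EssBdd θ c) (hd : EssBdd θ d) :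
    EssBdd θ (fun p => c p * symPow α p.1) ∧ EssBdd θ (fun p => d p * symPow α p.2) ∧
    pdm α (waveInt θ c d) = waveInt θ (fun p => c p * symPow α p.1) (fun p => d p * symPow α p.2) := by
  have := foldr_waveInt hθ1 hθ2 α (List.finRange n) hc hd
  simp only [← List.ofFn_eq_map, List.prod_ofFn] at this
  exact this

/-- The mixed derivative on the diagonal is the mean square of the differentiated difference of characters. -/
lemma mdd_eq {n : ℕ} {θ : Measure (En n × En n)} [IsFiniteMeasure θ] (hθ1 : ∀ᵐ p ∂θ, ‖p.1‖ = 1)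
    (hθ2 : ∀ᵐ p ∂θ, ‖p.2‖ = 1) (α : Fin n → ℕ) (x : En n) :
    mdd α (fun u v => ∫ p, ((ee u p.1 - ee u p.2) * (starRingEnd ℂ) (ee v p.1 - ee v p.2)).re ∂θ) x
      = ∫ p, ‖symPow α p.1 * ee x p.1 - symPow α p.2 * ee x p.2‖^2 ∂θ := by
  have hE : ∀ u, EssBdd θ (fun p => ee u p.1 - ee u p.2) := fun u => (essBdd_ee_fst θ u).sub (essBdd_ee_snd θ u)
  have hI : ∀ {c : En n × En n → ℂ}, EssBdd θ c → ∫ p, (c p).re ∂θ = (∫ p, c p ∂θ).re := fun hc => by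
    have := integral_re hc.integrable
    simpa using this
  have h1 : ∀ u, (fun v => ∫ p, ((ee u p.1 - ee u p.2) * (starRingEnd ℂ) (ee v p.1 - ee v p.2)).re ∂θ) =
      waveInt θ (fun p => (starRingEnd ℂ) (ee u p.1 - ee u p.2)) (fun p => -(starRingEnd ℂ) (ee u p.1 - ee u p.2)) := by
    intro u; funext v
    have hb := ((hE u).star.mul (essBdd_ee_fst θ v)).sub ((hE u).star.mul (essBdd_ee_snd θ v))
    simp only [sub_eq_add_neg, ← neg_mul] at hb
    simp only [sub_eq_add_neg]
    rw [waveInt, ← hI hb]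
    refine integral_congr_ae (ae_of_all _ fun p => ?_)
    simp only []
    rw [← Complex.conj_re]
    simp only [map_mul, Complex.conj_conj]
    congr 1; ring
  let D : En n × En n → ℂ := fun p => (starRingEnd ℂ) (symPow α p.1 * ee x p.1 - symPow α p.2 * ee x p.2)
  have o1 : EssBdd θ (fun _ => 1) := ⟨aestronglyMeasurable_const, 1, by simp⟩
  have hs := pdm_waveInt hθ1 hθ2 α o1 o1
  simp only [one_mul] at hs
  have hD' : EssBdd θ (fun p => symPow α p.1 * ee x p.1 - symPow α p.2 * ee x p.2) :=
    (hs.1.mul (essBdd_ee_fst θ x)).sub (hs.2.1.mul (essBdd_ee_snd θ x))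
  have hD : EssBdd θ D := hD'.star
  have h2 : (fun u => pdm α (fun v => ∫ p, ((ee u p.1 - ee u p.2) * (starRingEnd ℂ) (ee v p.1 - ee v p.2)).re ∂θ) x) =
      waveInt θ D (fun p => - D p) := by
    funext u
    rw [h1, (pdm_waveInt hθ1 hθ2 α (hE u).star (hE u).star.neg).2.2, waveInt, waveInt]
    have e1 : ∀ p : En n × En n, (starRingEnd ℂ) (ee u p.1 - ee u p.2) * symPow α p.1 * ee x p.1 +
        -(starRingEnd ℂ) (ee u p.1 - ee u p.2) * symPow α p.2 * ee x p.2 = (starRingEnd ℂ) (D p * ee u p.1 + - D p * ee u p.2) := by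
      intro p; simp only [D, map_add, map_mul, map_neg, Complex.conj_conj, map_sub]; ring
    simp only [e1]
    rw [integral_conj, Complex.conj_re]
  rw [mdd, h2, (pdm_waveInt hθ1 hθ2 α hD hD.neg).2.2, waveInt]
  have e2 : ∀ p : En n × En n, D p * symPow α p.1 * ee x p.1 + - D p * symPow α p.2 * ee x p.2 = ((‖symPow α p.1 * ee x p.1 - symPow α p.2 * ee x p.2‖^2 : ℝ) : ℂ) := by
    intro p
    rw [Complex.ofReal_pow, ← Complex.conj_mul']
    simp only [D]; ring
  simp only [e2]
  rw [integral_complex_ofReal, Complex.ofReal_re]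

/-! ### Size of the diagonal derivatives -/

/-- `a` is bounded by `A` and `A`-Lipschitz on the unit sphere. -/
def SphLip {n : ℕ} (A : ℝ) (a : En n → ℂ) : Prop :=
  ∀ t s : En n, ‖t‖ = 1 → ‖s‖ = 1 → ‖a t‖ ≤ A ∧ ‖a t - a s‖ ≤ A * ‖t - s‖

lemma sym_sub {n : ℕ} (i : Fin n) (t s : En n) : sym i t - sym i s = sym i (t - s) := by
  simp only [sym, PiLp.sub_apply]; push_cast; ring

lemma SphLip.mul_sym_pow {n : ℕ} {A : ℝ} (hA : 0 ≤ A) {a : En n → ℂ} (ha : SphLip A a) (i : Fin n) (k : ℕ) :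
    SphLip ((4*π)^k * A) (fun t => a t * sym i t ^ k) := by
  induction k with
  | zero => simpa using ha
  | succ k ih =>
    intro t s ht hs
    obtain ⟨h1, h2⟩ := ih t s ht hs
    have h3 := norm_sym_le i t
    have h4 := norm_sym_le i (t - s)
    have h1' := (ih s t hs ht).1
    rw [ht, mul_one] at h3
    have hA' : 0 ≤ (4*π)^k * A := by positivity
    simp only [pow_succ, ← mul_assoc]
    constructor
    · rw [norm_mul]
      calc _ ≤ ((4*π)^k * A) * (2*π) := by gcongr
        _ ≤ _ := by nlinarith [mul_nonneg hA' pi_pos.le]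
    · have e : a t * sym i t ^ k * sym i t - a s * sym i s ^ k * sym i s =
        (a t * sym i t ^ k - a s * sym i s ^ k) * sym i t + (a s * sym i s ^ k) * sym i (t - s) := by
        rw [← sym_sub]; ring
      rw [e]
      refine (norm_add_le _ _).trans ?_
      rw [norm_mul, norm_mul (a s * _)]
      calc _ ≤ ((4*π)^k * A * ‖t - s‖) * (2*π) + ((4*π)^k * A) * (2*π*‖t-s‖) := by gcongr
        _ = _ := by ring

lemma sphLip_symPow {n : ℕ} (α : Fin n → ℕ) : SphLip ((4*π)^(∑ i, α i)) (symPow α) := by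
  classical
  have : ∀ s : Finset (Fin n), SphLip ((4*π)^(∑ i ∈ s, α i)) (fun t : En n => ∏ i ∈ s, sym i t ^ α i) := by
    intro s
    induction s using Finset.induction_on with
    | empty => intro t s _ _; simp
    | insert i s hi ih =>
      have := ih.mul_sym_pow (by positivity) i (α i)
      rw [Finset.sum_insert hi, pow_add]
      simp only [Finset.prod_insert hi]
      simpa only [mul_comm] using this
  exact this Finset.univ

lemma ee_lip {n : ℕ} (x t s : En n) : ‖ee x t - ee x s‖ ≤ 2*π*‖x‖*‖t-s‖ := by
  have h : ∀ t, ee x t = Complex.exp (Complex.I * ((2*π*inner ℝ x t : ℝ):ℂ)) := by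
    intro t; rw [ee_inner]; congr 1; push_cast; ring
  rw [h, h]
  refine (norm_exp_sub_le _ _).trans ?_
  rw [← mul_sub, ← inner_sub_right, abs_mul, abs_of_pos (by positivity), mul_assoc _ ‖x‖]
  gcongr
  exact abs_real_inner_le_norm _ _

lemma symPow_ee_lip {n : ℕ} (α : Fin n → ℕ) {k : ℕ} (hα : ∑ i, α i ≤ k + 1) {R : ℝ} (hR : 1 < R) (x : En n) (hx : ‖x‖ ≤ R + 1)
    (t s : En n) (ht : ‖t‖ = 1) (hs : ‖s‖ = 1) :
    ‖symPow α t * ee x t - symPow α s * ee x s‖^2 ≤ ((4*π)^(k+1)*(1+4*π))^2 * R^2 * ‖t-s‖^2 := by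
  have hpi : (1:ℝ) ≤ 4*π := by linarith [pi_gt_three]
  obtain ⟨-, h2⟩ := sphLip_symPow α t s ht hs
  obtain ⟨h1, -⟩ := sphLip_symPow α s t hs ht
  have hA : (4*π)^(∑ i, α i) ≤ (4*π)^(k+1) := pow_le_pow_right₀ hpi hα
  set A := (4*π)^(k+1)
  have e : symPow α t * ee x t - symPow α s * ee x s = (symPow α t - symPow α s) * ee x t + symPow α s * (ee x t - ee x s) := by ring
  have hA0 : 0 ≤ A := by positivity
  have : ‖symPow α t * ee x t - symPow α s * ee x s‖ ≤ A*(1+4*π)*R*‖t-s‖ := by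
    rw [e]
    refine (norm_add_le _ _).trans ?_
    rw [norm_mul, norm_mul, norm_ee, mul_one]
    calc _ ≤ A * ‖t-s‖ + A * (2*π*(2*R)*‖t-s‖) := by
          refine add_le_add (h2.trans (by gcongr)) ?_
          refine mul_le_mul (h1.trans hA) ((ee_lip x t s).trans ?_) (norm_nonneg _) hA0
          gcongr
          linarith
      _ ≤ A * (R * ‖t-s‖) + A * (2*π*(2*R)*‖t-s‖) := by
          gcongr
          nlinarith [norm_nonneg (t-s)]
      _ = _ := by ring
  calc _ ≤ (A*(1+4*π)*R*‖t-s‖)^2 := by gcongr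
    _ = _ := by ring

/-- The diagonal derivative is at most a constant times `R²` times the transport cost of `θ`. -/
lemma mdd_bound {n : ℕ} {θ : Measure (En n × En n)} [IsFiniteMeasure θ] (hθ1 : ∀ᵐ p ∂θ, ‖p.1‖ = 1)
    (hθ2 : ∀ᵐ p ∂θ, ‖p.2‖ = 1) {B : ℝ} (hB : 0 ≤ B) (hθ : ∫⁻ p, ENNReal.ofReal (‖p.1 - p.2‖^2) ∂θ ≤ ENNReal.ofReal B)
    (α : Fin n → ℕ) {k : ℕ} (hα : ∑ i, α i ≤ k + 1) {R : ℝ} (hR : 1 < R) (x : En n) (hx : ‖x‖ ≤ R + 1) :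
    mdd α (fun u v => ∫ p, ((ee u p.1 - ee u p.2) * (starRingEnd ℂ) (ee v p.1 - ee v p.2)).re ∂θ) x
      ≤ ((4*π)^(k+1)*(1+4*π))^2 * R^2 * B := by
  rw [mdd_eq hθ1 hθ2]
  have hi : Integrable (fun p : En n × En n => ‖p.1 - p.2‖^2) θ := by
    refine Integrable.of_bound (C := 4) (by fun_prop) ?_
    filter_upwards [hθ1, hθ2] with p h h'
    have := norm_sub_le p.1 p.2
    rw [h, h'] at this
    rw [norm_pow, norm_norm]
    nlinarith [norm_nonneg (p.1 - p.2)]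
  calc _ ≤ ∫ p, ((4*π)^(k+1)*(1+4*π))^2 * R^2 * ‖p.1 - p.2‖^2 ∂θ := by
        refine integral_mono_of_nonneg (ae_of_all _ fun p => by positivity) (hi.const_mul _) ?_
        filter_upwards [hθ1, hθ2] with p h h'
        exact symPow_ee_lip α hα hR x hx _ _ h h'
    _ ≤ _ := by
        rw [integral_const_mul]
        gcongr
        rw [integral_eq_lintegral_of_nonneg_ae (ae_of_all _ fun p => by positivity) hi.aestronglyMeasurable]
        exact ENNReal.toReal_le_of_le_ofReal hB hθ

theorem stmt14 (n k : ℕ) (hn : 5 ≤ n) (ε : ℝ) (hε : 0 < ε) :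
    ∃ C : ℝ, ∀ m : ℕ, 1 ≤ m →
      ∃ (Ω : Type) (_ : MeasurableSpace Ω) (P : Measure Ω), IsProbabilityMeasure P ∧
      ∃ f g : En n → Ω → ℝ,
        JointlyGaussian P f g ∧
        -- `f` is the arithmetic random wave with spectral measure `ρ_m`
        (∀ x y : En n, (↑(∫ ω, f x ω * f y ω ∂P) : ℂ) =
          ∫ t : En n, Complex.exp (2 * (Real.pi : ℂ) * Complex.I *
            ((∑ i, (x i - y i) * t i : ℝ) : ℂ)) ∂(rhoM n m)) ∧
        -- `g` is the random plane wave, with uniform spectral measure on `S^{n-1}`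
        (∀ x y : En n, (↑(∫ ω, g x ω * g y ω ∂P) : ℂ) =
          ∫ t : En n, Complex.exp (2 * (Real.pi : ℂ) * Complex.I *
            ((∑ i, (x i - y i) * t i : ℝ) : ℂ)) ∂(unifSphere n)) ∧
        -- bound on the mixed derivatives of the covariance kernel of `f - g`
        (∀ R : ℝ, 1 < R → ∀ x : En n, ‖x‖ ≤ R + 1 →
          ∀ α : Fin n → ℕ, (∑ i, α i) ≤ k + 1 →
          mdd α (fun u v => ∫ ω, (f u ω - g u ω) * (f v ω - g v ω) ∂P) x ≤
            C * R ^ 2 * (m : ℝ) ^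
              (-((n : ℝ) - 3) / (2 * (3 * (n : ℝ) - 2) * ((n : ℝ) + 1)) + ε)) := by
  obtain ⟨K, hK, hc⟩ := coupling_final n hn
  refine ⟨((4*π)^(k+1)*(1+4*π))^2 * K, fun m hm => ?_⟩
  have hm1 : (1:ℝ) ≤ m := by exact_mod_cast hm
  have := rhoM_prob n m hn hm
  have := unif_prob n (by omega)
  obtain ⟨θ, hf, hs, hθ⟩ := hc m hm
  have hP : IsProbabilityMeasure θ := ⟨by rw [← Measure.fst_univ, hf, measure_univ]⟩
  have hθ1 : ∀ᵐ p ∂θ, ‖p.1‖ = 1 := by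
    have := rhoM_ae n m hm
    rw [← hf] at this
    exact ae_of_ae_map measurable_fst.aemeasurable this
  have hθ2 : ∀ᵐ p ∂θ, ‖p.2‖ = 1 := by
    have := unif_ae n
    rw [← hs] at this
    exact ae_of_ae_map measurable_snd.aemeasurable this
  obtain ⟨Ω, mΩ, P, hP, f, g, hJ, hff, hgg, hfg⟩ := gauss_pair θ
  have hre : ∀ (x : En n), Continuous fun t : En n => (ee x t).re := fun x =>
    Complex.continuous_re.comp (continuous_ee.comp (by fun_prop : Continuous fun t : En n => (x, t)))
  refine ⟨Ω, mΩ, P, hP, f, g, hJ, fun x y => ?_, fun x y => ?_, fun R hR x hx α hα => ?_⟩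
  · rw [hff]
    have h := re_ee_integral (rhoM n m) (rhoM_neg n m) (x - y)
    rw [← hf, Measure.fst, integral_map measurable_fst.aemeasurable (hre _).aestronglyMeasurable] at h
    change _ = ∫ t, (ee (x - y) t) ∂(rhoM n m)
    rw [h, ← hf, Measure.fst]
  · rw [hgg]
    have h := re_ee_integral (unifSphere n) (unif_neg n) (x - y)
    rw [← hs, Measure.snd, integral_map measurable_snd.aemeasurable (hre _).aestronglyMeasurable] at h
    change _ = ∫ t, (ee (x - y) t) ∂(unifSphere n)
    rw [h, ← hs, Measure.snd]
  · simp only [hfg]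
    refine (mdd_bound hθ1 hθ2 (by positivity) hθ α hα hR x hx).trans ?_
    rw [mul_right_comm _ K, mul_assoc _ K]
    -- the exponents differ by `ε > 0`, and `m ≥ 1`
    gcongr
    linarith

end
end

section
/- Let σ₁, σ₂ ≥ 0. Then the infimum, over all couplings π of the centered Gaussian measure on ℝ with variance σ₁² and the centered Gaussian measure on ℝ with variance σ₂², of ∫_{ℝ×ℝ} (x − y)² dπ(x,y) equals (σ₁ − σ₂)². Moreover, the infimum is attained by the law of the pair (σ₁ X, σ₂ X), where X is a standard Gaussian random variable. -/
/-!
For a coupling `π`, expanding the square gives `∫ (x - y)² dπ = σ₁² + σ₂² - 2 ∫ x y dπ`, because the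
second moments are determined by the marginals. Cauchy-Schwarz bounds `∫ x y dπ` by `σ₁ σ₂`
(`integral_mul_le_of_sq`), so every coupling costs at least `(σ₁ - σ₂)²` (`coupling_cost_ge`). The law
of `(σ₁ X, σ₂ X)` is a coupling whose cost is `(σ₁ - σ₂)² E[X²] = (σ₁ - σ₂)²`.
-/

open MeasureTheory ProbabilityTheory Real Filter

noncomputable section

lemma integral_sq_gaussianReal_zero (v : NNReal) : ∫ x, x ^ 2 ∂(gaussianReal 0 v) = v := by
  have h := variance_fun_id_gaussianReal (μ := 0) (v := v)
  rwa [variance_of_integral_eq_zero (by fun_prop) integral_id_gaussianReal] at h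

/-- Cauchy-Schwarz, in the form where the second moments are given as squares. -/
lemma integral_mul_le_of_sq {Ω : Type*} [MeasurableSpace Ω] {P : Measure Ω} {f g : Ω → ℝ}
    (hf : MemLp f 2 P) (hg : MemLp g 2 P) {a b : ℝ} (ha : 0 ≤ a) (hb : 0 ≤ b)
    (hfa : ∫ ω, f ω ^ 2 ∂P = a ^ 2) (hgb : ∫ ω, g ω ^ 2 ∂P = b ^ 2) :
    ∫ ω, f ω * g ω ∂P ≤ a * b := by
  have hfg : Integrable (fun ω => f ω * g ω) P := hf.integrable_mul hg
  -- `t ↦ ∫ (t f - g)²` is a nonnegative quadratic polynomial, so its discriminant is at most `0`.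
  have key : ∀ t : ℝ, 0 ≤ a ^ 2 * (t * t) + (-2 * ∫ ω, f ω * g ω ∂P) * t + b ^ 2 := by
    intro t
    have h0 : 0 ≤ ∫ ω, (t * f ω - g ω) ^ 2 ∂P := integral_nonneg fun ω => sq_nonneg _
    have h1 : ∫ ω, (t * f ω - g ω) ^ 2 ∂P
        = ∫ ω, (t ^ 2 * f ω ^ 2 - 2 * t * (f ω * g ω)) + g ω ^ 2 ∂P := by
      congr 1
      ext ω
      ring
    have hi : Integrable (fun ω => t ^ 2 * f ω ^ 2 - 2 * t * (f ω * g ω)) P :=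
      (hf.integrable_sq.const_mul _).sub (hfg.const_mul _)
    rw [h1, integral_add hi hg.integrable_sq,
      integral_sub (hf.integrable_sq.const_mul _) (hfg.const_mul _), integral_const_mul,
      integral_const_mul, hfa, hgb] at h0
    linarith
  have hd := discrim_le_zero key
  rw [discrim] at hd
  exact le_of_sq_le_sq (by nlinarith) (mul_nonneg ha hb)

lemma coupling_cost_ge {σ₁ σ₂ : ℝ} (h₁ : 0 ≤ σ₁) (h₂ : 0 ≤ σ₂) {P : Measure (ℝ × ℝ)}
    (hfst : P.map Prod.fst = gaussianReal 0 (Real.toNNReal (σ₁ ^ 2)))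
    (hsnd : P.map Prod.snd = gaussianReal 0 (Real.toNNReal (σ₂ ^ 2))) :
    (σ₁ - σ₂) ^ 2 ≤ ∫ p : ℝ × ℝ, (p.1 - p.2) ^ 2 ∂P := by
  have hf : MemLp (fun p : ℝ × ℝ => p.1) 2 P := by
    have h := memLp_id_gaussianReal' (μ := 0) (v := Real.toNNReal (σ₁ ^ 2)) 2 (by simp)
    rw [← hfst] at h
    exact h.comp_of_map measurable_fst.aemeasurable
  have hg : MemLp (fun p : ℝ × ℝ => p.2) 2 P := by
    have h := memLp_id_gaussianReal' (μ := 0) (v := Real.toNNReal (σ₂ ^ 2)) 2 (by simp)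
    rw [← hsnd] at h
    exact h.comp_of_map measurable_snd.aemeasurable
  have hfa : ∫ p : ℝ × ℝ, p.1 ^ 2 ∂P = σ₁ ^ 2 := by
    have h := integral_sq_gaussianReal_zero (Real.toNNReal (σ₁ ^ 2))
    rwa [← hfst, integral_map measurable_fst.aemeasurable (by fun_prop),
      Real.coe_toNNReal _ (sq_nonneg _)] at h
  have hgb : ∫ p : ℝ × ℝ, p.2 ^ 2 ∂P = σ₂ ^ 2 := by
    have h := integral_sq_gaussianReal_zero (Real.toNNReal (σ₂ ^ 2))
    rwa [← hsnd, integral_map measurable_snd.aemeasurable (by fun_prop),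
      Real.coe_toNNReal _ (sq_nonneg _)] at h
  have hfg : Integrable (fun p : ℝ × ℝ => p.1 * p.2) P := hf.integrable_mul hg
  have hcs := integral_mul_le_of_sq hf hg h₁ h₂ hfa hgb
  have hexp : ∫ p : ℝ × ℝ, (p.1 - p.2) ^ 2 ∂P
      = ∫ p : ℝ × ℝ, (p.1 ^ 2 - 2 * (p.1 * p.2)) + p.2 ^ 2 ∂P := by
    congr 1
    ext p
    ring
  have hi : Integrable (fun p : ℝ × ℝ => p.1 ^ 2 - 2 * (p.1 * p.2)) P :=
    hf.integrable_sq.sub (hfg.const_mul _)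
  rw [hexp, integral_add hi hg.integrable_sq,
    integral_sub hf.integrable_sq (hfg.const_mul _), integral_const_mul, hfa, hgb]
  nlinarith

lemma map_const_mul_standardGaussian (σ : ℝ) :
    (gaussianReal 0 1).map (fun x => σ * x) = gaussianReal 0 (Real.toNNReal (σ ^ 2)) := by
  rw [gaussianReal_map_const_mul, mul_zero, mul_one]
  congr 1
  ext
  simp [Real.coe_toNNReal _ (sq_nonneg σ)]

theorem stmt15 (σ₁ σ₂ : ℝ) (h₁ : 0 ≤ σ₁) (h₂ : 0 ≤ σ₂) :
    sInf {c : ℝ | ∃ pi : Measure (ℝ × ℝ),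
        pi.map Prod.fst = gaussianReal 0 (Real.toNNReal (σ₁ ^ 2)) ∧
        pi.map Prod.snd = gaussianReal 0 (Real.toNNReal (σ₂ ^ 2)) ∧
        c = ∫ p : ℝ × ℝ, (p.1 - p.2) ^ 2 ∂pi} = (σ₁ - σ₂) ^ 2 ∧
    -- the infimum is attained by the law of `(σ₁ X, σ₂ X)` with `X` standard Gaussian
    ((gaussianReal 0 1).map (fun x => (σ₁ * x, σ₂ * x))).map Prod.fst =
      gaussianReal 0 (Real.toNNReal (σ₁ ^ 2)) ∧
    ((gaussianReal 0 1).map (fun x => (σ₁ * x, σ₂ * x))).map Prod.snd =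
      gaussianReal 0 (Real.toNNReal (σ₂ ^ 2)) ∧
    ∫ p : ℝ × ℝ, (p.1 - p.2) ^ 2 ∂((gaussianReal 0 1).map (fun x => (σ₁ * x, σ₂ * x))) =
      (σ₁ - σ₂) ^ 2 := by
  have hm : Measurable fun x : ℝ => (σ₁ * x, σ₂ * x) := by fun_prop
  have hfst : ((gaussianReal 0 1).map (fun x => (σ₁ * x, σ₂ * x))).map Prod.fst =
      gaussianReal 0 (Real.toNNReal (σ₁ ^ 2)) := by
    rw [Measure.map_map measurable_fst hm]
    exact map_const_mul_standardGaussian σ₁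
  have hsnd : ((gaussianReal 0 1).map (fun x => (σ₁ * x, σ₂ * x))).map Prod.snd =
      gaussianReal 0 (Real.toNNReal (σ₂ ^ 2)) := by
    rw [Measure.map_map measurable_snd hm]
    exact map_const_mul_standardGaussian σ₂
  have hcost : ∫ p : ℝ × ℝ, (p.1 - p.2) ^ 2
      ∂((gaussianReal 0 1).map (fun x => (σ₁ * x, σ₂ * x))) = (σ₁ - σ₂) ^ 2 := by
    rw [integral_map hm.aemeasurable (by fun_prop)]
    simp only [← sub_mul, mul_pow]
    rw [integral_const_mul, integral_sq_gaussianReal_zero, NNReal.coe_one, mul_one]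
  refine ⟨IsLeast.csInf_eq ⟨⟨_, hfst, hsnd, hcost.symm⟩, ?_⟩, hfst, hsnd, hcost⟩
  rintro c ⟨P, hP₁, hP₂, rfl⟩
  exact coupling_cost_ge h₁ h₂ hP₁ hP₂

end
end
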